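/- arXiv:math-ph/0001013 — 4 statements merged into one kernel-verified Lean document; each statement's English description precedes it below -/
import Mathlib

section
/- Let q₁, q₂ : [0,1] → ℝ be continuous. For i = 1,2 let μ⁽ⁱ⁾ : ℕ → ℝ be a strictly increasing sequence enumerating all eigenvalues of the Dirichlet–Neumann problem for qᵢ (i.e., each μ⁽ⁱ⁾ⱼ is an eigenvalue and every eigenvalue of the problem for qᵢ occurs in the sequence), let ψ⁽ⁱ⁾ⱼ be a normalized eigenfunction for μ⁽ⁱ⁾ⱼ, and suppose there is a constant C with |μ⁽ⁱ⁾ⱼ − π²(j + 1/2)²| ≤ C for all j ∈ ℕ and i = 1,2. If for every real λ > 0 such that λ² + μ⁽ⁱ⁾ⱼ ≠ 0 for all j and i one has ∑_{j=0}^∞ ψ⁽¹⁾ⱼ(1)²/(λ² + μ⁽¹⁾ⱼ) = ∑_{j=0}^∞ ψ⁽²⁾ⱼ(1)²/(λ² + μ⁽²⁾ⱼ), then q₁(z) = q₂(z) for all z ∈ [0,1]. -/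
open MeasureTheory Real

/-- `ψ` is an eigenfunction of the Dirichlet–Neumann problem
`ψ'' + (μ + q) ψ = 0` on `[0,1]`, `ψ(0) = 0`, `ψ'(1) = 0`, for the potential `q`
and the eigenvalue `μ`: it is twice continuously differentiable on `[0,1]`,
satisfies the equation and the boundary conditions, and is not identically zero. -/
def IsDNEigenfun (q : ℝ → ℝ) (μ : ℝ) (ψ : ℝ → ℝ) : Prop :=
  ∃ ψ' ψ'' : ℝ → ℝ,
    (∀ z ∈ Set.Icc (0:ℝ) 1, HasDerivAt ψ (ψ' z) z) ∧
    (∀ z ∈ Set.Icc (0:ℝ) 1, HasDerivAt ψ' (ψ'' z) z) ∧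
    ContinuousOn ψ'' (Set.Icc (0:ℝ) 1) ∧
    (∀ z ∈ Set.Icc (0:ℝ) 1, ψ'' z + (μ + q z) * ψ z = 0) ∧
    ψ 0 = 0 ∧ ψ' 1 = 0 ∧ (∃ z ∈ Set.Icc (0:ℝ) 1, ψ z ≠ 0)

/-- `μ` is an eigenvalue of the Dirichlet–Neumann problem for `q`. -/
def IsDNEigenvalue (q : ℝ → ℝ) (μ : ℝ) : Prop :=
  ∃ ψ : ℝ → ℝ, IsDNEigenfun q μ ψ

/-- `ψ` is normalized in `L²(0,1)`. -/
def DNNormalized (ψ : ℝ → ℝ) : Prop :=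
  ∫ z in (0:ℝ)..1, (ψ z) ^ 2 = 1

/-!
Up to sign, the data is the restriction to the negative half-line of a meromorphic function of
`z = -λ²` with simple poles at the eigenvalues `μⱼ` and residues `ψⱼ(1)²`; the series converges by
a Bessel inequality for the energy form, because the evaluation `u ↦ u(1)` is bounded in the
energy norm. So the data determines the spectrum and, as `ψⱼ = ψⱼ(1) C(μⱼ)` for the solution
`C(z)` with `C = 1`, `C' = 0` at the right end point, also the norming constants
`∫ C(μⱼ)² = ψⱼ(1)⁻²`.

Let `S(z)` be the solution with `S = 0`, `S' = 1` at the left end point and `Δ(z) = C(z)(0)`, so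
that the zeros of `Δ` are the eigenvalues. If two potentials have the same spectrum and norming
constants, then for every `x` the difference `C₁ S₂ / Δ₂ - C₂ S₁ / Δ₁` is entire in `z`, and it is
`O(|z|^(-1/2))` on the circles `|z| = (nπ)²`, so it vanishes by the maximum principle. Hence
`S₁ / (Δ₁ C₁) = S₂ / (Δ₂ C₂)` as functions of `x`. Their `x`-derivatives are `C₁⁻²` and `C₂⁻²`, so
`C₁ = C₂`, and the potential is recovered from the differential equation satisfied by `C`.
-/

namespace InverseSpectral

open scoped unitInterval
open Filter Topology

section Volterra

lemma isUnit_one_add_of_norm_pow_lt_one {R : Type*} [NormedRing R] [HasSummableGeomSeries R]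
    (a : R) (n : ℕ) (hn : ‖a ^ n‖ < 1) : IsUnit (1 + a) := by
  have hpow : ‖(-a) ^ n‖ < 1 := by
    rcases neg_one_pow_eq_or R n with h | h <;> simpa [neg_pow a n, h] using hn
  have hleft := mul_neg_geom_sum (-a) n
  have hright := geom_sum_mul_neg (-a) n
  rw [sub_neg_eq_add] at hleft hright
  have hcomm : Commute (1 + a) (∑ i ∈ Finset.range n, (-a) ^ i) := hleft.trans hright.symm
  exact (hcomm.isUnit_mul_iff.1 (hleft ▸ isUnit_one_sub_of_norm_lt_one hpow)).1

lemma differentiableAt_inverse_one_add_smul_apply {𝕜 E : Type*} [NontriviallyNormedField 𝕜]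
    [NormedAddCommGroup E] [NormedSpace 𝕜 E] [CompleteSpace E] {A B : E →L[𝕜] E} {z : 𝕜}
    (hz : IsUnit (1 + (z • A + B))) (f : E) :
    DifferentiableAt 𝕜 (fun w : 𝕜 => (Ring.inverse (1 + (w • A + B)) : E →L[𝕜] E) f) z :=
  (DifferentiableAt.comp (g := (Ring.inverse : (E →L[𝕜] E) → E →L[𝕜] E)) z
    (differentiableAt_inverse hz) (by fun_prop)).clm_apply (differentiableAt_const f)

lemma hasDerivAt_integral_IccExtend (f : C(I, ℂ)) (x : I) :
    HasDerivAt (fun y : ℝ => ∫ t in (0 : ℝ)..y, f.IccExtend zero_le_one t) (f x) x := by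
  simpa using
    ((f.IccExtend zero_le_one).continuous.integral_hasStrictDerivAt 0 (x : ℝ)).hasDerivAt

lemma norm_integral_IccExtend_le (f : C(I, ℂ)) (n : ℕ) (c : ℝ)
    (hf : ∀ x : I, ‖f x‖ ≤ c * ((x : ℝ) ^ n / n.factorial)) (x : I) :
    ‖∫ t in (0 : ℝ)..x, f.IccExtend zero_le_one t‖
      ≤ c * ((x : ℝ) ^ (n + 1) / (n + 1).factorial) := by
  have hpoint (t : ℝ) (ht : t ∈ Set.Ioc (0 : ℝ) x) :
      ‖f.IccExtend zero_le_one t‖ ≤ c * (t ^ n / n.factorial) := by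
    have htI : t ∈ I := ⟨ht.1.le, ht.2.trans x.2.2⟩
    simpa [Set.IccExtend_of_mem _ _ htI] using hf ⟨t, htI⟩
  calc ‖∫ t in (0 : ℝ)..x, f.IccExtend zero_le_one t‖
      ≤ ∫ t in (0 : ℝ)..x, c * (t ^ n / n.factorial) :=
        intervalIntegral.norm_integral_le_of_norm_le x.2.1 (.of_forall hpoint)
          ((by fun_prop : Continuous fun t : ℝ => c * (t ^ n / n.factorial)).intervalIntegrable _ _)
    _ = c * ((x : ℝ) ^ (n + 1) / (n + 1).factorial) := by
        rw [intervalIntegral.integral_const_mul, intervalIntegral.integral_div, integral_pow,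
          Nat.factorial_succ]
        push_cast
        field_simp
        simp

/-- The operator of indefinite integration from `0` on `C([0,1], ℂ)`. -/
noncomputable def primitive : C(I, ℂ) →L[ℂ] C(I, ℂ) :=
  LinearMap.mkContinuous
    { toFun f :=
        { toFun x := ∫ t in (0 : ℝ)..x, f.IccExtend zero_le_one t
          continuous_toFun := continuous_iff_continuousAt.2 fun x =>
            (hasDerivAt_integral_IccExtend f x).continuousAt.comp
              continuous_subtype_val.continuousAt }
      map_add' f g := by
        ext x
        exact intervalIntegral.integral_add
          ((f.IccExtend zero_le_one).continuous.intervalIntegrable _ _)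
          ((g.IccExtend zero_le_one).continuous.intervalIntegrable _ _)
      map_smul' c f := by
        ext x
        exact intervalIntegral.integral_smul c _ }
    1 fun f => by
      refine (ContinuousMap.norm_le _ (by positivity)).2 fun x => ?_
      have h := norm_integral_IccExtend_le f 0 ‖f‖ (by simpa using f.norm_coe_le_norm) x
      calc _ ≤ ‖f‖ * ((x : ℝ) ^ (0 + 1) / (0 + 1).factorial) := h
        _ ≤ ‖f‖ * 1 := by gcongr; simpa using x.2.2
        _ = 1 * ‖f‖ := mul_comm _ _

lemma primitive_apply (f : C(I, ℂ)) (x : I) :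
    primitive f x = ∫ t in (0 : ℝ)..x, f.IccExtend zero_le_one t := rfl

lemma primitive_apply_eq_sub (f : C(I, ℂ)) (u : ℝ → ℂ) (hu : ∀ x : I, HasDerivAt u (f x) x)
    (x : I) : primitive f x = u x - u 0 := by
  refine intervalIntegral.integral_eq_sub_of_hasDerivAt (fun t ht => ?_)
    ((f.IccExtend zero_le_one).continuous.intervalIntegrable _ _)
  rw [Set.uIcc_of_le x.2.1] at ht
  have htI : t ∈ I := ⟨ht.1, ht.2.trans x.2.2⟩
  simpa [Set.IccExtend_of_mem _ _ htI] using hu ⟨t, htI⟩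

/-- The Volterra operator `f ↦ ∫₀ˣ ∫₀ˢ g f`, which turns the initial value problem
`u'' + g u = 0` into the integral equation `u + volterra g u = u 0 + u' 0 * x`. -/
noncomputable def volterra (g : C(I, ℂ)) : C(I, ℂ) →L[ℂ] C(I, ℂ) :=
  primitive ∘L primitive ∘L ContinuousLinearMap.mul ℂ C(I, ℂ) g

lemma volterra_apply (g f : C(I, ℂ)) : volterra g f = primitive (primitive (g * f)) := rfl

lemma norm_volterra_pow_apply_le (g f : C(I, ℂ)) (n : ℕ) (x : I) :
    ‖(volterra g ^ n) f x‖ ≤ (‖g‖ ^ n * ‖f‖) * ((x : ℝ) ^ (2 * n) / (2 * n).factorial) := by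
  induction n generalizing x with
  | zero => simpa using f.norm_coe_le_norm x
  | succ n ih =>
    rw [pow_succ', mul_apply_eq_comp, volterra_apply]
    refine norm_integral_IccExtend_le _ (2 * n + 1) _
      (norm_integral_IccExtend_le _ (2 * n) _ fun y => ?_) x
    calc ‖(g * (volterra g ^ n) f) y‖
        = ‖g y‖ * ‖(volterra g ^ n) f y‖ := norm_mul _ _
      _ ≤ ‖g‖ * ((‖g‖ ^ n * ‖f‖) * ((y : ℝ) ^ (2 * n) / (2 * n).factorial)) :=
          mul_le_mul (g.norm_coe_le_norm y) (ih y) (norm_nonneg _) (norm_nonneg _)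
      _ = (‖g‖ ^ (n + 1) * ‖f‖) * ((y : ℝ) ^ (2 * n) / (2 * n).factorial) := by ring

lemma norm_volterra_pow_le (g : C(I, ℂ)) (n : ℕ) : ‖volterra g ^ n‖ ≤ ‖g‖ ^ n / n.factorial := by
  refine ContinuousLinearMap.opNorm_le_bound _ (by positivity) fun f => ?_
  refine (ContinuousMap.norm_le _ (by positivity)).2 fun x => ?_
  calc ‖(volterra g ^ n) f x‖
      ≤ (‖g‖ ^ n * ‖f‖) * ((x : ℝ) ^ (2 * n) / (2 * n).factorial) :=
        norm_volterra_pow_apply_le g f n x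
    _ ≤ (‖g‖ ^ n * ‖f‖) * (1 / n.factorial) := by
        gcongr
        · exact pow_le_one₀ x.2.1 x.2.2
        · omega
    _ = ‖g‖ ^ n / n.factorial * ‖f‖ := by ring

lemma isUnit_one_add_volterra (g : C(I, ℂ)) : IsUnit (1 + volterra g) := by
  obtain ⟨n, hn⟩ := ((FloorSemiring.tendsto_pow_div_factorial_atTop ‖g‖).eventually
    (gt_mem_nhds one_pos)).exists
  exact isUnit_one_add_of_norm_pow_lt_one (volterra g) n ((norm_volterra_pow_le g n).trans_lt hn)

lemma volterra_smul_one_add (p : C(I, ℂ)) (z : ℂ) :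
    volterra (z • 1 + p) = z • volterra 1 + volterra p := by
  ext f x
  simp [volterra_apply, add_mul]

end Volterra

section CauchyProblem

variable (p : C(I, ℂ)) (a b z : ℂ)

/-- The solution on `[0,1]` of `u'' + (z + p) u = 0`, `u 0 = a`, `u' 0 = b`, as an element of
`C([0,1], ℂ)`, obtained by inverting `1 + volterra (z + p)`. -/
noncomputable def cauchyMap : C(I, ℂ) :=
  Ring.inverse (1 + volterra (z • 1 + p)) ⟨fun x => a + b * ((x : ℝ) : ℂ), by fun_prop⟩

variable {p a b z} in
lemma eq_cauchyMap_iff {f : C(I, ℂ)} : f = cauchyMap p a b z ↔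
    ∀ x : I, f x + primitive (primitive ((z • 1 + p) * f)) x = a + b * ((x : ℝ) : ℂ) := by
  have hunit := isUnit_one_add_volterra (z • 1 + p)
  constructor
  · rintro rfl x
    exact congrArg (fun A : C(I, ℂ) →L[ℂ] C(I, ℂ) => A ⟨fun x => a + b * ((x : ℝ) : ℂ), _⟩ x)
      (Ring.mul_inverse_cancel _ hunit)
  · intro h
    have hf : (1 + volterra (z • 1 + p)) f = ⟨fun x => a + b * ((x : ℝ) : ℂ), by fun_prop⟩ :=
      ContinuousMap.ext h
    rw [cauchyMap, ← hf]
    exact (congrArg (fun A : C(I, ℂ) →L[ℂ] C(I, ℂ) => A f)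
      (Ring.inverse_mul_cancel _ hunit)).symm

lemma differentiable_cauchyMap : Differentiable ℂ (cauchyMap p a b) := by
  intro z
  have hunit := isUnit_one_add_volterra (z • 1 + p)
  rw [volterra_smul_one_add] at hunit
  have hdiff := differentiableAt_inverse_one_add_smul_apply hunit
    ⟨fun x : I => a + b * ((x : ℝ) : ℂ), by fun_prop⟩
  simp only [← volterra_smul_one_add] at hdiff
  exact hdiff

/-- `u` solves `u'' + (z + p) u = 0` on `[0,1]`, with derivative `u'`. -/
def IsSol (u u' : ℝ → ℂ) : Prop :=
  ∀ x : I, HasDerivAt u (u' x) x ∧ HasDerivAt u' (-((z + p x) * u x)) x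

/-- `cauchyMap p a b z`, written by means of its integral equation so as to be defined and
differentiable in a neighbourhood of `[0,1]`. -/
noncomputable def cauchySol (x : ℝ) : ℂ :=
  a + b * x - ∫ t in (0 : ℝ)..x,
    (primitive ((z • 1 + p) * cauchyMap p a b z)).IccExtend zero_le_one t

/-- The derivative of `cauchySol p a b z`. -/
noncomputable def cauchySolDeriv (x : ℝ) : ℂ :=
  b - ∫ t in (0 : ℝ)..x, ((z • 1 + p) * cauchyMap p a b z).IccExtend zero_le_one t

lemma cauchySol_coe (x : I) : cauchySol p a b z x = cauchyMap p a b z x :=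
  (eq_sub_of_add_eq (eq_cauchyMap_iff.1 rfl x)).symm

@[simp] lemma cauchySol_zero : cauchySol p a b z 0 = a := by simp [cauchySol]

@[simp] lemma cauchySolDeriv_zero : cauchySolDeriv p a b z 0 = b := by simp [cauchySolDeriv]

lemma isSol_cauchySol : IsSol p z (cauchySol p a b z) (cauchySolDeriv p a b z) := by
  refine fun x => ⟨?_, ?_⟩
  · have haffine : HasDerivAt (fun y : ℝ => a + b * (y : ℂ)) b x := by
      simpa using ((Complex.ofRealCLM.hasDerivAt (x := (x : ℝ))).const_mul b).const_add a
    exact haffine.sub (hasDerivAt_integral_IccExtend _ x)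
  · refine ((hasDerivAt_integral_IccExtend ((z • 1 + p) * cauchyMap p a b z) x).const_sub
      b).congr_deriv ?_
    simp [cauchySol_coe]

end CauchyProblem

section Solutions

variable {p : C(I, ℂ)} {z w : ℂ} {u u' v v' : ℝ → ℂ}

lemma IsSol.eq_cauchyMap (hu : IsSol p z u u') (x : I) :
    u x = cauchyMap p (u 0) (u' 0) z x := by
  let f : C(I, ℂ) := ⟨fun x => u x, continuous_iff_continuousAt.2 fun x =>
    (hu x).1.continuousAt.comp continuous_subtype_val.continuousAt⟩
  have hderiv (x : I) : primitive ((z • 1 + p) * f) x = u' 0 - u' x := by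
    rw [primitive_apply_eq_sub _ (fun t => -u' t)
      fun y => (hu y).2.neg.congr_deriv (by simp [f])]
    ring
  have hval (x : I) : primitive (primitive ((z • 1 + p) * f)) x = u' 0 * ((x : ℝ) : ℂ)
      - (u x - u 0) := by
    rw [primitive_apply_eq_sub _ (fun t => u' 0 * t - u t) fun y => ?_]
    · simp only [Complex.ofReal_zero, mul_zero]
      ring
    · rw [hderiv]
      have hlin : HasDerivAt (fun t : ℝ => u' 0 * t) (u' 0) y := by
        simpa using (Complex.ofRealCLM.hasDerivAt (x := (y : ℝ))).const_mul (u' 0)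
      exact hlin.sub (hu y).1
  have hf : f = cauchyMap p (u 0) (u' 0) z := eq_cauchyMap_iff.2 fun y => by
    rw [hval]
    simp only [f, ContinuousMap.coe_mk]
    ring
  exact congrArg (fun g : C(I, ℂ) => g x) hf

lemma IsSol.eq_of_eq_zero (hu : IsSol p z u u') (hv : IsSol p z v v') (h : u 0 = v 0)
    (h' : u' 0 = v' 0) (x : I) : u x = v x := by
  rw [hu.eq_cauchyMap, hv.eq_cauchyMap, h, h']

lemma IsSol.const_mul (hu : IsSol p z u u') (c : ℂ) :
    IsSol p z (fun x => c * u x) (fun x => c * u' x) := fun x =>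
  ⟨(hu x).1.const_mul c, ((hu x).2.const_mul c).congr_deriv (by ring)⟩

/-- The potential `x ↦ p (1 - x)`. -/
noncomputable def reflect (p : C(I, ℂ)) : C(I, ℂ) := p.comp ⟨σ, unitInterval.continuous_symm⟩

@[simp] lemma reflect_reflect (p : C(I, ℂ)) : reflect (reflect p) = p := by
  ext x
  simp [reflect]

lemma IsSol.reflect (hu : IsSol p z u u') :
    IsSol (reflect p) z (fun x => u (1 - x)) (fun x => -u' (1 - x)) := by
  intro x
  have hsymm : HasDerivAt (fun y : ℝ => 1 - y) (-1) (x : ℝ) := (hasDerivAt_id _).const_sub 1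
  exact ⟨((hu (σ x)).1.scomp (x : ℝ) hsymm).congr_deriv (by simp),
    ((hu (σ x)).2.scomp (x : ℝ) hsymm).neg.congr_deriv (by simp [InverseSpectral.reflect])⟩

lemma IsSol.eq_of_eq_one (hu : IsSol p z u u') (hv : IsSol p z v v') (h : u 1 = v 1)
    (h' : u' 1 = v' 1) (x : I) : u x = v x := by
  simpa using hu.reflect.eq_of_eq_zero hv.reflect (by simpa using h) (by simpa using h') (σ x)

lemma IsSol.hasDerivAt_wronskian (hu : IsSol p z u u') (hv : IsSol p w v v') (x : I) :
    HasDerivAt (fun y => u y * v' y - u' y * v y) ((z - w) * (u x * v x)) x :=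
  (((hu x).1.mul (hv x).2).sub ((hu x).2.mul (hv x).1)).congr_deriv (by ring)

lemma IsSol.continuousOn (hu : IsSol p z u u') : ContinuousOn u I := fun x hx =>
  (hu ⟨x, hx⟩).1.continuousAt.continuousWithinAt

lemma IsSol.lagrange_identity (hu : IsSol p z u u') (hv : IsSol p w v v') (x : I) :
    (z - w) * ∫ t in (0 : ℝ)..x, u t * v t
      = (u x * v' x - u' x * v x) - (u 0 * v' 0 - u' 0 * v 0) := by
  have hsub : Set.uIcc 0 (x : ℝ) ⊆ I := by
    rw [Set.uIcc_of_le x.2.1]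
    exact Set.Icc_subset_Icc_right x.2.2
  rw [← intervalIntegral.integral_const_mul]
  exact intervalIntegral.integral_eq_sub_of_hasDerivAt
    (fun t ht => hu.hasDerivAt_wronskian hv ⟨t, hsub ht⟩)
    (continuousOn_const.mul ((hu.continuousOn.mul hv.continuousOn).mono hsub)).intervalIntegrable

variable (p z)

/-- The solution of `u'' + (z + p) u = 0` with `u 0 = 0` and `u' 0 = 1`. -/
noncomputable def dirichletSol : ℝ → ℂ := cauchySol p 0 1 z

/-- The derivative of `dirichletSol p z`. -/
noncomputable def dirichletSolDeriv : ℝ → ℂ := cauchySolDeriv p 0 1 z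

/-- The solution of `u'' + (z + p) u = 0` with `u 1 = 1` and `u' 1 = 0`. -/
noncomputable def neumannSol (x : ℝ) : ℂ := cauchySol (reflect p) 1 0 z (1 - x)

/-- The derivative of `neumannSol p z`. -/
noncomputable def neumannSolDeriv (x : ℝ) : ℂ := -cauchySolDeriv (reflect p) 1 0 z (1 - x)

/-- The characteristic function of the Dirichlet–Neumann problem: its zeros are the
eigenvalues. -/
noncomputable def charFun : ℂ := neumannSol p z 0

/-- The integral `∫₀¹ u²` (without a complex conjugate) of `u = neumannSol p z`. -/
noncomputable def normingConst : ℂ := ∫ t in (0 : ℝ)..1, neumannSol p z t * neumannSol p z t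

lemma isSol_dirichletSol : IsSol p z (dirichletSol p z) (dirichletSolDeriv p z) :=
  isSol_cauchySol p 0 1 z

lemma isSol_neumannSol : IsSol p z (neumannSol p z) (neumannSolDeriv p z) := by
  have h := (isSol_cauchySol (reflect p) 1 0 z).reflect
  rwa [reflect_reflect] at h

@[simp] lemma dirichletSol_zero : dirichletSol p z 0 = 0 := cauchySol_zero ..

@[simp] lemma dirichletSolDeriv_zero : dirichletSolDeriv p z 0 = 1 := cauchySolDeriv_zero ..

@[simp] lemma neumannSol_one : neumannSol p z 1 = 1 := by simp [neumannSol]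

@[simp] lemma neumannSolDeriv_one : neumannSolDeriv p z 1 = 0 := by simp [neumannSolDeriv]

lemma differentiable_dirichletSol (x : I) : Differentiable ℂ fun z => dirichletSol p z x := by
  simp only [dirichletSol, cauchySol_coe]
  exact (ContinuousMap.evalCLM ℂ x).differentiable.comp (differentiable_cauchyMap p 0 1)

lemma neumannSol_eq_cauchyMap (x : I) :
    neumannSol p z x = cauchyMap (reflect p) 1 0 z (σ x) := by
  rw [← cauchySol_coe]
  simp [neumannSol]

lemma differentiable_neumannSol (x : I) : Differentiable ℂ fun z => neumannSol p z x := by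
  simp only [neumannSol_eq_cauchyMap]
  exact (ContinuousMap.evalCLM ℂ (σ x)).differentiable.comp
    (differentiable_cauchyMap (reflect p) 1 0)

lemma differentiable_charFun : Differentiable ℂ (charFun p) := differentiable_neumannSol p 0

variable {p z}

lemma IsSol.eq_mul_neumannSol (hu : IsSol p z u u') (h : u' 1 = 0) (x : I) :
    u x = u 1 * neumannSol p z x :=
  hu.eq_of_eq_one ((isSol_neumannSol p z).const_mul (u 1)) (by simp) (by simp [h]) x

lemma IsSol.eq_mul_dirichletSol (hu : IsSol p z u u') (h : u 0 = 0) (x : I) :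
    u x = u' 0 * dirichletSol p z x :=
  hu.eq_of_eq_zero ((isSol_dirichletSol p z).const_mul (u' 0)) (by simp [h]) (by simp) x

lemma wronskian_neumannSol_dirichletSol (x : I) :
    neumannSol p z x * dirichletSolDeriv p z x - neumannSolDeriv p z x * dirichletSol p z x
      = charFun p z := by
  have h := (isSol_neumannSol p z).lagrange_identity (isSol_dirichletSol p z) x
  simp only [sub_self, zero_mul, dirichletSol_zero, dirichletSolDeriv_zero, mul_one, mul_zero,
    sub_zero] at h
  exact (sub_eq_zero.1 h.symm)

lemma integral_neumannSol_mul (p : C(I, ℂ)) (z w : ℂ) :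
    ∫ t in (0 : ℝ)..1, neumannSol p z t * neumannSol p w t
      = primitive (cauchyMap (reflect p) 1 0 z * cauchyMap (reflect p) 1 0 w) 1 := by
  have hsymm := intervalIntegral.integral_comp_sub_left (a := 0) (b := 1)
    (fun t => cauchySol (reflect p) 1 0 z t * cauchySol (reflect p) 1 0 w t) 1
  rw [sub_self, sub_zero] at hsymm
  rw [primitive_apply]
  refine hsymm.trans (intervalIntegral.integral_congr fun t ht => ?_)
  rw [Set.uIcc_of_le zero_le_one] at ht
  simp only [ContinuousMap.coe_IccExtend, Set.IccExtend_of_mem _ _ ht, ContinuousMap.mul_apply]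
  rw [← cauchySol_coe, ← cauchySol_coe]

lemma continuous_integral_neumannSol_mul (p : C(I, ℂ)) (w : ℂ) :
    Continuous fun z => ∫ t in (0 : ℝ)..1, neumannSol p z t * neumannSol p w t := by
  simp only [integral_neumannSol_mul]
  exact (ContinuousMap.evalCLM ℂ (1 : I)).continuous.comp (primitive.continuous.comp
    ((differentiable_cauchyMap (reflect p) 1 0).continuous.mul continuous_const))

section Eigenvalue

variable {ζ : ℂ} (hζ : charFun p ζ = 0)
include hζ

lemma neumannSolDeriv_zero_mul_dirichletSol_one :
    neumannSolDeriv p ζ 0 * dirichletSol p ζ 1 = 1 := by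
  simpa using ((isSol_neumannSol p ζ).eq_mul_dirichletSol hζ 1).symm

lemma dirichletSol_eq_mul_neumannSol (x : I) :
    dirichletSol p ζ x = dirichletSol p ζ 1 * neumannSol p ζ x := by
  rw [(isSol_neumannSol p ζ).eq_mul_dirichletSol hζ x, ← mul_assoc,
    mul_comm (dirichletSol p ζ 1), neumannSolDeriv_zero_mul_dirichletSol_one hζ, one_mul]

lemma charFun_eq_of_charFun_eq_zero (z : ℂ) :
    charFun p z = (z - ζ) *
      (-dirichletSol p ζ 1 * ∫ t in (0 : ℝ)..1, neumannSol p z t * neumannSol p ζ t) := by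
  have hlagrange := (isSol_neumannSol p z).lagrange_identity (isSol_neumannSol p ζ) 1
  have hzero : neumannSol p ζ 0 = 0 := hζ
  simp only [Set.Icc.coe_one, neumannSol_one, neumannSolDeriv_one, hzero] at hlagrange
  have hS := neumannSolDeriv_zero_mul_dirichletSol_one hζ
  rw [charFun]
  linear_combination dirichletSol p ζ 1 * hlagrange - neumannSol p z 0 * hS

lemma tendsto_sub_mul_dirichletSol_div_charFun (hα : normingConst p ζ ≠ 0) (x : I) :
    Tendsto (fun z => (z - ζ) * (dirichletSol p z x / charFun p z)) (𝓝[≠] ζ)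
      (𝓝 (-(neumannSol p ζ x / normingConst p ζ))) := by
  have hS1 : dirichletSol p ζ 1 ≠ 0 :=
    right_ne_zero_of_mul_eq_one (neumannSolDeriv_zero_mul_dirichletSol_one hζ)
  have hlim : Tendsto (fun z => dirichletSol p z x /
      (-dirichletSol p ζ 1 * ∫ t in (0 : ℝ)..1, neumannSol p z t * neumannSol p ζ t)) (𝓝 ζ)
      (𝓝 (dirichletSol p ζ x / (-dirichletSol p ζ 1 * normingConst p ζ))) :=
    ((differentiable_dirichletSol p x).continuous.tendsto ζ).div
      (((continuous_integral_neumannSol_mul p ζ).tendsto ζ).const_mul _)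
      (mul_ne_zero (neg_ne_zero.2 hS1) hα)
  have hval : dirichletSol p ζ x / (-dirichletSol p ζ 1 * normingConst p ζ)
      = -(neumannSol p ζ x / normingConst p ζ) := by
    rw [dirichletSol_eq_mul_neumannSol hζ x]
    field_simp
  rw [← hval]
  refine (hlim.mono_left nhdsWithin_le_nhds).congr' ?_
  filter_upwards [self_mem_nhdsWithin] with z hz
  rw [charFun_eq_of_charFun_eq_zero hζ z, mul_div_assoc', mul_div_mul_left _ _ (sub_ne_zero.2 hz)]

end Eigenvalue

end Solutions

section TrigBounds

lemma norm_exp_mul_I_le (z : ℂ) : ‖Complex.exp (z * Complex.I)‖ ≤ exp |z.im| := by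
  rw [Complex.norm_exp, Complex.mul_I_re]
  exact exp_le_exp.2 (neg_le_abs _)

lemma norm_exp_neg_mul_I_le (z : ℂ) : ‖Complex.exp (-z * Complex.I)‖ ≤ exp |z.im| := by
  simpa using norm_exp_mul_I_le (-z)

lemma norm_cos_le (z : ℂ) : ‖Complex.cos z‖ ≤ exp |z.im| := by
  rw [Complex.cos, norm_div, Complex.norm_ofNat]
  linarith [norm_add_le (Complex.exp (z * Complex.I)) (Complex.exp (-z * Complex.I)),
    norm_exp_mul_I_le z, norm_exp_neg_mul_I_le z]

lemma norm_sin_le (z : ℂ) : ‖Complex.sin z‖ ≤ exp |z.im| := by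
  rw [Complex.sin, norm_div, norm_mul, Complex.norm_ofNat, Complex.norm_I, mul_one]
  linarith [norm_sub_le (Complex.exp (-z * Complex.I)) (Complex.exp (z * Complex.I)),
    norm_exp_mul_I_le z, norm_exp_neg_mul_I_le z]

lemma norm_cos_sq (k : ℂ) : ‖Complex.cos k‖ ^ 2 = cos k.re ^ 2 + sinh k.im ^ 2 := by
  obtain ⟨a, b⟩ := k
  change ‖Complex.cos ⟨a, b⟩‖ ^ 2 = cos a ^ 2 + sinh b ^ 2
  rw [Complex.mk_eq_add_mul_I, Complex.cos_add_mul_I, ← Complex.normSq_eq_norm_sq,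
    Complex.normSq_apply, ← Complex.ofReal_cos, ← Complex.ofReal_sin, ← Complex.ofReal_cosh,
    ← Complex.ofReal_sinh]
  simp only [Complex.sub_re, Complex.sub_im, Complex.mul_re, Complex.mul_im, Complex.ofReal_re,
    Complex.ofReal_im, Complex.I_re, Complex.I_im]
  linear_combination cos a ^ 2 * cosh_sq b + sinh b ^ 2 * sin_sq_add_cos_sq a

/-- On `‖k‖ = n * π`, either `|k.im| ≥ 1`, or `k.re` is close to `±n * π`, where the cosine
is close to `±1`. -/
lemma quarter_le_cos_sq_add_sinh_sq {n : ℕ} (hn : 1 ≤ n) {k : ℂ} (hk : ‖k‖ = n * π) :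
    1 / 4 ≤ cos k.re ^ 2 + 3 / 4 * sinh k.im ^ 2 := by
  rcases le_total 1 |k.im| with him | him
  · have hsinh : 1 ≤ |sinh k.im| := by
      rw [abs_sinh]
      exact him.trans (self_le_sinh_iff.2 (abs_nonneg _))
    nlinarith [sq_nonneg (cos k.re), sq_abs (sinh k.im)]
  · have hnπ : 3 ≤ n * π := by
      have : (1 : ℝ) ≤ n := by exact_mod_cast hn
      nlinarith [pi_gt_three]
    have hsum : |k.re| ^ 2 + |k.im| ^ 2 = (n * π) ^ 2 := by
      rw [← hk, Complex.sq_norm, Complex.normSq_apply, sq_abs, sq_abs]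
      ring
    have hnonneg : 0 ≤ n * π - |k.re| := by nlinarith [abs_nonneg k.re, sq_nonneg |k.im|]
    have hsmall : n * π - |k.re| ≤ 1 / 3 := by nlinarith [abs_nonneg k.re, abs_nonneg k.im]
    have hcos : 1 / 2 ≤ cos (n * π - |k.re|) := by
      nlinarith [one_sub_sq_div_two_le_cos (x := n * π - |k.re|)]
    have hsq : cos k.re ^ 2 = cos (n * π - |k.re|) ^ 2 := by
      rw [cos_nat_mul_pi_sub, cos_abs, mul_pow, ← pow_mul, mul_comm n 2, pow_mul]
      simp
    rw [hsq]
    nlinarith [sq_nonneg (sinh k.im)]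

lemma exp_div_four_le_norm_cos {n : ℕ} (hn : 1 ≤ n) {k : ℂ} (hk : ‖k‖ = n * π) :
    exp |k.im| / 4 ≤ ‖Complex.cos k‖ := by
  have hexp : exp |k.im| ≤ 2 * cosh k.im := by
    rw [← cosh_abs, cosh_eq]
    linarith [exp_pos (-|k.im|)]
  refine le_of_sq_le_sq ?_ (norm_nonneg _)
  rw [norm_cos_sq]
  nlinarith [quarter_le_cos_sq_add_sinh_sq hn hk, cosh_sq k.im, exp_pos |k.im|]

lemma abs_im_mul_ofReal (k : ℂ) {x : ℝ} (hx : 0 ≤ x) : |(k * x).im| = |k.im| * x := by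
  rw [Complex.im_mul_ofReal, abs_mul, abs_of_nonneg hx]

end TrigBounds

section SolutionBounds

/-- The solution of `u'' + k² u = 0` with `u 0 = a` and `u' 0 = b`. -/
noncomputable def freeSol (k a b : ℂ) (x : ℝ) : ℂ :=
  a * Complex.cos (k * x) + b * Complex.sin (k * x) / k

lemma norm_freeSol_le (k a b : ℂ) {x : ℝ} (hx : 0 ≤ x) :
    ‖freeSol k a b x‖ ≤ (‖a‖ + ‖b‖ / ‖k‖) * exp (|k.im| * x) := by
  rw [← abs_im_mul_ofReal k hx]
  calc ‖freeSol k a b x‖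
      ≤ ‖a‖ * ‖Complex.cos (k * x)‖ + ‖b‖ * ‖Complex.sin (k * x)‖ / ‖k‖ := by
        simpa only [freeSol, norm_mul, norm_div] using
          norm_add_le (a * Complex.cos (k * x)) (b * Complex.sin (k * x) / k)
    _ ≤ ‖a‖ * exp |(k * x).im| + ‖b‖ * exp |(k * x).im| / ‖k‖ := by
        gcongr
        exacts [norm_cos_le _, norm_sin_le _]
    _ = (‖a‖ + ‖b‖ / ‖k‖) * exp |(k * x).im| := by ring

variable {p : C(I, ℂ)} {k : ℂ} {u u' : ℝ → ℂ}

lemma IsSol.hasDerivAt_variation_of_constants (hu : IsSol p (k ^ 2) u u') (hk : k ≠ 0)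
    (x : ℝ) (t : I) :
    HasDerivAt (fun t : ℝ => u t * Complex.cos (k * ((x - t : ℝ) : ℂ))
        + u' t * (Complex.sin (k * ((x - t : ℝ) : ℂ)) / k))
      (-(p t * u t * (Complex.sin (k * ((x - t : ℝ) : ℂ)) / k))) t := by
  have hlin : HasDerivAt (fun t : ℝ => k * ((x - t : ℝ) : ℂ)) (-k) t := by
    simpa using (((hasDerivAt_id (t : ℝ)).const_sub x).ofReal_comp).const_mul k
  have hcos := (Complex.hasDerivAt_cos (k * ((x - t : ℝ) : ℂ))).comp (t : ℝ) hlin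
  have hsin := ((Complex.hasDerivAt_sin (k * ((x - t : ℝ) : ℂ))).comp (t : ℝ) hlin).div_const k
  refine (((hu t).1.mul hcos).add ((hu t).2.mul hsin)).congr_deriv ?_
  simp only [Function.comp_apply]
  field_simp
  ring

lemma IsSol.variation_of_constants (hu : IsSol p (k ^ 2) u u') (hk : k ≠ 0) (x : I) :
    u x - freeSol k (u 0) (u' 0) x = ∫ t in (0 : ℝ)..x,
      -(p.IccExtend zero_le_one t * u t * (Complex.sin (k * ((x - t : ℝ) : ℂ)) / k)) := by
  have hsub : Set.uIcc 0 (x : ℝ) ⊆ I := by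
    rw [Set.uIcc_of_le x.2.1]
    exact Set.Icc_subset_Icc_right x.2.2
  rw [intervalIntegral.integral_eq_sub_of_hasDerivAt (fun t ht => by
    simpa [Set.IccExtend_of_mem _ _ (hsub ht)] using
      hu.hasDerivAt_variation_of_constants hk x ⟨t, hsub ht⟩)]
  · simp only [freeSol, sub_self, sub_zero, Complex.ofReal_zero, mul_zero, Complex.cos_zero,
      Complex.sin_zero, zero_div, mul_one, add_zero, mul_div_assoc]
  · refine ContinuousOn.intervalIntegrable ?_
    exact (((p.IccExtend zero_le_one).continuous.continuousOn.mul
      (hu.continuousOn.mono hsub)).mul (by fun_prop)).neg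

lemma IsSol.norm_sub_freeSol_le_of_norm_le (hu : IsSol p (k ^ 2) u u') (hk : k ≠ 0) {M : ℝ}
    (hM : ∀ x : I, ‖u x‖ ≤ M * exp (|k.im| * x)) (x : I) :
    ‖u x - freeSol k (u 0) (u' 0) x‖ ≤ ‖p‖ / ‖k‖ * M * exp (|k.im| * x) := by
  have hM₀ : 0 ≤ M := by simpa using (norm_nonneg _).trans (hM 0)
  have hpoint (t : ℝ) (ht : t ∈ Set.uIoc (0 : ℝ) x) :
      ‖-(p.IccExtend zero_le_one t * u t * (Complex.sin (k * ((x - t : ℝ) : ℂ)) / k))‖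
        ≤ ‖p‖ / ‖k‖ * M * exp (|k.im| * x) := by
    rw [Set.uIoc_of_le x.2.1] at ht
    have hsin := norm_sin_le (k * ((x - t : ℝ) : ℂ))
    rw [abs_im_mul_ofReal k (sub_nonneg.2 ht.2)] at hsin
    rw [norm_neg, norm_mul, norm_mul, norm_div]
    calc ‖p.IccExtend zero_le_one t‖ * ‖u t‖ * (‖Complex.sin (k * ((x - t : ℝ) : ℂ))‖ / ‖k‖)
        ≤ ‖p‖ * (M * exp (|k.im| * t)) * (exp (|k.im| * (x - t)) / ‖k‖) := by
          gcongr
          · exact p.norm_coe_le_norm _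
          · exact hM ⟨t, ht.1.le, ht.2.trans x.2.2⟩
      _ = ‖p‖ / ‖k‖ * M * (exp (|k.im| * t) * exp (|k.im| * (x - t))) := by ring
      _ = ‖p‖ / ‖k‖ * M * exp (|k.im| * x) := by
          rw [← exp_add]
          ring_nf
  rw [hu.variation_of_constants hk x]
  refine (intervalIntegral.norm_integral_le_of_norm_le_const hpoint).trans ?_
  rw [sub_zero, abs_of_nonneg x.2.1]
  exact mul_le_of_le_one_right (by positivity) x.2.2

lemma IsSol.norm_le (hu : IsSol p (k ^ 2) u u') (hk : k ≠ 0) (hpk : 2 * ‖p‖ ≤ ‖k‖) (x : I) :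
    ‖u x‖ ≤ 2 * (‖u 0‖ + ‖u' 0‖ / ‖k‖) * exp (|k.im| * x) := by
  obtain ⟨x₀, hx₀, hmax⟩ := isCompact_Icc.exists_isMaxOn (Set.nonempty_Icc.2 zero_le_one)
    (hu.continuousOn.norm.div (g := fun x : ℝ => exp (|k.im| * x)) (by fun_prop)
      fun x _ => (exp_pos _).ne')
  set M := ‖u x₀‖ / exp (|k.im| * x₀)
  have hle (x : I) : ‖u x‖ ≤ M * exp (|k.im| * x) := (div_le_iff₀ (exp_pos _)).1 (hmax x.2)
  have hM_le : M * exp (|k.im| * x₀)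
      ≤ (‖p‖ / ‖k‖ * M + (‖u 0‖ + ‖u' 0‖ / ‖k‖)) * exp (|k.im| * x₀) := by
    calc M * exp (|k.im| * x₀) = ‖u x₀‖ := div_mul_cancel₀ _ (exp_pos _).ne'
      _ ≤ ‖u x₀ - freeSol k (u 0) (u' 0) x₀‖ + ‖freeSol k (u 0) (u' 0) x₀‖ := by
          simpa using norm_add_le (u x₀ - freeSol k (u 0) (u' 0) x₀) (freeSol k (u 0) (u' 0) x₀)
      _ ≤ ‖p‖ / ‖k‖ * M * exp (|k.im| * x₀)
          + (‖u 0‖ + ‖u' 0‖ / ‖k‖) * exp (|k.im| * x₀) :=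
          add_le_add (hu.norm_sub_freeSol_le_of_norm_le hk hle ⟨x₀, hx₀⟩)
            (norm_freeSol_le k _ _ hx₀.1)
      _ = _ := by ring
  have hsmall : ‖p‖ / ‖k‖ ≤ 1 / 2 := by
    rw [div_le_iff₀ (norm_pos_iff.2 hk)]
    linarith
  have hM₀ : 0 ≤ M := by positivity
  refine (hle x).trans (mul_le_mul_of_nonneg_right ?_ (exp_pos _).le)
  nlinarith [le_of_mul_le_mul_right hM_le (exp_pos _)]

lemma IsSol.norm_sub_freeSol_le (hu : IsSol p (k ^ 2) u u') (hk : k ≠ 0)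
    (hpk : 2 * ‖p‖ ≤ ‖k‖) (x : I) :
    ‖u x - freeSol k (u 0) (u' 0) x‖
      ≤ ‖p‖ / ‖k‖ * (2 * (‖u 0‖ + ‖u' 0‖ / ‖k‖)) * exp (|k.im| * x) :=
  hu.norm_sub_freeSol_le_of_norm_le hk (hu.norm_le hk hpk) x

lemma norm_reflect_le (p : C(I, ℂ)) : ‖reflect p‖ ≤ ‖p‖ :=
  (ContinuousMap.norm_le _ (norm_nonneg p)).2 fun _ => p.norm_coe_le_norm _

lemma norm_dirichletSol_le (hk : k ≠ 0) (hpk : 2 * ‖p‖ ≤ ‖k‖) (x : I) :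
    ‖dirichletSol p (k ^ 2) x‖ ≤ 2 / ‖k‖ * exp (|k.im| * x) := by
  simpa [div_eq_mul_inv] using (isSol_dirichletSol p (k ^ 2)).norm_le hk hpk x

lemma norm_neumannSol_le (hk : k ≠ 0) (hpk : 2 * ‖p‖ ≤ ‖k‖) (x : I) :
    ‖neumannSol p (k ^ 2) x‖ ≤ 2 * exp (|k.im| * (1 - x)) := by
  simpa [neumannSol] using (isSol_cauchySol (reflect p) 1 0 (k ^ 2)).norm_le hk
    (by linarith [norm_reflect_le p]) (σ x)

lemma norm_neumannSol_sub_cos_le (hk : k ≠ 0) (hpk : 16 * ‖p‖ ≤ ‖k‖) (x : I) :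
    ‖neumannSol p (k ^ 2) x - Complex.cos (k * ((1 - x : ℝ) : ℂ))‖
      ≤ exp (|k.im| * (1 - x)) / 8 := by
  have hreflect : 16 * ‖reflect p‖ ≤ ‖k‖ := by linarith [norm_reflect_le p]
  have hsmall : ‖reflect p‖ / ‖k‖ ≤ 1 / 16 := by
    rw [div_le_iff₀ (norm_pos_iff.2 hk)]
    linarith
  have h := (isSol_cauchySol (reflect p) 1 0 (k ^ 2)).norm_sub_freeSol_le hk
    (by linarith [norm_nonneg (reflect p)]) (σ x)
  simp only [cauchySol_zero, cauchySolDeriv_zero, freeSol, norm_one, norm_zero, zero_div, add_zero,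
    one_mul, mul_one, zero_mul, unitInterval.coe_symm_eq] at h
  refine h.trans ?_
  nlinarith [exp_pos (|k.im| * (1 - x))]

lemma exp_div_eight_le_norm_charFun {n : ℕ} (hn : 1 ≤ n) (hk : ‖k‖ = n * π)
    (hpk : 16 * ‖p‖ ≤ ‖k‖) : exp |k.im| / 8 ≤ ‖charFun p (k ^ 2)‖ := by
  have hk₀ : k ≠ 0 := norm_pos_iff.1 (hk ▸ by positivity)
  have hdiff := norm_neumannSol_sub_cos_le hk₀ hpk 0
  simp only [Set.Icc.coe_zero, sub_zero, Complex.ofReal_one, mul_one] at hdiff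
  have hcos := exp_div_four_le_norm_cos hn hk
  have hsub := norm_sub_norm_le (Complex.cos k) (neumannSol p (k ^ 2) 0)
  rw [norm_sub_rev] at hsub
  rw [charFun]
  linarith

lemma norm_neumannSol_mul_dirichletSol_div_charFun_le {p₁ p₂ : C(I, ℂ)} {n : ℕ} (hn : 1 ≤ n)
    (hk : ‖k‖ = n * π) (hpk₁ : 16 * ‖p₁‖ ≤ ‖k‖) (hpk₂ : 16 * ‖p₂‖ ≤ ‖k‖) (x : I) :
    ‖neumannSol p₁ (k ^ 2) x * (dirichletSol p₂ (k ^ 2) x / charFun p₂ (k ^ 2))‖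
      ≤ 32 / ‖k‖ := by
  have hk₀ : k ≠ 0 := norm_pos_iff.1 (hk ▸ by positivity)
  have hchar := exp_div_eight_le_norm_charFun hn hk hpk₂
  have hexp : exp (|k.im| * (1 - x)) * exp (|k.im| * x) = exp |k.im| := by
    rw [← exp_add]
    ring_nf
  rw [mul_div_assoc', norm_div, norm_mul,
    div_le_iff₀ ((by positivity : 0 < exp |k.im| / 8).trans_le hchar)]
  calc ‖neumannSol p₁ (k ^ 2) x‖ * ‖dirichletSol p₂ (k ^ 2) x‖
      ≤ (2 * exp (|k.im| * (1 - x))) * (2 / ‖k‖ * exp (|k.im| * x)) :=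
        mul_le_mul (norm_neumannSol_le hk₀ (by linarith [norm_nonneg p₁]) x)
          (norm_dirichletSol_le hk₀ (by linarith [norm_nonneg p₂]) x) (norm_nonneg _)
          (by positivity)
    _ = 32 / ‖k‖ * (exp |k.im| / 8) := by rw [← hexp]; ring
    _ ≤ 32 / ‖k‖ * ‖charFun p₂ (k ^ 2)‖ := by gcongr

lemma neumannSol_ne_zero_of_im {τ : ℝ} (hτ : 0 < τ) (hpτ : 16 * ‖p‖ ≤ τ) (x : I) :
    neumannSol p ((τ * Complex.I) ^ 2) x ≠ 0 := by
  intro hzero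
  have hnorm : ‖(τ * Complex.I : ℂ)‖ = τ := by simp [hτ.le]
  have h := norm_neumannSol_sub_cos_le (p := p) (k := τ * Complex.I)
    (by simpa using hτ.ne') (hnorm.symm ▸ hpτ) x
  have hcos : Complex.cos (τ * Complex.I * ((1 - x : ℝ) : ℂ)) = (cosh (τ * (1 - x)) : ℝ) := by
    rw [mul_right_comm, ← Complex.ofReal_mul, Complex.cos_mul_I, Complex.ofReal_cosh]
  rw [hzero, zero_sub, norm_neg, hcos, Complex.norm_real, norm_of_nonneg (cosh_pos _).le, cosh_eq,
    Complex.im_ofReal_mul, Complex.I_im, mul_one, abs_of_pos hτ] at h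
  linarith [exp_pos (τ * (1 - x)), exp_pos (-(τ * (1 - x)))]

end SolutionBounds

section Liouville

variable {H : ℂ → ℂ}

lemma exists_differentiable_extension
    (hdiff : ∀ z, ∀ᶠ w in 𝓝[≠] z, DifferentiableAt ℂ H w)
    (hres : ∀ z, Tendsto (fun w => (w - z) * H w) (𝓝[≠] z) (𝓝 0)) :
    ∃ F : ℂ → ℂ, Differentiable ℂ F ∧ ∀ z, ContinuousAt H z → F z = H z := by
  have hlim {z : ℂ} (hz : ContinuousAt H z) : limUnder (𝓝[≠] z) H = H z :=
    (hz.tendsto.mono_left nhdsWithin_le_nhds).limUnder_eq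
  refine ⟨fun z => limUnder (𝓝[≠] z) H, fun z => ?_, fun z => hlim⟩
  obtain ⟨s, hs, hs_diff⟩ := (eventually_nhdsWithin_iff.1 (hdiff z)).exists_mem
  have hlittle : (fun w => H w - H z) =o[𝓝[≠] z] fun w => (w - z)⁻¹ := by
    refine (Asymptotics.isLittleO_iff_tendsto' ?_).2 ?_
    · filter_upwards [self_mem_nhdsWithin] with w hw h0
      exact absurd (inv_eq_zero.1 h0) (sub_ne_zero.2 hw)
    · have hconst : Tendsto (fun w => (w - z) * H z) (𝓝[≠] z) (𝓝 0) :=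
        tendsto_nhdsWithin_of_tendsto_nhds
          ((by fun_prop : Continuous fun w => (w - z) * H z).tendsto' z 0 (by simp))
      have hsub := (hres z).sub hconst
      rw [sub_zero] at hsub
      refine hsub.congr fun w => ?_
      rw [div_inv_eq_mul]
      ring
  have hupdate := (Complex.differentiableOn_update_limUnder_of_isLittleO hs
    (fun w hw => (hs_diff w hw.1 hw.2).differentiableWithinAt) hlittle).differentiableAt hs
  refine hupdate.congr_of_eventuallyEq ?_
  filter_upwards [hs] with w hw
  rcases eq_or_ne w z with rfl | hwz
  · rw [Function.update_self]
  · rw [Function.update_of_ne hwz, hlim (hs_diff w hw hwz).continuousAt]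

lemma eq_zero_of_differentiable_of_norm_le_on_circles {F : ℂ → ℂ} (hF : Differentiable ℂ F)
    {r ε : ℕ → ℝ} (hr : Tendsto r atTop atTop) (hε : Tendsto ε atTop (𝓝 0))
    (hcirc : ∀ᶠ n in atTop, ∀ z, ‖z‖ = r n → ‖F z‖ ≤ ε n) (z : ℂ) : F z = 0 := by
  refine norm_le_zero_iff.1 (ge_of_tendsto hε ?_)
  filter_upwards [hcirc, hr.eventually_gt_atTop ‖z‖] with n hn hzn
  refine Complex.norm_le_of_forall_mem_frontier_norm_le (U := Metric.ball 0 (r n))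
    Metric.isBounded_ball hF.diffContOnCl (fun w hw => hn w ?_)
    (subset_closure (by simpa using hzn))
  rw [frontier_ball 0 ((norm_nonneg z).trans_lt hzn).ne'] at hw
  simpa using hw

lemma eq_zero_of_removable_of_norm_le_on_circles
    (hdiff : ∀ z, ∀ᶠ w in 𝓝[≠] z, DifferentiableAt ℂ H w)
    (hres : ∀ z, Tendsto (fun w => (w - z) * H w) (𝓝[≠] z) (𝓝 0))
    {r ε : ℕ → ℝ} (hr : Tendsto r atTop atTop) (hε : Tendsto ε atTop (𝓝 0))
    (hcirc : ∀ᶠ n in atTop, ∀ z, ‖z‖ = r n → ContinuousAt H z ∧ ‖H z‖ ≤ ε n)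
    {z : ℂ} (hz : ContinuousAt H z) : H z = 0 := by
  obtain ⟨F, hF, hFH⟩ := exists_differentiable_extension hdiff hres
  rw [← hFH z hz]
  refine eq_zero_of_differentiable_of_norm_le_on_circles hF hr hε ?_ z
  filter_upwards [hcirc] with n hn w hw
  rw [hFH w (hn w hw).1]
  exact (hn w hw).2

end Liouville

section Uniqueness

variable {p p₁ p₂ : C(I, ℂ)} {z : ℂ} {x : I}

lemma tendsto_natCast_mul_pi_atTop : Tendsto (fun n : ℕ => (n * π : ℝ)) atTop atTop :=
  tendsto_natCast_atTop_atTop.atTop_mul_const pi_pos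

lemma exists_charFun_ne_zero (p : C(I, ℂ)) : ∃ z, charFun p z ≠ 0 := by
  obtain ⟨τ, hτ, hpτ⟩ := ((eventually_gt_atTop (0 : ℝ)).and
    (eventually_ge_atTop (16 * ‖p‖))).exists
  exact ⟨_, neumannSol_ne_zero_of_im hτ hpτ 0⟩

lemma charFun_preimage_compl_mem_codiscrete (p : C(I, ℂ)) :
    charFun p ⁻¹' {0}ᶜ ∈ codiscrete ℂ := by
  obtain ⟨z, hz⟩ := exists_charFun_ne_zero p
  exact AnalyticOnNhd.preimage_zero_mem_codiscrete
    (fun w _ => (differentiable_charFun p).analyticAt w) hz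

lemma eventually_charFun_ne_zero (p : C(I, ℂ)) (z : ℂ) : ∀ᶠ w in 𝓝[≠] z, charFun p w ≠ 0 := by
  have h := mem_codiscreteWithin_iff_forall_mem_nhdsNE.1
    (charFun_preimage_compl_mem_codiscrete p) z (Set.mem_univ z)
  rwa [Set.compl_univ, Set.union_empty] at h

/-- The product of the two solutions which for `p₁ = p₂` is the diagonal of Green's function of the
Dirichlet–Neumann problem. -/
noncomputable def crossGreen (p₁ p₂ : C(I, ℂ)) (x : I) (z : ℂ) : ℂ :=
  neumannSol p₁ z x * (dirichletSol p₂ z x / charFun p₂ z)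

lemma differentiableAt_crossGreen (h : charFun p₂ z ≠ 0) :
    DifferentiableAt ℂ (crossGreen p₁ p₂ x) z :=
  (differentiable_neumannSol p₁ x z).mul
    ((differentiable_dirichletSol p₂ x z).div (differentiable_charFun p₂ z) h)

lemma tendsto_sub_mul_crossGreen (hz : charFun p₂ z = 0) (hα : normingConst p₂ z ≠ 0) :
    Tendsto (fun w => (w - z) * crossGreen p₁ p₂ x w) (𝓝[≠] z)
      (𝓝 (-(neumannSol p₁ z x * neumannSol p₂ z x / normingConst p₂ z))) := by
  have hC : Tendsto (fun w => neumannSol p₁ w x) (𝓝[≠] z) (𝓝 (neumannSol p₁ z x)) :=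
    ((differentiable_neumannSol p₁ x).continuous.tendsto z).mono_left nhdsWithin_le_nhds
  have h := hC.mul (tendsto_sub_mul_dirichletSol_div_charFun hz hα x)
  rw [mul_neg, mul_div_assoc'] at h
  exact h.congr fun w => mul_left_comm _ _ _

lemma norm_crossGreen_sub_le {n : ℕ} (hn : 1 ≤ n) (hp₁ : 16 * ‖p₁‖ ≤ n * π)
    (hp₂ : 16 * ‖p₂‖ ≤ n * π) (hz : ‖z‖ = (n * π) ^ 2) :
    ContinuousAt (fun w => crossGreen p₁ p₂ x w - crossGreen p₂ p₁ x w) z ∧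
      ‖crossGreen p₁ p₂ x z - crossGreen p₂ p₁ x z‖ ≤ 64 / (n * π) := by
  obtain ⟨k, rfl⟩ := IsAlgClosed.exists_pow_nat_eq z two_pos
  have hk : ‖k‖ = n * π := by
    rw [norm_pow] at hz
    exact (pow_left_inj₀ (norm_nonneg k) (by positivity) two_ne_zero).1 hz
  rw [← hk] at hp₁ hp₂
  have hne {p : C(I, ℂ)} (hp : 16 * ‖p‖ ≤ ‖k‖) : charFun p (k ^ 2) ≠ 0 :=
    norm_pos_iff.1 ((by positivity : 0 < exp |k.im| / 8).trans_le
      (exp_div_eight_le_norm_charFun hn hk hp))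
  refine ⟨((differentiableAt_crossGreen (hne hp₂)).sub
    (differentiableAt_crossGreen (hne hp₁))).continuousAt, ?_⟩
  calc ‖crossGreen p₁ p₂ x (k ^ 2) - crossGreen p₂ p₁ x (k ^ 2)‖
      ≤ 32 / ‖k‖ + 32 / ‖k‖ := (norm_sub_le _ _).trans (add_le_add
        (norm_neumannSol_mul_dirichletSol_div_charFun_le hn hk hp₁ hp₂ x)
        (norm_neumannSol_mul_dirichletSol_div_charFun_le hn hk hp₂ hp₁ x))
    _ = 64 / (n * π) := by rw [hk]; ring

lemma tendsto_sub_mul_crossGreen_sub (hzero : charFun p₁ z = 0 ↔ charFun p₂ z = 0)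
    (hα : charFun p₁ z = 0 → normingConst p₁ z = normingConst p₂ z)
    (hα₀ : charFun p₁ z = 0 → normingConst p₁ z ≠ 0) :
    Tendsto (fun w => (w - z) * (crossGreen p₁ p₂ x w - crossGreen p₂ p₁ x w)) (𝓝[≠] z)
      (𝓝 0) := by
  by_cases hz : charFun p₁ z = 0
  · have h := (tendsto_sub_mul_crossGreen (p₁ := p₁) (x := x) (hzero.1 hz)
      (hα hz ▸ hα₀ hz)).sub (tendsto_sub_mul_crossGreen (p₁ := p₂) (x := x) hz (hα₀ hz))
    rw [hα hz, mul_comm (neumannSol p₂ z x), sub_self] at h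
    exact h.congr fun w => (mul_sub _ _ _).symm
  · have hcont : ContinuousAt
        (fun w => (w - z) * (crossGreen p₁ p₂ x w - crossGreen p₂ p₁ x w)) z :=
      (continuousAt_id.sub continuousAt_const).mul
        ((differentiableAt_crossGreen (hzero.not.1 hz)).sub
          (differentiableAt_crossGreen hz)).continuousAt
    have h : Tendsto _ (𝓝[≠] z) (𝓝 ((z - z) * _)) := hcont.tendsto.mono_left nhdsWithin_le_nhds
    rwa [sub_self, zero_mul] at h

lemma crossGreen_comm (hzero : ∀ z, charFun p₁ z = 0 ↔ charFun p₂ z = 0)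
    (hα : ∀ z, charFun p₁ z = 0 → normingConst p₁ z = normingConst p₂ z)
    (hα₀ : ∀ z, charFun p₁ z = 0 → normingConst p₁ z ≠ 0) (hz : charFun p₁ z ≠ 0) :
    crossGreen p₁ p₂ x z = crossGreen p₂ p₁ x z := by
  have hdiff {z : ℂ} (hz : charFun p₁ z ≠ 0) :
      DifferentiableAt ℂ (fun w => crossGreen p₁ p₂ x w - crossGreen p₂ p₁ x w) z :=
    (differentiableAt_crossGreen ((hzero z).not.1 hz)).sub (differentiableAt_crossGreen hz)
  refine sub_eq_zero.1 (eq_zero_of_removable_of_norm_le_on_circles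
    (r := fun n => (n * π) ^ 2) (ε := fun n => 64 / (n * π))
    (fun w => (eventually_charFun_ne_zero p₁ w).mono fun _ => hdiff)
    (fun w => tendsto_sub_mul_crossGreen_sub (hzero w) (hα w) (hα₀ w))
    ((tendsto_pow_atTop two_ne_zero).comp tendsto_natCast_mul_pi_atTop)
    (tendsto_natCast_mul_pi_atTop.const_div_atTop 64) ?_ (hdiff hz).continuousAt)
  filter_upwards [eventually_ge_atTop 1,
    tendsto_natCast_mul_pi_atTop.eventually_ge_atTop (16 * ‖p₁‖),
    tendsto_natCast_mul_pi_atTop.eventually_ge_atTop (16 * ‖p₂‖)] with n hn hp₁ hp₂ w hw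
  exact norm_crossGreen_sub_le hn hp₁ hp₂ hw

lemma deriv_eq_of_eq_on_unitInterval {f g : ℝ → ℂ} {f' g' : ℂ} (hf : HasDerivAt f f' x)
    (hg : HasDerivAt g g' x) (h : ∀ y : I, f y = g y) : f' = g' :=
  (uniqueDiffOn_Icc zero_lt_one x x.2).eq_deriv _ hf.hasDerivWithinAt <|
    hg.hasDerivWithinAt.congr (fun y hy => h ⟨y, hy⟩) (h x)

lemma hasDerivAt_dirichletSol_div (hC : neumannSol p z x ≠ 0) (hz : charFun p z ≠ 0) :
    HasDerivAt (fun y => dirichletSol p z y / charFun p z / neumannSol p z y)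
      ((neumannSol p z x ^ 2)⁻¹) x := by
  refine ((((isSol_dirichletSol p z x).1.div_const _).div (isSol_neumannSol p z x).1
    hC)).congr_deriv ?_
  rw [← one_div, div_eq_div_iff (pow_ne_zero 2 hC) (pow_ne_zero 2 hC)]
  field_simp
  linear_combination wronskian_neumannSol_dirichletSol x (p := p) (z := z)

lemma neumannSol_eq_of_crossGreen_comm (hC₁ : ∀ x : I, neumannSol p₁ z x ≠ 0)
    (hC₂ : ∀ x : I, neumannSol p₂ z x ≠ 0)
    (h : ∀ x, crossGreen p₁ p₂ x z = crossGreen p₂ p₁ x z) (x : I) :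
    neumannSol p₁ z x = neumannSol p₂ z x := by
  have hquot (x : I) : dirichletSol p₁ z x / charFun p₁ z / neumannSol p₁ z x
      = dirichletSol p₂ z x / charFun p₂ z / neumannSol p₂ z x := by
    rw [div_eq_div_iff (hC₁ x) (hC₂ x), mul_comm, mul_comm _ (neumannSol p₁ z x)]
    exact (h x).symm
  have hsq (x : I) : neumannSol p₁ z x ^ 2 = neumannSol p₂ z x ^ 2 :=
    inv_injective <| deriv_eq_of_eq_on_unitInterval
      (hasDerivAt_dirichletSol_div (hC₁ x) (hC₁ 0))
      (hasDerivAt_dirichletSol_div (hC₂ x) (hC₂ 0)) hquot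
  exact isPreconnected_Icc.eq_of_sq_eq (isSol_neumannSol p₁ z).continuousOn
    (isSol_neumannSol p₂ z).continuousOn (fun y hy => hsq ⟨y, hy⟩) (fun {y} hy => hC₂ ⟨y, hy⟩)
    (Set.right_mem_Icc.2 zero_le_one) (by simp) x.2

lemma eq_of_neumannSol_eq (hC : ∀ x : I, neumannSol p₁ z x ≠ 0)
    (h : ∀ x : I, neumannSol p₁ z x = neumannSol p₂ z x) : p₁ = p₂ := by
  have hderiv (x : I) : neumannSolDeriv p₁ z x = neumannSolDeriv p₂ z x :=
    deriv_eq_of_eq_on_unitInterval (isSol_neumannSol p₁ z x).1 (isSol_neumannSol p₂ z x).1 h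
  ext x
  have hsecond := deriv_eq_of_eq_on_unitInterval (isSol_neumannSol p₁ z x).2
    (isSol_neumannSol p₂ z x).2 hderiv
  rw [← h x] at hsecond
  exact add_left_cancel (mul_right_cancel₀ (hC x) (neg_injective hsecond))

/-- The **Borg–Marchenko theorem** for the Dirichlet–Neumann problem. -/
theorem eq_of_charFun_zeros_of_normingConst
    (hzero : ∀ z, charFun p₁ z = 0 ↔ charFun p₂ z = 0)
    (hα : ∀ z, charFun p₁ z = 0 → normingConst p₁ z = normingConst p₂ z)
    (hα₀ : ∀ z, charFun p₁ z = 0 → normingConst p₁ z ≠ 0) : p₁ = p₂ := by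
  obtain ⟨τ, hτ, hp₁, hp₂⟩ := ((eventually_gt_atTop (0 : ℝ)).and
    ((eventually_ge_atTop (16 * ‖p₁‖)).and (eventually_ge_atTop (16 * ‖p₂‖)))).exists
  have hC₁ := neumannSol_ne_zero_of_im hτ hp₁
  have hC₂ := neumannSol_ne_zero_of_im hτ hp₂
  exact eq_of_neumannSol_eq hC₁ (neumannSol_eq_of_crossGreen_comm hC₁ hC₂ fun _ =>
    crossGreen_comm hzero hα hα₀ (hC₁ 0))

end Uniqueness

section PoleSeries

lemma norm_div_sub_le {a b z w : ℂ} {r : ℝ} (hz : ‖z‖ < r) (hb : 2 * r + ‖w‖ ≤ ‖b‖) :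
    ‖a / (z - b)‖ ≤ 2 * ‖a / (w - b)‖ := by
  have hsub : ‖w - b‖ ≤ 2 * ‖z - b‖ := by
    linarith [norm_sub_le w b, norm_sub_norm_le b z, norm_sub_rev b z]
  have hpos : 0 < ‖w - b‖ := by
    linarith [norm_sub_norm_le b w, norm_sub_rev b w, norm_nonneg z]
  rw [norm_div, norm_div, mul_div_assoc', mul_comm, ← div_div_eq_mul_div]
  exact div_le_div_of_nonneg_left (norm_nonneg a) (by positivity) (by linarith)

/-- The meromorphic function with simple poles at `p i` and residues `a i`. -/
noncomputable def poleSeries {ι : Type*} (a p : ι → ℂ) (z : ℂ) : ℂ := ∑' i, a i / (z - p i)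

section Residue

variable {ι : Type*} {a p : ι → ℂ} {z₀ : ℂ} (hp : Tendsto p cofinite (Bornology.cobounded ℂ))
  (ha : Summable fun i => a i / (z₀ - p i))
include hp ha

lemma exists_poleSeries_eq_sum_add (r : ℝ) :
    ∃ (s : Finset ι) (g : ℂ → ℂ), (∀ i ∉ s, r ≤ ‖p i‖) ∧
      DifferentiableOn ℂ g (Metric.ball 0 r) ∧
      ∀ z ∈ Metric.ball 0 r, poleSeries a p z = ∑ i ∈ s, a i / (z - p i) + g z := by
  have hfin : {i | ¬2 * r + ‖z₀‖ ≤ ‖p i‖}.Finite :=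
    eventually_cofinite.1 ((tendsto_norm_cobounded_atTop.comp hp).eventually_ge_atTop _)
  have hfar {i : ι} (hi : i ∉ hfin.toFinset) : 2 * r + ‖z₀‖ ≤ ‖p i‖ := by simpa using hi
  have hbound (i : {i // i ∉ hfin.toFinset}) {z : ℂ} (hz : z ∈ Metric.ball 0 r) :
      ‖a i / (z - p i)‖ ≤ 2 * ‖a i / (z₀ - p i)‖ :=
    norm_div_sub_le (mem_ball_zero_iff.1 hz) (hfar i.2)
  have hsum : Summable fun i : {i // i ∉ hfin.toFinset} => 2 * ‖a i / (z₀ - p i)‖ :=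
    (ha.norm.subtype _).mul_left 2
  have hrp {i : ι} (hi : i ∉ hfin.toFinset) : r ≤ ‖p i‖ := by
    by_contra! hlt
    linarith [hfar hi, norm_nonneg z₀, norm_nonneg (p i)]
  refine ⟨hfin.toFinset, fun z => ∑' i : {i // i ∉ hfin.toFinset}, a i / (z - p i),
    fun i => hrp, ?_, fun z hz => ?_⟩
  · refine Complex.differentiableOn_tsum_of_summable_norm hsum (fun i => ?_) Metric.isOpen_ball
      fun i z => hbound i
    refine (differentiableOn_const _).div (differentiableOn_id.sub_const _) fun z hz => ?_
    rintro h
    rw [sub_eq_zero.1 h, mem_ball_zero_iff] at hz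
    exact (hrp i.2).not_gt hz
  · have hz_sum : Summable fun i => a i / (z - p i) :=
      (Finset.summable_compl_iff hfin.toFinset).1 (hsum.of_norm_bounded fun i => hbound i hz)
    exact (hz_sum.sum_add_tsum_subtype_compl _).symm

lemma meromorphic_poleSeries : Meromorphic (poleSeries a p) := by
  intro z
  obtain ⟨s, g, -, hg, hsum⟩ := exists_poleSeries_eq_sum_add hp ha (‖z‖ + 1)
  have hball : Metric.ball (0 : ℂ) (‖z‖ + 1) ∈ 𝓝 z := Metric.isOpen_ball.mem_nhds (by simp)
  have hmero : MeromorphicAt (fun w => ∑ i ∈ s, a i / (w - p i) + g w) z :=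
    (MeromorphicAt.fun_sum fun i _ => by fun_prop).fun_add (hg.analyticAt hball).meromorphicAt
  refine hmero.congr (nhdsWithin_le_nhds ?_)
  filter_upwards [hball] with w hw
  exact (hsum w hw).symm

open scoped Classical in
lemma tendsto_sub_mul_poleSeries (w : ℂ) :
    Tendsto (fun z => (z - w) * poleSeries a p z) (𝓝[≠] w)
      (𝓝 (∑' i, if p i = w then a i else 0)) := by
  obtain ⟨s, g, hs, hg, hsum⟩ := exists_poleSeries_eq_sum_add hp ha (‖w‖ + 1)
  have hball : Metric.ball (0 : ℂ) (‖w‖ + 1) ∈ 𝓝 w := Metric.isOpen_ball.mem_nhds (by simp)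
  have hsub : Tendsto (fun z : ℂ => z - w) (𝓝[≠] w) (𝓝 0) :=
    ((continuous_sub_right w).tendsto' w 0 (sub_self w)).mono_left nhdsWithin_le_nhds
  have hterm (i : ι) : Tendsto (fun z => (z - w) * (a i / (z - p i))) (𝓝[≠] w)
      (𝓝 (if p i = w then a i else 0)) := by
    split_ifs with hi
    · subst hi
      refine tendsto_const_nhds.congr' ?_
      filter_upwards [self_mem_nhdsWithin] with z hz
      exact (mul_div_cancel₀ _ (sub_ne_zero.2 hz)).symm
    · have hcont : ContinuousAt (fun z => a i / (z - p i)) w :=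
        continuousAt_const.div (by fun_prop) (sub_ne_zero.2 (Ne.symm hi))
      simpa using hsub.mul (hcont.tendsto.mono_left nhdsWithin_le_nhds)
  have hg_lim := hsub.mul
    ((hg.differentiableAt hball).continuousAt.tendsto.mono_left nhdsWithin_le_nhds)
  have htsum : (∑' i, if p i = w then a i else 0) = ∑ i ∈ s, if p i = w then a i else 0 :=
    tsum_eq_sum fun i hi => if_neg fun h => by linarith [hs i hi, congrArg norm h]
  have hlim := (tendsto_finsetSum s fun i _ => hterm i).add hg_lim
  rw [zero_mul, add_zero, ← htsum] at hlim
  refine hlim.congr' (nhdsWithin_le_nhds ?_)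
  filter_upwards [hball] with z hz
  rw [hsum z hz, mul_add, Finset.mul_sum]

end Residue

lemma eventuallyEq_of_meromorphic_of_frequently_eq {f g : ℂ → ℂ} (hf : Meromorphic f)
    (hg : Meromorphic g) {z₀ : ℂ} (h : ∃ᶠ z in 𝓝[≠] z₀, f z = g z) (w : ℂ) :
    f =ᶠ[𝓝[≠] w] g := by
  have hfg : Meromorphic (f - g) := fun z => (hf z).sub (hg z)
  rw [(hf z₀).frequently_eq_iff_eventuallyEq (hg z₀), eventuallyEq_iff_sub] at h
  rw [eventuallyEq_iff_sub]
  exact meromorphicOrderAt_eq_top_iff.1 <| of_not_not fun hw =>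
    hfg.exists_meromorphicOrderAt_ne_top_iff_forall.1 ⟨w, hw⟩ z₀ (meromorphicOrderAt_eq_top_iff.2 h)

open scoped Classical in
lemma tsum_residue_eq_of_frequently_eq {ι κ : Type*} {a p : ι → ℂ} {b q : κ → ℂ} {z₁ z₂ z₀ : ℂ}
    (hp : Tendsto p cofinite (Bornology.cobounded ℂ))
    (ha : Summable fun i => a i / (z₁ - p i))
    (hq : Tendsto q cofinite (Bornology.cobounded ℂ))
    (hb : Summable fun j => b j / (z₂ - q j))
    (h : ∃ᶠ z in 𝓝[≠] z₀, poleSeries a p z = poleSeries b q z) (w : ℂ) :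
    (∑' i, if p i = w then a i else 0) = ∑' j, if q j = w then b j else 0 := by
  have heq := eventuallyEq_of_meromorphic_of_frequently_eq (meromorphic_poleSeries hp ha)
    (meromorphic_poleSeries hq hb) h w
  refine tendsto_nhds_unique (tendsto_sub_mul_poleSeries hp ha w)
    ((tendsto_sub_mul_poleSeries hq hb w).congr' ?_)
  filter_upwards [heq] with z hz
  rw [hz]

end PoleSeries

section Energy

variable {q w w' w'' : ℝ → ℝ} {s : ℝ}

lemma sq_le_integral_energy (hq : ContinuousOn q I) (hs : ∀ x ∈ I, q x ≤ s)
    (hw : ∀ x ∈ I, HasDerivAt w (w' x) x) (hw' : ∀ x ∈ I, HasDerivAt w' (w'' x) x)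
    (hw'' : ContinuousOn w'' I) (h₀ : w 0 = 0) (h₁ : w' 1 = 0) :
    w 1 ^ 2 ≤ ∫ x in (0 : ℝ)..1, w x * ((s - q x) * w x - w'' x) := by
  have hw_cont : ContinuousOn w I := HasDerivAt.continuousOn hw
  have hderiv : ∀ x ∈ I, HasDerivAt (fun y => 2 * w 1 * w y - w 1 ^ 2 * y - w y * w' y)
      (2 * w 1 * w' x - w 1 ^ 2 - (w' x * w' x + w x * w'' x)) x := fun x hx =>
    ((((hw x hx).const_mul _).sub ((hasDerivAt_id x).const_mul _)).sub
      ((hw x hx).mul (hw' x hx))).congr_deriv (by simp)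
  have hint : IntegrableOn (fun x => w x * ((s - q x) * w x - w'' x)) I :=
    (hw_cont.mul (((continuousOn_const.sub hq).mul hw_cont).sub hw'')).integrableOn_Icc
  have hle := intervalIntegral.sub_le_integral_of_hasDeriv_right_of_le zero_le_one
    (HasDerivAt.continuousOn hderiv)
    (fun x hx => (hderiv x (Set.Ioo_subset_Icc_self hx)).hasDerivWithinAt) hint fun x hx => by
      -- the difference of the two sides is `(s - q x) * w x ^ 2 + (w' x - w 1) ^ 2`
      nlinarith [mul_nonneg (sub_nonneg.2 (hs x (Set.Ioo_subset_Icc_self hx))) (sq_nonneg (w x)),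
        sq_nonneg (w' x - w 1)]
  simp only [h₀, h₁] at hle
  linarith

lemma integral_sum_mul_sum_of_orthonormal {ι : Type*} [DecidableEq ι] {ψ : ι → ℝ → ℝ}
    (hψ : ∀ i, ContinuousOn (ψ i) I)
    (horth : ∀ i j, ∫ x in (0 : ℝ)..1, ψ i x * ψ j x = if i = j then 1 else 0)
    (F : Finset ι) (c d : ι → ℝ) :
    ∫ x in (0 : ℝ)..1, (∑ i ∈ F, c i * ψ i x) * ∑ j ∈ F, d j * ψ j x = ∑ i ∈ F, c i * d i := by
  have hint (i j : ι) :
      IntervalIntegrable (fun x => c i * d j * (ψ i x * ψ j x)) volume 0 1 := by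
    refine ContinuousOn.intervalIntegrable ?_
    rw [Set.uIcc_of_le zero_le_one]
    exact continuousOn_const.mul ((hψ i).mul (hψ j))
  calc ∫ x in (0 : ℝ)..1, (∑ i ∈ F, c i * ψ i x) * ∑ j ∈ F, d j * ψ j x
      = ∫ x in (0 : ℝ)..1, ∑ i ∈ F, ∑ j ∈ F, c i * d j * (ψ i x * ψ j x) := by
        simp only [Finset.sum_mul_sum, mul_mul_mul_comm]
    _ = ∑ i ∈ F, ∑ j ∈ F, c i * d j * ∫ x in (0 : ℝ)..1, ψ i x * ψ j x := by
        rw [intervalIntegral.integral_finsetSum fun i _ => by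
          simpa only [Finset.sum_fn] using IntervalIntegrable.sum F fun j _ => hint i j]
        refine Finset.sum_congr rfl fun i _ => ?_
        rw [intervalIntegral.integral_finsetSum fun j _ => hint i j]
        simp only [intervalIntegral.integral_const_mul]
    _ = ∑ i ∈ F, c i * d i := by simp [horth]

end Energy

section RealPotential

variable {q : ℝ → ℝ} {μ ν s : ℝ} {ψ φ : ℝ → ℝ} {z : ℂ} {u u' : ℝ → ℂ}

/-- The restriction of a real potential to `[0,1]`, as a complex-valued function. -/
noncomputable def potential (hq : ContinuousOn q I) : C(I, ℂ) :=
  ⟨fun x => q x, Complex.continuous_ofReal.comp hq.domRestrict⟩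

lemma exists_deriv_of_isDNEigenfun (h : IsDNEigenfun q μ ψ) :
    ∃ ψ' : ℝ → ℝ, (∀ x ∈ I, HasDerivAt ψ (ψ' x) x) ∧
      (∀ x ∈ I, HasDerivAt ψ' (-((μ + q x) * ψ x)) x) ∧ ψ 0 = 0 ∧ ψ' 1 = 0 := by
  obtain ⟨ψ', ψ'', hψ, hψ', -, hode, h₀, h₁, -⟩ := h
  exact ⟨ψ', hψ, fun x hx => (hψ' x hx).congr_deriv (eq_neg_of_add_eq_zero_left (hode x hx)),
    h₀, h₁⟩

variable (hq : ContinuousOn q I)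

lemma exists_isSol_of_isDNEigenfun (h : IsDNEigenfun q μ ψ) :
    ∃ ψ' : ℝ → ℂ, IsSol (potential hq) μ (fun x => ψ x) ψ' ∧ ψ' 1 = 0 := by
  obtain ⟨ψ', hψ, hψ', -, h₁⟩ := exists_deriv_of_isDNEigenfun h
  exact ⟨fun x => ψ' x, fun x => ⟨(hψ x x.2).ofReal_comp,
    (hψ' x x.2).ofReal_comp.congr_deriv (by simp [potential])⟩, by simp [h₁]⟩

lemma apply_zero_of_isDNEigenfun (h : IsDNEigenfun q μ ψ) : ψ 0 = 0 :=
  (exists_deriv_of_isDNEigenfun h).choose_spec.2.2.1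

lemma eq_mul_neumannSol_of_isDNEigenfun (h : IsDNEigenfun q μ ψ) (x : I) :
    (ψ x : ℂ) = ψ 1 * neumannSol (potential hq) μ x := by
  obtain ⟨ψ', hψ, h₁⟩ := exists_isSol_of_isDNEigenfun hq h
  exact hψ.eq_mul_neumannSol h₁ x

include hq in
lemma apply_one_ne_zero_of_isDNEigenfun (h : IsDNEigenfun q μ ψ) : ψ 1 ≠ 0 := by
  intro h₁
  have hzero (x : I) : (ψ x : ℂ) = 0 := by
    rw [eq_mul_neumannSol_of_isDNEigenfun hq h, h₁, Complex.ofReal_zero, zero_mul]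
  obtain ⟨-, -, -, -, -, -, -, -, x, hx, hne⟩ := h
  exact hne (by exact_mod_cast hzero ⟨x, hx⟩)

lemma charFun_eq_zero_of_isDNEigenfun (h : IsDNEigenfun q μ ψ) :
    charFun (potential hq) μ = 0 := by
  have hmul := eq_mul_neumannSol_of_isDNEigenfun hq h 0
  rw [Set.Icc.coe_zero, apply_zero_of_isDNEigenfun h, Complex.ofReal_zero, eq_comm,
    mul_eq_zero] at hmul
  exact hmul.resolve_left (Complex.ofReal_ne_zero.2 (apply_one_ne_zero_of_isDNEigenfun hq h))

lemma sq_mul_normingConst_of_isDNEigenfun (h : IsDNEigenfun q μ ψ) (hψ : DNNormalized ψ) :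
    (ψ 1 : ℂ) ^ 2 * normingConst (potential hq) μ = 1 := by
  have hcast : ((∫ x in (0 : ℝ)..1, ψ x ^ 2 : ℝ) : ℂ) = 1 := by rw [hψ, Complex.ofReal_one]
  rw [← hcast, ← intervalIntegral.integral_ofReal, normingConst,
    ← intervalIntegral.integral_const_mul]
  refine intervalIntegral.integral_congr fun x hx => ?_
  rw [Set.uIcc_of_le zero_le_one] at hx
  simp only [Complex.ofReal_pow, eq_mul_neumannSol_of_isDNEigenfun hq h ⟨x, hx⟩]
  ring

include hq in
lemma integral_mul_eq_zero_of_isDNEigenfun (h : IsDNEigenfun q μ ψ) (h' : IsDNEigenfun q ν φ)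
    (hμν : μ ≠ ν) : ∫ x in (0 : ℝ)..1, ψ x * φ x = 0 := by
  obtain ⟨ψ', hψ, hψ₁⟩ := exists_isSol_of_isDNEigenfun hq h
  obtain ⟨φ', hφ, hφ₁⟩ := exists_isSol_of_isDNEigenfun hq h'
  have hlagrange := hψ.lagrange_identity hφ 1
  simp only [Set.Icc.coe_one, hψ₁, hφ₁, apply_zero_of_isDNEigenfun h,
    apply_zero_of_isDNEigenfun h', ← Complex.ofReal_mul, intervalIntegral.integral_ofReal,
    ← Complex.ofReal_sub, Complex.ofReal_zero, mul_zero, zero_mul, sub_self] at hlagrange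
  exact (mul_eq_zero.1 (Complex.ofReal_eq_zero.1 hlagrange)).resolve_left (sub_ne_zero.2 hμν)

lemma IsSol.conj (hu : IsSol (potential hq) z u u') :
    IsSol (potential hq) (starRingEnd ℂ z) (fun x => starRingEnd ℂ (u x))
      fun x => starRingEnd ℂ (u' x) := fun x =>
  ⟨Complex.conjCLE.hasFDerivAt.comp_hasDerivAt _ (hu x).1,
    (Complex.conjCLE.hasFDerivAt.comp_hasDerivAt _ (hu x).2).congr_deriv (by simp [potential])⟩

lemma conj_eq_of_charFun_eq_zero (hz : charFun (potential hq) z = 0) : starRingEnd ℂ z = z := by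
  have hsol := isSol_neumannSol (potential hq) z
  have hlagrange := hsol.lagrange_identity (IsSol.conj hq hsol) 1
  have hzero : neumannSol (potential hq) z 0 = 0 := hz
  simp only [Set.Icc.coe_one, neumannSolDeriv_one, hzero, Complex.mul_conj, map_zero, mul_zero,
    zero_mul, sub_self, intervalIntegral.integral_ofReal] at hlagrange
  have hpos : 0 < ∫ x in (0 : ℝ)..1, Complex.normSq (neumannSol (potential hq) z x) :=
    intervalIntegral.integral_pos zero_lt_one
      (Complex.continuous_normSq.comp_continuousOn hsol.continuousOn)
      (fun _ _ => Complex.normSq_nonneg _) ⟨1, by simp, by simp⟩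
  exact (sub_eq_zero.1 ((mul_eq_zero.1 hlagrange).resolve_right
    (Complex.ofReal_ne_zero.2 hpos.ne'))).symm

lemma isDNEigenfun_re_neumannSol (hμ : charFun (potential hq) μ = 0) :
    IsDNEigenfun q μ fun x => (neumannSol (potential hq) μ x).re := by
  have hsol := isSol_neumannSol (potential hq) μ
  have hre {f : ℝ → ℂ} {f' : ℂ} {x : ℝ} (hf : HasDerivAt f f' x) :
      HasDerivAt (fun y => (f y).re) f'.re x :=
    Complex.reCLM.hasFDerivAt.comp_hasDerivAt _ hf
  refine ⟨fun x => (neumannSolDeriv (potential hq) μ x).re,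
    fun x => -((μ + q x) * (neumannSol (potential hq) μ x).re), fun x hx => hre (hsol ⟨x, hx⟩).1,
    fun x hx => (hre (hsol ⟨x, hx⟩).2).congr_deriv (by simp [potential]),
    ((continuousOn_const.add hq).mul
      (Complex.continuous_re.comp_continuousOn hsol.continuousOn)).neg,
    fun x _ => by ring, ?_, by simp, ⟨1, by simp, by simp⟩⟩
  exact congrArg Complex.re hμ

lemma exists_isDNEigenvalue_of_charFun_eq_zero (hz : charFun (potential hq) z = 0) :
    ∃ μ : ℝ, (μ : ℂ) = z ∧ IsDNEigenvalue q μ := by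
  have hre : (z.re : ℂ) = z := Complex.conj_eq_iff_re.1 (conj_eq_of_charFun_eq_zero hq hz)
  exact ⟨z.re, hre, _, isDNEigenfun_re_neumannSol hq (by rwa [hre])⟩

end RealPotential

section EigenfunctionFamily

variable {ι : Type*} {q : ℝ → ℝ} {μ : ι → ℝ} {ψ : ι → ℝ → ℝ} {s : ℝ}

section Bessel

variable (hq : ContinuousOn q I)
  (heig : ∀ i, IsDNEigenfun q (μ i) (ψ i) ∧ DNNormalized (ψ i)) (hμ : Function.Injective μ)
include hq heig hμ

lemma integral_mul_of_isDNEigenfun [DecidableEq ι] (i j : ι) :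
    ∫ x in (0 : ℝ)..1, ψ i x * ψ j x = if i = j then 1 else 0 := by
  split_ifs with hij
  · simpa only [hij, ← sq, DNNormalized] using (heig j).2
  · exact integral_mul_eq_zero_of_isDNEigenfun hq (heig i).1 (heig j).1 (hμ.ne hij)

lemma sq_sum_le_sum_sq_mul (hs : ∀ x ∈ I, q x ≤ s) (F : Finset ι) (c : ι → ℝ) :
    (∑ i ∈ F, c i * ψ i 1) ^ 2 ≤ ∑ i ∈ F, c i * (c i * (s + μ i)) := by
  classical
  choose ψ' hψ hψ' h₀ h₁ using fun i => exists_deriv_of_isDNEigenfun (heig i).1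
  have hcont (i : ι) : ContinuousOn (ψ i) I := HasDerivAt.continuousOn (hψ i)
  have henergy := sq_le_integral_energy hq hs
    (w := fun x => ∑ i ∈ F, c i * ψ i x) (w' := fun x => ∑ i ∈ F, c i * ψ' i x)
    (w'' := fun x => ∑ i ∈ F, c i * -((μ i + q x) * ψ i x))
    (fun x hx => HasDerivAt.fun_sum fun i _ => (hψ i x hx).const_mul (c i))
    (fun x hx => HasDerivAt.fun_sum fun i _ => (hψ' i x hx).const_mul (c i))
    (continuousOn_finsetSum _ fun i _ =>
      continuousOn_const.mul ((continuousOn_const.add hq).mul (hcont i)).neg)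
    (by simp [h₀]) (by simp [h₁])
  have hoperator (x : ℝ) : (s - q x) * ∑ i ∈ F, c i * ψ i x
      - ∑ i ∈ F, c i * -((μ i + q x) * ψ i x) = ∑ i ∈ F, c i * (s + μ i) * ψ i x := by
    rw [Finset.mul_sum, ← Finset.sum_sub_distrib]
    exact Finset.sum_congr rfl fun i _ => by ring
  simp only [hoperator] at henergy
  rwa [integral_sum_mul_sum_of_orthonormal hcont
    (integral_mul_of_isDNEigenfun hq heig hμ)] at henergy

lemma add_pos_of_isDNEigenfun (hs : ∀ x ∈ I, q x ≤ s) (i : ι) : 0 < s + μ i := by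
  have hle := sq_sum_le_sum_sq_mul hq heig hμ hs {i} 1
  simp only [Finset.sum_singleton, Pi.one_apply, one_mul] at hle
  exact (sq_pos_of_ne_zero (apply_one_ne_zero_of_isDNEigenfun hq (heig i).1)).trans_le hle

lemma summable_sq_div_add (hs : ∀ x ∈ I, q x ≤ s) :
    Summable fun i => ψ i 1 ^ 2 / (s + μ i) := by
  have hpos := add_pos_of_isDNEigenfun hq heig hμ hs
  refine summable_of_sum_le (c := 1) (fun i => div_nonneg (sq_nonneg _) (hpos i).le) fun F => ?_
  have hle := sq_sum_le_sum_sq_mul hq heig hμ hs F fun i => ψ i 1 / (s + μ i)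
  have hleft (i : ι) : ψ i 1 / (s + μ i) * ψ i 1 = ψ i 1 ^ 2 / (s + μ i) := by ring
  have hright (i : ι) : ψ i 1 / (s + μ i) * (ψ i 1 / (s + μ i) * (s + μ i))
      = ψ i 1 ^ 2 / (s + μ i) := by
    rw [div_mul_cancel₀ _ (hpos i).ne', hleft]
  simp only [hleft, hright] at hle
  nlinarith

end Bessel

lemma tendsto_cobounded_of_charFun_eq_zero {p : C(I, ℂ)} {z : ι → ℂ} (hz : Function.Injective z)
    (hzero : ∀ i, charFun p (z i) = 0) : Tendsto z cofinite (Bornology.cobounded ℂ) := by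
  obtain ⟨hclosed, hdiscrete⟩ := compl_mem_codiscrete_iff.1
    (charFun_preimage_compl_mem_codiscrete p)
  rw [Metric.cobounded_eq_cocompact]
  exact (hclosed.tendsto_coe_cofinite_of_isDiscrete hdiscrete).comp
    (f := fun i => (⟨z i, hzero i⟩ : charFun p ⁻¹' {0}))
    (Function.Injective.tendsto_cofinite fun i j hij => hz (congrArg Subtype.val hij))

end EigenfunctionFamily

section SpectralData

lemma exists_frequently_eq_of_eventually_neg_sq {f g : ℂ → ℂ}
    (h : ∀ᶠ l : ℝ in atTop, f (-(l : ℂ) ^ 2) = g (-(l : ℂ) ^ 2)) :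
    ∃ z₀, ∃ᶠ z in 𝓝[≠] z₀, f z = g z := by
  obtain ⟨L, hL⟩ := eventually_atTop.1 h
  let l₀ : ℝ := max L 0 + 1
  have hLl : L < l₀ := (le_max_left L 0).trans_lt (lt_add_one _)
  have hl₀ : 0 < l₀ := (le_max_right L 0).trans_lt (lt_add_one _)
  have hne : ∀ᶠ l : ℝ in 𝓝[>] l₀, -(l : ℂ) ^ 2 ≠ -(l₀ : ℂ) ^ 2 := by
    filter_upwards [self_mem_nhdsWithin] with l hl
    have hlt : l₀ ^ 2 < l ^ 2 := pow_lt_pow_left₀ hl hl₀.le two_ne_zero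
    exact_mod_cast (neg_lt_neg hlt).ne
  have htendsto : Tendsto (fun l : ℝ => -(l : ℂ) ^ 2) (𝓝[>] l₀) (𝓝[≠] (-(l₀ : ℂ) ^ 2)) :=
    tendsto_nhdsWithin_iff.2 ⟨(by fun_prop : Continuous fun l : ℝ => -(l : ℂ) ^ 2).continuousAt
      |>.tendsto.mono_left nhdsWithin_le_nhds, hne⟩
  have heq : ∀ᶠ l : ℝ in 𝓝[>] l₀, f (-(l : ℂ) ^ 2) = g (-(l : ℂ) ^ 2) := by
    filter_upwards [self_mem_nhdsWithin] with l hl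
    exact hL l (hLl.trans hl).le
  exact ⟨_, htendsto.frequently heq.frequently⟩

lemma ofReal_tsum_div_add {ι : Type*} (a μ : ι → ℝ) (t : ℝ) :
    ((∑' i, a i / (t + μ i) : ℝ) : ℂ) =
      -poleSeries (fun i => (a i : ℂ)) (fun i => (μ i : ℂ)) (-(t : ℂ)) := by
  rw [poleSeries, Complex.ofReal_tsum, ← tsum_neg]
  refine tsum_congr fun i => ?_
  rw [← div_neg]
  push_cast
  ring

lemma summable_ofReal_div_sub {ι : Type*} {a μ : ι → ℝ} {s : ℝ}
    (h : Summable fun i => a i / (s + μ i)) :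
    Summable fun i => (a i : ℂ) / (-(s : ℂ) - μ i) := by
  refine (Complex.ofRealCLM.summable h).neg.congr fun i => ?_
  simp only [Complex.ofRealCLM_apply, Complex.ofReal_div, Complex.ofReal_add]
  rw [← div_neg]
  ring

lemma exists_forall_le_of_continuousOn {q : ℝ → ℝ} (hq : ContinuousOn q I) :
    ∃ s, ∀ x ∈ I, q x ≤ s := by
  obtain ⟨s, hs⟩ := isCompact_Icc.bddAbove_image hq
  exact ⟨s, fun x hx => hs ⟨x, hx, rfl⟩⟩

variable {ι₁ ι₂ : Type*} {q₁ q₂ : ℝ → ℝ} {μ₁ : ι₁ → ℝ} {μ₂ : ι₂ → ℝ} {ψ₁ : ι₁ → ℝ → ℝ}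
  {ψ₂ : ι₂ → ℝ → ℝ}
  (hq₁ : ContinuousOn q₁ I) (hq₂ : ContinuousOn q₂ I)
  (hμ₁ : Function.Injective μ₁) (hμ₂ : Function.Injective μ₂)
  (heig₁ : ∀ i, IsDNEigenfun q₁ (μ₁ i) (ψ₁ i) ∧ DNNormalized (ψ₁ i))
  (heig₂ : ∀ j, IsDNEigenfun q₂ (μ₂ j) (ψ₂ j) ∧ DNNormalized (ψ₂ j))

include hq₁ hμ₁ heig₁ in
lemma eventually_sq_add_ne_zero : ∀ᶠ l : ℝ in atTop, ∀ i, l ^ 2 + μ₁ i ≠ 0 := by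
  obtain ⟨s, hs⟩ := exists_forall_le_of_continuousOn hq₁
  filter_upwards [(tendsto_pow_atTop two_ne_zero).eventually_ge_atTop s] with l hl i
  linarith [add_pos_of_isDNEigenfun hq₁ heig₁ hμ₁ hs i]

include hq₁ hq₂ hμ₁ hμ₂ heig₁ heig₂ in
open scoped Classical in
lemma tsum_ite_sq_eq_of_eventually_eq
    (hdata : ∀ᶠ l : ℝ in atTop,
      ∑' i, ψ₁ i 1 ^ 2 / (l ^ 2 + μ₁ i) = ∑' j, ψ₂ j 1 ^ 2 / (l ^ 2 + μ₂ j)) (w : ℂ) :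
    (∑' i, if (μ₁ i : ℂ) = w then ((ψ₁ i 1 ^ 2 : ℝ) : ℂ) else 0) =
      ∑' j, if (μ₂ j : ℂ) = w then ((ψ₂ j 1 ^ 2 : ℝ) : ℂ) else 0 := by
  obtain ⟨s₁, hs₁⟩ := exists_forall_le_of_continuousOn hq₁
  obtain ⟨s₂, hs₂⟩ := exists_forall_le_of_continuousOn hq₂
  have hpoles : ∀ᶠ l : ℝ in atTop,
      poleSeries (fun i => ((ψ₁ i 1 ^ 2 : ℝ) : ℂ)) (fun i => (μ₁ i : ℂ)) (-(l : ℂ) ^ 2) =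
        poleSeries (fun j => ((ψ₂ j 1 ^ 2 : ℝ) : ℂ)) (fun j => (μ₂ j : ℂ)) (-(l : ℂ) ^ 2) := by
    filter_upwards [hdata] with l hl
    have hcast := congrArg (fun x : ℝ => (x : ℂ)) hl
    simp only [ofReal_tsum_div_add (fun i => ψ₁ i 1 ^ 2),
      ofReal_tsum_div_add (fun j => ψ₂ j 1 ^ 2), neg_inj, Complex.ofReal_pow] at hcast
    simpa only [Complex.ofReal_pow] using hcast
  obtain ⟨z₀, hz₀⟩ := exists_frequently_eq_of_eventually_neg_sq hpoles
  exact tsum_residue_eq_of_frequently_eq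
    (tendsto_cobounded_of_charFun_eq_zero (Complex.ofReal_injective.comp hμ₁)
      fun i => charFun_eq_zero_of_isDNEigenfun hq₁ (heig₁ i).1)
    (summable_ofReal_div_sub (summable_sq_div_add hq₁ heig₁ hμ₁ hs₁))
    (tendsto_cobounded_of_charFun_eq_zero (Complex.ofReal_injective.comp hμ₂)
      fun j => charFun_eq_zero_of_isDNEigenfun hq₂ (heig₂ j).1)
    (summable_ofReal_div_sub (summable_sq_div_add hq₂ heig₂ hμ₂ hs₂)) hz₀ w

include hq₁ hq₂ hμ₁ hμ₂ heig₁ heig₂ in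
lemma exists_eq_and_sq_eq_of_eventually_eq
    (hdata : ∀ᶠ l : ℝ in atTop,
      ∑' i, ψ₁ i 1 ^ 2 / (l ^ 2 + μ₁ i) = ∑' j, ψ₂ j 1 ^ 2 / (l ^ 2 + μ₂ j)) (i : ι₁) :
    ∃ j, μ₂ j = μ₁ i ∧ ψ₂ j 1 ^ 2 = ψ₁ i 1 ^ 2 := by
  classical
  have hres := tsum_ite_sq_eq_of_eventually_eq hq₁ hq₂ hμ₁ hμ₂ heig₁ heig₂ hdata (μ₁ i)
  simp only [Complex.ofReal_inj, hμ₁.eq_iff, tsum_ite_eq] at hres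
  have hj : ∃ j, μ₂ j = μ₁ i := by
    by_contra! hne
    simp only [hne, if_false, tsum_zero] at hres
    exact apply_one_ne_zero_of_isDNEigenfun hq₁ (heig₁ i).1
      (pow_eq_zero_iff two_ne_zero |>.1 (Complex.ofReal_eq_zero.1 hres))
  obtain ⟨j, hj⟩ := hj
  simp only [← hj, hμ₂.eq_iff, tsum_ite_eq, Complex.ofReal_inj] at hres
  exact ⟨j, hj, hres.symm⟩

lemma exists_ofReal_eq_of_charFun_eq_zero (hall₁ : ∀ μ : ℝ, IsDNEigenvalue q₁ μ → ∃ i, μ₁ i = μ)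
    {z : ℂ} (hz : charFun (potential hq₁) z = 0) : ∃ i, (μ₁ i : ℂ) = z := by
  obtain ⟨μ, rfl, hμ⟩ := exists_isDNEigenvalue_of_charFun_eq_zero hq₁ hz
  exact (hall₁ μ hμ).imp fun i => congrArg _

include hμ₁ hμ₂ heig₁ heig₂ in
lemma charFun_eq_zero_and_normingConst_eq
    (hall₁ : ∀ μ : ℝ, IsDNEigenvalue q₁ μ → ∃ i, μ₁ i = μ)
    (hdata : ∀ᶠ l : ℝ in atTop,
      ∑' i, ψ₁ i 1 ^ 2 / (l ^ 2 + μ₁ i) = ∑' j, ψ₂ j 1 ^ 2 / (l ^ 2 + μ₂ j))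
    {z : ℂ} (hz : charFun (potential hq₁) z = 0) :
    charFun (potential hq₂) z = 0 ∧
      normingConst (potential hq₁) z = normingConst (potential hq₂) z := by
  obtain ⟨i, rfl⟩ := exists_ofReal_eq_of_charFun_eq_zero hq₁ hall₁ hz
  obtain ⟨j, hμ, hψ⟩ := exists_eq_and_sq_eq_of_eventually_eq hq₁ hq₂ hμ₁ hμ₂ heig₁ heig₂ hdata i
  have hα₁ := sq_mul_normingConst_of_isDNEigenfun hq₁ (heig₁ i).1 (heig₁ i).2
  have hα₂ := sq_mul_normingConst_of_isDNEigenfun hq₂ (heig₂ j).1 (heig₂ j).2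
  rw [← Complex.ofReal_pow, hψ, hμ, Complex.ofReal_pow] at hα₂
  refine ⟨hμ ▸ charFun_eq_zero_of_isDNEigenfun hq₂ (heig₂ j).1, ?_⟩
  exact mul_left_cancel₀ (left_ne_zero_of_mul_eq_one hα₁) (hα₁.trans hα₂.symm)

end SpectralData

end InverseSpectral

open InverseSpectral Filter in
theorem inverse_problem_uniqueness_general {ι₁ ι₂ : Type*} {q₁ q₂ : ℝ → ℝ}
    (hq₁ : ContinuousOn q₁ (Set.Icc (0 : ℝ) 1)) (hq₂ : ContinuousOn q₂ (Set.Icc (0 : ℝ) 1))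
    {μ₁ : ι₁ → ℝ} {μ₂ : ι₂ → ℝ} {ψ₁ : ι₁ → ℝ → ℝ} {ψ₂ : ι₂ → ℝ → ℝ}
    (hμ₁ : Function.Injective μ₁) (hμ₂ : Function.Injective μ₂)
    (heig₁ : ∀ i, IsDNEigenfun q₁ (μ₁ i) (ψ₁ i) ∧ DNNormalized (ψ₁ i))
    (heig₂ : ∀ j, IsDNEigenfun q₂ (μ₂ j) (ψ₂ j) ∧ DNNormalized (ψ₂ j))
    (hall₁ : ∀ μ : ℝ, IsDNEigenvalue q₁ μ → ∃ i, μ₁ i = μ)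
    (hall₂ : ∀ μ : ℝ, IsDNEigenvalue q₂ μ → ∃ j, μ₂ j = μ)
    (hdata : ∀ᶠ l : ℝ in atTop, (∀ i, l ^ 2 + μ₁ i ≠ 0) → (∀ j, l ^ 2 + μ₂ j ≠ 0) →
      ∑' i, ψ₁ i 1 ^ 2 / (l ^ 2 + μ₁ i) = ∑' j, ψ₂ j 1 ^ 2 / (l ^ 2 + μ₂ j)) :
    ∀ z ∈ Set.Icc (0 : ℝ) 1, q₁ z = q₂ z := by
  have hsums := (hdata.and ((eventually_sq_add_ne_zero hq₁ hμ₁ heig₁).and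
    (eventually_sq_add_ne_zero hq₂ hμ₂ heig₂))).mono fun l hl => hl.1 hl.2.1 hl.2.2
  have hforward {z : ℂ} := charFun_eq_zero_and_normingConst_eq hq₁ hq₂ hμ₁ hμ₂ heig₁ heig₂ hall₁
    hsums (z := z)
  have hbackward {z : ℂ} := charFun_eq_zero_and_normingConst_eq hq₂ hq₁ hμ₂ hμ₁ heig₂ heig₁ hall₂
    (hsums.mono fun _ => Eq.symm) (z := z)
  have hα₀ (z : ℂ) (hz : charFun (potential hq₁) z = 0) :
      normingConst (potential hq₁) z ≠ 0 := by
    obtain ⟨i, rfl⟩ := exists_ofReal_eq_of_charFun_eq_zero hq₁ hall₁ hz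
    exact right_ne_zero_of_mul_eq_one
      (sq_mul_normingConst_of_isDNEigenfun hq₁ (heig₁ i).1 (heig₁ i).2)
  have hpotential : potential hq₁ = potential hq₂ :=
    eq_of_charFun_zeros_of_normingConst (fun z => ⟨fun hz => (hforward hz).1,
      fun hz => (hbackward hz).1⟩) (fun z hz => (hforward hz).2) hα₀
  exact fun z hz => Complex.ofReal_injective (DFunLike.congr_fun hpotential ⟨z, hz⟩)

/-- the data `G(λ) = ∑ⱼ ψⱼ(1)²/(λ² + μⱼ)`, known for all `λ > 0`,
uniquely determine the potential of the Dirichlet–Neumann problem. -/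
theorem inverse_problem_uniqueness
    (q₁ q₂ : ℝ → ℝ)
    (hq₁ : ContinuousOn q₁ (Set.Icc (0:ℝ) 1))
    (hq₂ : ContinuousOn q₂ (Set.Icc (0:ℝ) 1))
    (μ₁ μ₂ : ℕ → ℝ) (ψ₁ ψ₂ : ℕ → ℝ → ℝ)
    (hmono₁ : StrictMono μ₁) (hmono₂ : StrictMono μ₂)
    (heig₁ : ∀ j : ℕ, IsDNEigenfun q₁ (μ₁ j) (ψ₁ j) ∧ DNNormalized (ψ₁ j))
    (heig₂ : ∀ j : ℕ, IsDNEigenfun q₂ (μ₂ j) (ψ₂ j) ∧ DNNormalized (ψ₂ j))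
    (hall₁ : ∀ μ : ℝ, IsDNEigenvalue q₁ μ → ∃ j : ℕ, μ₁ j = μ)
    (hall₂ : ∀ μ : ℝ, IsDNEigenvalue q₂ μ → ∃ j : ℕ, μ₂ j = μ)
    (C : ℝ)
    (hC₁ : ∀ j : ℕ, |μ₁ j - π ^ 2 * ((j : ℝ) + 1 / 2) ^ 2| ≤ C)
    (hC₂ : ∀ j : ℕ, |μ₂ j - π ^ 2 * ((j : ℝ) + 1 / 2) ^ 2| ≤ C)
    (hdata : ∀ l : ℝ, 0 < l →
      (∀ j : ℕ, l ^ 2 + μ₁ j ≠ 0 ∧ l ^ 2 + μ₂ j ≠ 0) →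
      ∑' j : ℕ, (ψ₁ j 1) ^ 2 / (l ^ 2 + μ₁ j)
        = ∑' j : ℕ, (ψ₂ j 1) ^ 2 / (l ^ 2 + μ₂ j)) :
    ∀ z ∈ Set.Icc (0:ℝ) 1, q₁ z = q₂ z :=
  inverse_problem_uniqueness_general hq₁ hq₂ hmono₁.injective hmono₂.injective heig₁ heig₂
    hall₁ hall₂ <| (Filter.eventually_gt_atTop 0).mono fun l hl h₁ h₂ =>
      hdata l hl fun j => ⟨h₁ j, h₂ j⟩
end

section
/- Let q₁, q₂ : [0,1] → ℝ be continuous. For i = 1,2 let μ⁽ⁱ⁾ : ℕ → ℝ be a strictly increasing sequence enumerating all eigenvalues of the Dirichlet–Neumann problem for qᵢ, and let ψ⁽ⁱ⁾ⱼ be a normalized eigenfunction for μ⁽ⁱ⁾ⱼ. If μ⁽¹⁾ⱼ = μ⁽²⁾ⱼ and ψ⁽¹⁾ⱼ(1)² = ψ⁽²⁾ⱼ(1)² for every j ∈ ℕ, then q₁(z) = q₂(z) for all z ∈ [0,1]. -/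
open MeasureTheory Real

/-! For each `l`, let `φ(l, ·)` be the solution of `y'' + (l + q) y = 0` with `y(1) = 1`,
`y'(1) = 0`, and let the Weyl solution `w(l, ·)` be the solution vanishing at `0` whose Wronskian
with `φ` is `1`. The eigenvalues are the zeros of the entire function `l ↦ φ(l, 0)`, and by Green's
identity `w` has simple poles there, with residues `-φ / ∫ φ²`, where `∫ φ² = 1 / ψ(1)²`. For two
potentials with the same spectral data the residues cancel in `φ₁ w₂ - φ₂ w₁`, which is therefore
entire in `l`. Writing `l = k²`, Volterra estimates show that it is `O(1 / n)` on the squares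
`max |Re k| |Im k| = n π`, so it vanishes, and `w₁ / φ₁ = w₂ / φ₂`. At the nonreal value `l = i`
neither `φ₁` nor `φ₂` has a zero, and since `(w / φ)' = 1 / φ²` it follows that `φ₁² = φ₂²`, hence
`φ₁ = φ₂`. The differential equation then gives `q₁ = q₂`. -/

section Volterra

variable {𝕜 E : Type*} [NontriviallyNormedField 𝕜] [NormedAddCommGroup E] [NormedSpace 𝕜 E]

/-- Pointwise application of a continuous family of operators to a continuous family of vectors,
as a bounded bilinear map; it turns the right-hand side of a linear differential equation into an
operator on continuous functions. -/
noncomputable def pointwiseApply (𝕜 : Type*) {X E F : Type*} [NontriviallyNormedField 𝕜]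
    [TopologicalSpace X] [CompactSpace X] [NormedAddCommGroup E] [NormedSpace 𝕜 E]
    [NormedAddCommGroup F] [NormedSpace 𝕜 F] :
    C(X, E →L[𝕜] F) →L[𝕜] C(X, E) →L[𝕜] C(X, F) :=
  LinearMap.mkContinuous₂
    (LinearMap.mk₂ 𝕜
      (fun (A : C(X, E →L[𝕜] F)) (f : C(X, E)) => (⟨fun x => A x (f x), by fun_prop⟩ : C(X, F)))
      (fun _ _ _ => rfl) (fun _ _ _ => rfl)
      (fun A f g => by ext x; exact map_add (A x) (f x) (g x))
      (fun c A f => by ext x; exact map_smul (A x) c (f x)))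
    1 fun A f => by
      refine (ContinuousMap.norm_le _ (by positivity)).2 fun x => ?_
      rw [one_mul]
      exact (A x).le_of_opNorm_le_of_le (A.norm_coe_le_norm x) (f.norm_coe_le_norm x)

variable [NormedSpace ℝ E] [SMulCommClass ℝ 𝕜 E] {a b : ℝ}

/-- The Volterra operator `f ↦ ∫ t in x₀..z, f t` on `C([a, b], E)`. -/
noncomputable def volterra (𝕜 : Type*) {E : Type*} [NontriviallyNormedField 𝕜]
    [NormedAddCommGroup E] [NormedSpace 𝕜 E] [NormedSpace ℝ E] [SMulCommClass ℝ 𝕜 E] {a b : ℝ}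
    (h : a ≤ b) (x₀ : Set.Icc a b) : C(Set.Icc a b, E) →L[𝕜] C(Set.Icc a b, E) :=
  LinearMap.mkContinuous
    { toFun := fun f =>
        ⟨fun z => ∫ t in x₀..z, f.IccExtend h t,
          (intervalIntegral.continuous_primitive
            (fun _ _ => (f.IccExtend h).continuous.intervalIntegrable _ _) _).comp
            continuous_subtype_val⟩
      map_add' := fun f g => by
        ext z
        exact intervalIntegral.integral_add ((f.IccExtend h).continuous.intervalIntegrable _ _)
          ((g.IccExtend h).continuous.intervalIntegrable _ _)
      map_smul' := fun c f => by
        ext z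
        exact intervalIntegral.integral_smul c _ }
    (b - a) fun f => by
      refine (ContinuousMap.norm_le _ (mul_nonneg (sub_nonneg.2 h) (norm_nonneg f))).2 fun z => ?_
      rw [mul_comm]
      calc ‖∫ t in x₀..z, f.IccExtend h t‖ ≤ ‖f‖ * |(z : ℝ) - x₀| :=
            intervalIntegral.norm_integral_le_of_norm_le_const fun t _ => f.norm_coe_le_norm _
        _ ≤ ‖f‖ * (b - a) := by
            gcongr
            exact Real.dist_le_of_mem_Icc z.2 x₀.2

lemma volterra_apply (h : a ≤ b) (x₀ : Set.Icc a b) (f : C(Set.Icc a b, E)) (z : Set.Icc a b) :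
    volterra 𝕜 h x₀ f z = ∫ t in x₀..z, f.IccExtend h t := rfl

lemma norm_volterra_apply_le (h : a ≤ b) (x₀ : Set.Icc a b) {f : C(Set.Icc a b, E)} {C : ℝ} {n : ℕ}
    (hf : ∀ t, ‖f t‖ ≤ C * |(t : ℝ) - x₀| ^ n) (z : Set.Icc a b) :
    ‖volterra 𝕜 h x₀ f z‖ ≤ C * (|(z : ℝ) - x₀| ^ (n + 1) / (n + 1)) := by
  have hbound : ∀ t ∈ Set.uIoc (x₀ : ℝ) z, ‖f.IccExtend h t‖ ≤ C * |t - x₀| ^ n := by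
    intro t ht
    have htI : t ∈ Set.Icc a b := Set.uIcc_subset_Icc x₀.2 z.2 (Set.uIoc_subset_uIcc ht)
    have := hf ⟨t, htI⟩
    rwa [ContinuousMap.coe_IccExtend, Set.IccExtend_of_mem h f htI]
  have hint : IntervalIntegrable (fun t => C * |t - x₀| ^ n) volume x₀ z :=
    Continuous.intervalIntegrable (by fun_prop) _ _
  rw [volterra_apply, intervalIntegral.norm_intervalIntegral_eq]
  calc _ ≤ ∫ t in Set.uIoc (x₀ : ℝ) z, C * |t - x₀| ^ n :=
        norm_integral_le_of_norm_le (intervalIntegrable_iff.1 hint)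
          ((ae_restrict_iff' measurableSet_uIoc).2 (.of_forall hbound))
    _ = _ := by rw [integral_const_mul, integral_pow_abs_sub_uIoc]

lemma norm_volterra_comp_pointwiseApply_pow_apply_le (h : a ≤ b) (x₀ : Set.Icc a b)
    (A : C(Set.Icc a b, E →L[𝕜] E)) (f : C(Set.Icc a b, E)) (n : ℕ) (z : Set.Icc a b) :
    ‖((volterra 𝕜 h x₀ ∘L pointwiseApply 𝕜 A) ^ n) f z‖ ≤
      ‖A‖ ^ n * |(z : ℝ) - x₀| ^ n / n.factorial * ‖f‖ := by
  induction n generalizing z with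
  | zero => simpa using f.norm_coe_le_norm z
  | succ n ih =>
    rw [pow_succ']
    refine (norm_volterra_apply_le (𝕜 := 𝕜) h x₀ (C := ‖A‖ ^ (n + 1) / n.factorial * ‖f‖) (n := n)
      (fun t => ?_) z).trans_eq ?_
    · calc _ ≤ ‖A‖ * (‖A‖ ^ n * |(t : ℝ) - x₀| ^ n / n.factorial * ‖f‖) :=
            (A t).le_of_opNorm_le_of_le (A.norm_coe_le_norm t) (ih t)
        _ = _ := by ring
    · push_cast [Nat.factorial_succ]
      field_simp

lemma isUnit_one_sub_of_norm_pow_lt_one {R : Type*} [NormedRing R] [CompleteSpace R] {T : R} {n : ℕ}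
    (hT : ‖T ^ n‖ < 1) : IsUnit (1 - T) := by
  have hprod : IsUnit ((1 - T) * ∑ i ∈ Finset.range n, T ^ i) := by
    rw [mul_neg_geom_sum]
    exact isUnit_one_sub_of_norm_lt_one hT
  have hcomm : Commute (1 - T) (∑ i ∈ Finset.range n, T ^ i) := by
    rw [Commute, SemiconjBy, mul_neg_geom_sum, geom_sum_mul_neg]
  exact (hcomm.isUnit_mul_iff.1 hprod).1

variable [CompleteSpace E]

lemma isUnit_one_sub_volterra_comp_pointwiseApply (h : a ≤ b) (x₀ : Set.Icc a b)
    (A : C(Set.Icc a b, E →L[𝕜] E)) : IsUnit (1 - volterra 𝕜 h x₀ ∘L pointwiseApply 𝕜 A) := by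
  obtain ⟨n, hn⟩ := ((FloorSemiring.tendsto_pow_div_factorial_atTop
    (‖A‖ * (b - a))).eventually_lt_const one_pos).exists
  have : 0 ≤ b - a := sub_nonneg.2 h
  refine isUnit_one_sub_of_norm_pow_lt_one (R := C(Set.Icc a b, E) →L[𝕜] C(Set.Icc a b, E))
    (n := n) (lt_of_le_of_lt ?_ hn)
  refine ContinuousLinearMap.opNorm_le_bound _ (by positivity) fun f =>
    (ContinuousMap.norm_le _ (by positivity)).2 fun z =>
      (norm_volterra_comp_pointwiseApply_pow_apply_le h x₀ A f n z).trans ?_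
  rw [mul_pow]
  gcongr
  exact Real.dist_le_of_mem_Icc z.2 x₀.2

variable {Λ : Type*} [NormedAddCommGroup Λ] [NormedSpace 𝕜 Λ] {A : Λ → C(Set.Icc a b, E →L[𝕜] E)}

lemma exists_differentiable_eq_add_apply {X : Type*} [NormedAddCommGroup X] [NormedSpace 𝕜 X]
    [CompleteSpace X] {S : Λ → X →L[𝕜] X} (hS : Differentiable 𝕜 S)
    (hS_unit : ∀ l, IsUnit (1 - S l)) (f : X) :
    ∃ u : Λ → X, Differentiable 𝕜 u ∧ ∀ l, u l = f + S l (u l) := by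
  refine ⟨fun l => Ring.inverse (1 - S l) f, fun l => ?_, fun l => sub_eq_iff_eq_add.1 ?_⟩
  · have hsub : DifferentiableAt 𝕜 (fun l => 1 - S l) l := (hS l).const_sub 1
    have hinv : DifferentiableAt 𝕜 (fun l => Ring.inverse (1 - S l)) l :=
      DifferentiableAt.comp (g := Ring.inverse) l (differentiableAt_inverse (hS_unit l)) hsub
    exact hinv.clm_apply (differentiableAt_const f)
  · exact congrArg (fun T : X →L[𝕜] X => T f) (Ring.mul_inverse_cancel _ (hS_unit l))

lemma exists_differentiable_volterra_equation (h : a ≤ b) (x₀ : Set.Icc a b)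
    (hA : Differentiable 𝕜 A) (f : C(Set.Icc a b, E)) :
    ∃ u : Λ → C(Set.Icc a b, E), Differentiable 𝕜 u ∧
      ∀ l, u l = f + volterra 𝕜 h x₀ (pointwiseApply 𝕜 (A l) (u l)) := by
  have hP : Differentiable 𝕜 (pointwiseApply 𝕜 (X := Set.Icc a b) (E := E) (F := E)) :=
    ContinuousLinearMap.differentiable _
  exact exists_differentiable_eq_add_apply
    ((differentiable_const (volterra 𝕜 h x₀)).clm_comp (hP.comp hA))
    (fun l => isUnit_one_sub_volterra_comp_pointwiseApply h x₀ (A l)) f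

theorem exists_linear_ode_solution_differentiable (h : a ≤ b) (x₀ : Set.Icc a b)
    (hA : Differentiable 𝕜 A) (w₀ : E) :
    ∃ w : Λ → ℝ → E, Continuous (Function.uncurry w) ∧ (∀ l, w l x₀ = w₀) ∧
      (∀ l, ∀ z (hz : z ∈ Set.Icc a b), HasDerivAt (w l) (A l ⟨z, hz⟩ (w l z)) z) ∧
      ∀ z ∈ Set.Icc a b, Differentiable 𝕜 fun l => w l z := by
  obtain ⟨u, hu_diff, hu⟩ := exists_differentiable_volterra_equation h x₀ hA
    (ContinuousMap.const _ w₀)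
  let g : Λ → C(Set.Icc a b, E) := fun l => pointwiseApply 𝕜 (A l) (u l)
  have hg : Continuous fun p : Λ × ℝ => (g p.1).IccExtend h p.2 := by
    have hA_cont := hA.continuous
    have hu_cont := hu_diff.continuous
    have := continuous_projIcc (h := h)
    change Continuous fun p : Λ × ℝ =>
      A p.1 (Set.projIcc a b h p.2) (u p.1 (Set.projIcc a b h p.2))
    fun_prop
  have hw : ∀ l z (hz : z ∈ Set.Icc a b),
      w₀ + ∫ t in (x₀ : ℝ)..z, (g l).IccExtend h t = u l ⟨z, hz⟩ := fun l z hz =>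
    (congrArg (fun f : C(Set.Icc a b, E) => f ⟨z, hz⟩) (hu l)).symm
  refine ⟨fun l z => w₀ + ∫ t in (x₀ : ℝ)..z, (g l).IccExtend h t, ?_, fun l => by simp, ?_, ?_⟩
  · refine continuous_const.add ?_
    exact intervalIntegral.continuous_parametric_intervalIntegral_of_continuous
      (f := fun (p : Λ × ℝ) t => (g p.1).IccExtend h t) (s := Prod.snd)
      (hg.comp ((continuous_fst.comp continuous_fst).prodMk continuous_snd)) continuous_snd
  · intro l z hz
    have hderiv := ((g l).IccExtend h).continuous.integral_hasStrictDerivAt x₀ z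
    refine (hderiv.hasDerivAt.const_add w₀).congr_deriv ?_
    simp only [hw l z hz]
    rw [ContinuousMap.coe_IccExtend, Set.IccExtend_of_mem h _ hz]
    rfl
  · intro z hz
    simp only [hw _ z hz]
    exact (ContinuousMap.evalCLM 𝕜 ⟨z, hz⟩ : C(Set.Icc a b, E) →L[𝕜] E).differentiable.comp hu_diff

end Volterra

section ComplexAnalysis

open Filter Topology

lemma norm_complex_cos_sq (k : ℂ) :
    ‖Complex.cos k‖ ^ 2 = Real.cos k.re ^ 2 + Real.sinh k.im ^ 2 := by
  have hcos : Complex.cos k =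
      ⟨Real.cos k.re * Real.cosh k.im, -(Real.sin k.re * Real.sinh k.im)⟩ := by
    rw [Complex.mk_eq_add_mul_I, Complex.cos_eq k]
    push_cast
    ring
  rw [hcos, Complex.sq_norm, Complex.normSq_mk]
  linear_combination Real.cos k.re ^ 2 * Real.cosh_sq k.im
    + Real.sinh k.im ^ 2 * Real.sin_sq_add_cos_sq k.re

lemma norm_complex_sin_sq (k : ℂ) :
    ‖Complex.sin k‖ ^ 2 = Real.sin k.re ^ 2 + Real.sinh k.im ^ 2 := by
  have h := norm_complex_cos_sq ((Real.pi / 2 : ℝ) - k)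
  rw [Complex.sub_re, Complex.sub_im, Complex.ofReal_re, Complex.ofReal_im, zero_sub,
    Real.cos_pi_div_two_sub, Real.sinh_neg, neg_sq] at h
  simpa [Complex.cos_pi_div_two_sub] using h

lemma one_add_sinh_sq_le_exp_abs_sq (x : ℝ) : 1 + Real.sinh x ^ 2 ≤ Real.exp |x| ^ 2 := by
  rw [← Real.cosh_sq', ← Real.cosh_abs]
  gcongr
  rw [Real.cosh_eq]
  linarith [Real.exp_le_exp.2 (neg_le_self (abs_nonneg x))]

lemma norm_complex_cos_le_exp (k : ℂ) : ‖Complex.cos k‖ ≤ Real.exp |k.im| := by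
  refine le_of_sq_le_sq ?_ (Real.exp_pos _).le
  rw [norm_complex_cos_sq]
  linarith [Real.cos_sq_le_one k.re, one_add_sinh_sq_le_exp_abs_sq k.im]

lemma norm_complex_sin_le_exp (k : ℂ) : ‖Complex.sin k‖ ≤ Real.exp |k.im| := by
  refine le_of_sq_le_sq ?_ (Real.exp_pos _).le
  rw [norm_complex_sin_sq]
  linarith [Real.sin_sq_le_one k.re, one_add_sinh_sq_le_exp_abs_sq k.im]

lemma exp_div_four_le_sinh {x : ℝ} (hx : 1 ≤ x) : Real.exp x / 4 ≤ Real.sinh x := by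
  have hexp : 2 ≤ Real.exp x := by linarith [Real.add_one_le_exp x]
  have hexp_neg : Real.exp (-x) ≤ 1 := Real.exp_le_one_iff.2 (by linarith)
  rw [Real.sinh_eq]
  linarith

lemma exp_div_four_le_norm_complex_cos {k : ℂ} {n : ℕ} (hn : n ≠ 0)
    (hk : max |k.re| |k.im| = n * π) : Real.exp |k.im| / 4 ≤ ‖Complex.cos k‖ := by
  refine le_of_sq_le_sq ?_ (norm_nonneg _)
  rw [norm_complex_cos_sq]
  rcases max_choice |k.re| |k.im| with hmax | hmax <;> rw [hmax] at hk
  · have hsin : Real.sin k.re = 0 := by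
      rcases (abs_eq (by positivity)).1 hk with h | h <;> simp [h]
    have hcosh : Real.exp |k.im| / 4 ≤ Real.cosh k.im := by
      rw [← Real.cosh_abs, Real.cosh_eq]
      linarith [Real.exp_pos |k.im|, Real.exp_pos (-|k.im|)]
    calc (Real.exp |k.im| / 4) ^ 2 ≤ Real.cosh k.im ^ 2 := by gcongr
      _ = Real.cos k.re ^ 2 + Real.sinh k.im ^ 2 := by
        rw [Real.cosh_sq', Real.cos_sq', hsin]
        ring
  · have him : 1 ≤ |k.im| := by
      have : (1 : ℝ) ≤ n := mod_cast Nat.one_le_iff_ne_zero.2 hn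
      rw [hk]
      nlinarith [Real.pi_gt_three]
    have := exp_div_four_le_sinh him
    calc (Real.exp |k.im| / 4) ^ 2 ≤ Real.sinh |k.im| ^ 2 := by gcongr
      _ = Real.sinh k.im ^ 2 := by rw [← Real.abs_sinh, sq_abs]
      _ ≤ _ := le_add_of_nonneg_left (sq_nonneg _)

lemma natCast_le_norm_of_max_eq {k : ℂ} {n : ℕ} (hk : max |k.re| |k.im| = n * π) : (n : ℝ) ≤ ‖k‖ :=
  calc (n : ℝ) ≤ n * π := le_mul_of_one_le_right (by positivity) (by linarith [Real.pi_gt_three])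
    _ = max |k.re| |k.im| := hk.symm
    _ ≤ ‖k‖ := max_le (Complex.abs_re_le_norm k) (Complex.abs_im_le_norm k)

lemma eq_zero_of_norm_le_on_squares {F : Type*} [NormedAddCommGroup F] [NormedSpace ℂ F]
    {f : ℂ → F} (hf : Differentiable ℂ f) {R ε : ℕ → ℝ} (hR : Tendsto R atTop atTop)
    (hε : Tendsto ε atTop (𝓝 0))
    (hle : ∀ᶠ n in atTop, ∀ k : ℂ, max |k.re| |k.im| = R n → ‖f k‖ ≤ ε n) : f = 0 := by
  funext k
  have hsup_cont : Continuous fun w : ℂ => max |w.re| |w.im| := by fun_prop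
  refine norm_le_zero_iff.1 (ge_of_tendsto hε ?_)
  filter_upwards [hle, hR.eventually_gt_atTop (max |k.re| |k.im|)] with n hn hkn
  have hbdd : Bornology.IsBounded {w : ℂ | max |w.re| |w.im| < R n} := by
    refine Bornology.IsBounded.subset (Metric.isBounded_ball (x := 0) (r := R n + R n))
      fun w hw => ?_
    have := max_lt_iff.1 (Set.mem_ofPred_eq ▸ hw)
    simpa using (Complex.norm_le_abs_re_add_abs_im w).trans_lt (add_lt_add this.1 this.2)
  refine Complex.norm_le_of_forall_mem_frontier_norm_le hbdd hf.diffContOnCl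
    (fun w hw => hn w ?_) (subset_closure hkn)
  exact frontier_lt_subset_eq hsup_cont continuous_const hw

lemma meromorphicOrderAt_nonneg_of_tendsto_sub_mul {F : ℂ → ℂ} {c : ℂ}
    (hF : MeromorphicAt F c) (hlim : Tendsto (fun z => (z - c) * F z) (𝓝[≠] c) (𝓝 0)) :
    0 ≤ meromorphicOrderAt F c := by
  have hsub : AnalyticAt ℂ (fun z => z - c) c := by fun_prop
  have horder : meromorphicOrderAt (fun z => z - c) c = (1 : ℤ) :=
    (meromorphicOrderAt_eq_int_iff hsub.meromorphicAt).2
      ⟨fun _ => 1, analyticAt_const, one_ne_zero, by simp⟩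
  have hpos := (tendsto_zero_iff_meromorphicOrderAt_pos (hsub.meromorphicAt.mul hF)).1 hlim
  rw [meromorphicOrderAt_mul hsub.meromorphicAt hF, horder] at hpos
  cases h : meromorphicOrderAt F c with
  | top => exact le_top
  | coe m =>
    rw [h] at hpos
    norm_cast at hpos ⊢
    lia

lemma exists_differentiable_of_meromorphic_of_tendsto_sub_mul {F : ℂ → ℂ}
    (hF : ∀ c, MeromorphicAt F c)
    (hlim : ∀ c, Tendsto (fun z => (z - c) * F z) (𝓝[≠] c) (𝓝 0)) :
    ∃ G : ℂ → ℂ, Differentiable ℂ G ∧ ∀ c, AnalyticAt ℂ F c → G c = F c := by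
  have hF' : MeromorphicOn F Set.univ := fun c _ => hF c
  refine ⟨toMeromorphicNFOn F Set.univ, fun c => ?_, fun c hc => ?_⟩
  · refine AnalyticAt.differentiableAt ?_
    have hNF := meromorphicNFOn_toMeromorphicNFOn F Set.univ (Set.mem_univ c)
    rw [← hNF.meromorphicOrderAt_nonneg_iff_analyticAt,
      meromorphicOrderAt_toMeromorphicNFOn hF' (Set.mem_univ c)]
    exact meromorphicOrderAt_nonneg_of_tendsto_sub_mul (hF c) (hlim c)
  · rw [toMeromorphicNFOn_eq_toMeromorphicNFAt hF' (Set.mem_univ c),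
      toMeromorphicNFAt_eq_self.2 hc.meromorphicNFAt]

end ComplexAnalysis

section Solutions

/-- `y` solves `y'' + (l + q) y = 0` on `[0, 1]`, with `y'` its derivative. Derivatives are
two-sided, also at the end points, as in `IsDNEigenfun`. -/
def IsSolution (q : ℝ → ℝ) (l : ℂ) (y y' : ℝ → ℂ) : Prop :=
  ∀ z ∈ Set.Icc (0 : ℝ) 1, HasDerivAt y (y' z) z ∧ HasDerivAt y' (-(l + q z) * y z) z

variable {q : ℝ → ℝ} {l m : ℂ} {y y' u u' : ℝ → ℂ} {x₀ z : ℝ}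

namespace IsSolution

lemma continuousOn (hy : IsSolution q l y y') : ContinuousOn y (Set.Icc 0 1) :=
  fun z hz => (hy z hz).1.continuousAt.continuousWithinAt

lemma wronskian_sub_eq (hy : IsSolution q l y y') (hu : IsSolution q m u u')
    (hx₀ : x₀ ∈ Set.Icc (0 : ℝ) 1) (hz : z ∈ Set.Icc (0 : ℝ) 1) :
    (y z * u' z - y' z * u z) - (y x₀ * u' x₀ - y' x₀ * u x₀) =
      (l - m) * ∫ t in x₀..z, y t * u t := by
  have hsub : Set.uIcc x₀ z ⊆ Set.Icc 0 1 := Set.uIcc_subset_Icc hx₀ hz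
  rw [← intervalIntegral.integral_const_mul]
  symm
  refine intervalIntegral.integral_eq_sub_of_hasDerivAt (f := fun t => y t * u' t - y' t * u t)
    (fun t ht => ?_) ?_
  · obtain ⟨hy₁, hy₂⟩ := hy t (hsub ht)
    obtain ⟨hu₁, hu₂⟩ := hu t (hsub ht)
    exact ((hy₁.mul hu₂).sub (hy₂.mul hu₁)).congr_deriv (by ring)
  · exact (continuousOn_const.mul
      ((hy.continuousOn.mono hsub).mul (hu.continuousOn.mono hsub))).intervalIntegrable

lemma wronskian_eq (hy : IsSolution q l y y') (hu : IsSolution q l u u')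
    (hx₀ : x₀ ∈ Set.Icc (0 : ℝ) 1) (hz : z ∈ Set.Icc (0 : ℝ) 1) :
    y z * u' z - y' z * u z = y x₀ * u' x₀ - y' x₀ * u x₀ := by
  simpa [sub_eq_zero] using hy.wronskian_sub_eq hu hx₀ hz

lemma const_mul (hy : IsSolution q l y y') (c : ℂ) :
    IsSolution q l (fun z => c * y z) (fun z => c * y' z) := fun z hz =>
  ⟨(hy z hz).1.const_mul c, ((hy z hz).2.const_mul c).congr_deriv (by ring)⟩

lemma conj (hy : IsSolution q l y y') :
    IsSolution q (starRingEnd ℂ l) (fun z => starRingEnd ℂ (y z))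
      (fun z => starRingEnd ℂ (y' z)) := fun z hz =>
  ⟨Complex.conjCLE.toContinuousLinearMap.hasFDerivAt.comp_hasDerivAt z (hy z hz).1,
    (Complex.conjCLE.toContinuousLinearMap.hasFDerivAt.comp_hasDerivAt z (hy z hz).2).congr_deriv
      (by simp)⟩

lemma ne_zero_of_im_ne_zero (hy : IsSolution q l y y') (hl : l.im ≠ 0) (h₁ : y 1 ≠ 0)
    (h₁' : y' 1 = 0) (hz : z ∈ Set.Icc (0 : ℝ) 1) : y z ≠ 0 := by
  intro hzero
  have hz1 : z < 1 := lt_of_le_of_ne hz.2 fun h => h₁ (h ▸ hzero)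
  have hgreen := hy.wronskian_sub_eq hy.conj hz ⟨zero_le_one, le_rfl⟩
  have hlconj : l - starRingEnd ℂ l ≠ 0 := by
    rw [Complex.sub_conj]
    simpa using hl
  have hnorm : ∫ t in z..1, ‖y t‖ ^ 2 = 0 := by
    simp only [h₁', hzero, map_zero, mul_zero, zero_mul, sub_zero, Complex.mul_conj',
      eq_comm (a := (0 : ℂ)), mul_eq_zero, hlconj, false_or] at hgreen
    rw [← Complex.ofReal_eq_zero, ← intervalIntegral.integral_ofReal]
    exact_mod_cast hgreen
  refine (intervalIntegral.integral_pos hz1 ?_ (fun _ _ => by positivity)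
    ⟨1, ⟨hz.2, le_rfl⟩, by positivity⟩).ne' hnorm
  exact (hy.continuousOn.mono (Set.Icc_subset_Icc hz.1 le_rfl)).norm.pow 2

end IsSolution

/-- `y l`, `l ∈ ℂ`, are the solutions of `y'' + (l + q) y = 0` with Cauchy data
`y(x₀) = a`, `y'(x₀) = b` independent of `l`; they depend holomorphically on `l`. -/
structure IsSolutionFamily (q : ℝ → ℝ) (x₀ : ℝ) (a b : ℂ) (y y' : ℂ → ℝ → ℂ) : Prop where
  isSolution : ∀ l, IsSolution q l (y l) (y' l)
  initial : ∀ l, y l x₀ = a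
  initial_deriv : ∀ l, y' l x₀ = b
  differentiable : ∀ z ∈ Set.Icc (0 : ℝ) 1, Differentiable ℂ fun l => y l z
  continuous : Continuous (Function.uncurry y)

lemma exists_isSolutionFamily (hq : ContinuousOn q (Set.Icc 0 1)) (hx₀ : x₀ ∈ Set.Icc (0 : ℝ) 1)
    (a b : ℂ) : ∃ y y', IsSolutionFamily q x₀ a b y y' := by
  have hq' : Continuous fun z : Set.Icc (0 : ℝ) 1 => (q z : ℂ) :=
    Complex.continuous_ofReal.comp (continuousOn_iff_continuous_domRestrict.1 hq)
  let P : ℂ × ℂ →L[ℂ] ℂ × ℂ := .inl ℂ ℂ ℂ ∘L .snd ℂ ℂ ℂ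
  let N : ℂ × ℂ →L[ℂ] ℂ × ℂ := .inr ℂ ℂ ℂ ∘L .fst ℂ ℂ ℂ
  let A₀ : C(Set.Icc (0 : ℝ) 1, ℂ × ℂ →L[ℂ] ℂ × ℂ) := ⟨fun z => P - (q z : ℂ) • N, by fun_prop⟩
  let A₁ : C(Set.Icc (0 : ℝ) 1, ℂ × ℂ →L[ℂ] ℂ × ℂ) := .const _ N
  have hA : Differentiable ℂ fun l : ℂ => A₀ - l • A₁ := by
    intro l
    have hsmul := (differentiableAt_id (𝕜 := ℂ) (x := l)).smul_const A₁
    have hsub := hsmul.const_sub A₀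
    exact hsub
  obtain ⟨w, hw_cont, hw₀, hw, hw_diff⟩ :=
    exists_linear_ode_solution_differentiable zero_le_one ⟨x₀, hx₀⟩ hA (a, b)
  refine ⟨fun l z => (w l z).1, fun l z => (w l z).2, fun l z hz => ?_, fun l => by simp [hw₀ l],
    fun l => by simp [hw₀ l], fun z hz => (hw_diff z hz).fst, hw_cont.fst⟩
  refine ⟨(hasFDerivAt_fst.comp_hasDerivAt z (hw l z hz)).congr_deriv ?_,
    (hasFDerivAt_snd.comp_hasDerivAt z (hw l z hz)).congr_deriv ?_⟩
  · simp [A₀, A₁, P, N]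
  · have hcoeff : -(q z * (w l z).1) - l * (w l z).1 = -(l + q z) * (w l z).1 := by ring
    simpa [A₀, A₁, P, N] using hcoeff

lemma IsSolution.eqOn_of_eq_at (hq : ContinuousOn q (Set.Icc 0 1)) (hy : IsSolution q l y y')
    (hu : IsSolution q l u u') (hx₀ : x₀ ∈ Set.Icc (0 : ℝ) 1) (h : y x₀ = u x₀)
    (h' : y' x₀ = u' x₀) : Set.EqOn y u (Set.Icc 0 1) := by
  obtain ⟨c, c', hc⟩ := exists_isSolutionFamily hq hx₀ 1 0
  obtain ⟨s, s', hs⟩ := exists_isSolutionFamily hq hx₀ 0 1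
  have hfund : ∀ {v v' : ℝ → ℂ}, IsSolution q l v v' →
      ∀ z ∈ Set.Icc (0 : ℝ) 1, v z = v x₀ * c l z + v' x₀ * s l z := by
    intro v v' hv z hz
    have hvc := hv.wronskian_eq (hc.isSolution l) hx₀ hz
    have hvs := hv.wronskian_eq (hs.isSolution l) hx₀ hz
    have hcs := (hc.isSolution l).wronskian_eq (hs.isSolution l) hx₀ hz
    rw [hc.initial, hc.initial_deriv] at hvc hcs
    rw [hs.initial, hs.initial_deriv] at hvs hcs
    linear_combination c l z * hvs - s l z * hvc - v z * hcs
  intro z hz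
  rw [hfund hy z hz, hfund hu z hz, h, h']

end Solutions

section HighEnergy

/-- The solution of `y'' + k² y = 0` with `y(x₀) = a` and `y'(x₀) = b`, for `k ≠ 0`. -/
noncomputable def freeSolution (k : ℂ) (x₀ : ℝ) (a b : ℂ) (z : ℝ) : ℂ :=
  Complex.cos (k * (z - x₀)) * a + Complex.sin (k * (z - x₀)) / k * b

variable {q : ℝ → ℝ} {k : ℂ} {y y' : ℝ → ℂ} {x₀ z : ℝ}

lemma abs_im_mul_sub (k : ℂ) (z x₀ : ℝ) : |(k * (z - x₀)).im| = |k.im| * |z - x₀| := by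
  rw [← Complex.ofReal_sub, Complex.im_mul_ofReal, abs_mul]

namespace IsSolution

lemma hasDerivAt_freeSolution (hk : k ≠ 0) (hy : IsSolution q (k ^ 2) y y') {t : ℝ}
    (ht : t ∈ Set.Icc (0 : ℝ) 1) :
    HasDerivAt (fun t => freeSolution k t (y t) (y' t) z)
      (-(Complex.sin (k * (z - t)) / k * (q t * y t))) t := by
  obtain ⟨hy₁, hy₂⟩ := hy t ht
  have hphase : HasDerivAt (fun t : ℝ => k * ((z : ℂ) - t)) (-k) t := by
    simpa using ((Complex.ofRealCLM.hasDerivAt (x := t)).const_sub (z : ℂ)).const_mul k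
  have hcos := (Complex.hasDerivAt_cos (k * ((z : ℂ) - t))).comp t hphase
  have hsin := (Complex.hasDerivAt_sin (k * ((z : ℂ) - t))).comp t hphase
  refine ((hcos.mul hy₁).add ((hsin.div_const k).mul hy₂)).congr_deriv ?_
  simp only [Function.comp_apply]
  field_simp
  ring

lemma sub_freeSolution_eq_neg_integral (hq : ContinuousOn q (Set.Icc 0 1)) (hk : k ≠ 0)
    (hy : IsSolution q (k ^ 2) y y') (hx₀ : x₀ ∈ Set.Icc (0 : ℝ) 1)
    (hz : z ∈ Set.Icc (0 : ℝ) 1) :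
    y z - freeSolution k x₀ (y x₀) (y' x₀) z =
      -∫ t in x₀..z, Complex.sin (k * (z - t)) / k * (q t * y t) := by
  have hsub : Set.uIcc x₀ z ⊆ Set.Icc 0 1 := Set.uIcc_subset_Icc hx₀ hz
  have hend : freeSolution k z (y z) (y' z) z = y z := by simp [freeSolution]
  have hint : IntervalIntegrable (fun t : ℝ => -(Complex.sin (k * (z - t)) / k * (q t * y t)))
      volume x₀ z := by
    refine ContinuousOn.intervalIntegrable ?_
    have hq_cont := Complex.continuous_ofReal.comp_continuousOn (hq.mono hsub)
    have hy_cont := hy.continuousOn.mono hsub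
    fun_prop
  rw [← intervalIntegral.integral_neg, intervalIntegral.integral_eq_sub_of_hasDerivAt
    (fun t ht => hy.hasDerivAt_freeSolution hk (hsub ht)) hint, hend]

variable {M : ℝ} (hM : ∀ z ∈ Set.Icc (0 : ℝ) 1, |q z| ≤ M)
include hM

lemma norm_sub_freeSolution_le (hq : ContinuousOn q (Set.Icc 0 1)) (hk : k ≠ 0)
    (hy : IsSolution q (k ^ 2) y y') (hx₀ : x₀ ∈ Set.Icc (0 : ℝ) 1) {U : ℝ}
    (hU : ∀ z ∈ Set.Icc (0 : ℝ) 1, ‖y z‖ ≤ U * Real.exp (|k.im| * |z - x₀|))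
    (hz : z ∈ Set.Icc (0 : ℝ) 1) :
    ‖y z - freeSolution k x₀ (y x₀) (y' x₀) z‖ ≤
      M * U / ‖k‖ * Real.exp (|k.im| * |z - x₀|) := by
  have hM₀ : 0 ≤ M := (abs_nonneg _).trans (hM z hz)
  have hU₀ : 0 ≤ U := by simpa using (norm_nonneg _).trans (hU x₀ hx₀)
  have hbound : ∀ t ∈ Set.uIoc x₀ z, ‖Complex.sin (k * (z - t)) / k * (q t * y t)‖ ≤
      M * U / ‖k‖ * Real.exp (|k.im| * |z - x₀|) := by
    intro t ht
    have ht' := Set.uIoc_subset_uIcc ht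
    have htI : t ∈ Set.Icc (0 : ℝ) 1 := Set.uIcc_subset_Icc hx₀ hz ht'
    have hsin : ‖Complex.sin (k * (z - t))‖ ≤ Real.exp (|k.im| * |z - t|) :=
      abs_im_mul_sub k z t ▸ norm_complex_sin_le_exp _
    have hadd : |z - t| + |t - x₀| = |z - x₀| :=
      dist_add_dist_of_mem_segment (segment_eq_uIcc z x₀ ▸ Set.uIcc_comm x₀ z ▸ ht')
    rw [norm_mul, norm_div, norm_mul, Complex.norm_real, Real.norm_eq_abs]
    calc _ ≤ Real.exp (|k.im| * |z - t|) / ‖k‖ * (M * (U * Real.exp (|k.im| * |t - x₀|))) := by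
          gcongr
          exacts [hM t htI, hU t htI]
      _ = _ := by
          rw [← hadd, mul_add, Real.exp_add]
          ring
  rw [hy.sub_freeSolution_eq_neg_integral hq hk hx₀ hz, norm_neg]
  refine (intervalIntegral.norm_integral_le_of_norm_le_const hbound).trans ?_
  exact mul_le_of_le_one_right (by positivity) (by
    simpa [Real.dist_eq] using Real.dist_le_of_mem_Icc hz hx₀)

lemma norm_le_of_norm_freeSolution_le (hq : ContinuousOn q (Set.Icc 0 1)) (hk : k ≠ 0)
    (hkM : 2 * M ≤ ‖k‖) (hy : IsSolution q (k ^ 2) y y') (hx₀ : x₀ ∈ Set.Icc (0 : ℝ) 1) {A : ℝ}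
    (hA : ∀ z ∈ Set.Icc (0 : ℝ) 1,
      ‖freeSolution k x₀ (y x₀) (y' x₀) z‖ ≤ A * Real.exp (|k.im| * |z - x₀|))
    (hz : z ∈ Set.Icc (0 : ℝ) 1) : ‖y z‖ ≤ 2 * A * Real.exp (|k.im| * |z - x₀|) := by
  let g : ℝ → ℝ := fun z => ‖y z‖ / Real.exp (|k.im| * |z - x₀|)
  have hg : ContinuousOn g (Set.Icc 0 1) :=
    hy.continuousOn.norm.div (by fun_prop) fun _ _ => (Real.exp_pos _).ne'
  obtain ⟨x, hx, hmax⟩ := isCompact_Icc.exists_isMaxOn ⟨z, hz⟩ hg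
  have hU : ∀ t ∈ Set.Icc (0 : ℝ) 1, ‖y t‖ ≤ g x * Real.exp (|k.im| * |t - x₀|) := fun t ht =>
    (div_le_iff₀ (Real.exp_pos _)).1 (hmax ht)
  have hgx : g x ≤ A + M * g x / ‖k‖ := by
    refine (div_le_iff₀ (Real.exp_pos _)).2 ?_
    calc ‖y x‖ ≤ ‖freeSolution k x₀ (y x₀) (y' x₀) x‖ +
          ‖y x - freeSolution k x₀ (y x₀) (y' x₀) x‖ := norm_le_norm_add_norm_sub' _ _
      _ ≤ _ := by
        rw [add_mul]
        exact add_le_add (hA x hx) (hy.norm_sub_freeSolution_le hM hq hk hx₀ hU hx)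
  have hhalf : M * g x / ‖k‖ ≤ g x / 2 := by
    have hg₀ : 0 ≤ g x := by positivity
    rw [div_le_iff₀ (norm_pos_iff.2 hk)]
    nlinarith
  refine (hU z hz).trans ?_
  gcongr
  linarith

end IsSolution

end HighEnergy

section BoundarySolutions

/-- The two solution families attached to the boundary conditions: `φ l` satisfies the Neumann
condition at `1`, normalized by `φ l 1 = 1`, and `s l` the Dirichlet condition at `0`, normalized
by `s' l 0 = 1`. -/
structure BoundarySolutions (q : ℝ → ℝ) where
  φ : ℂ → ℝ → ℂ
  φ' : ℂ → ℝ → ℂ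
  s : ℂ → ℝ → ℂ
  s' : ℂ → ℝ → ℂ
  isSolutionFamily_φ : IsSolutionFamily q 1 1 0 φ φ'
  isSolutionFamily_s : IsSolutionFamily q 0 0 1 s s'

variable {q : ℝ → ℝ} {c l : ℂ} {z : ℝ}

lemma nonempty_boundarySolutions (hq : ContinuousOn q (Set.Icc 0 1)) :
    Nonempty (BoundarySolutions q) := by
  obtain ⟨φ, φ', hφ⟩ := exists_isSolutionFamily hq (x₀ := 1) (by simp) 1 0
  obtain ⟨s, s', hs⟩ := exists_isSolutionFamily hq (x₀ := 0) (by simp) 0 1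
  exact ⟨⟨φ, φ', s, s', hφ, hs⟩⟩

namespace BoundarySolutions

/-- The characteristic function of the Dirichlet–Neumann problem, whose zeros are the
eigenvalues. -/
def charFun (D : BoundarySolutions q) (l : ℂ) : ℂ := D.φ l 0

/-- The norming constant `∫₀¹ φ(l, z)² dz`; the square is not a modulus. -/
noncomputable def normingConstant (D : BoundarySolutions q) (l : ℂ) : ℂ :=
  ∫ z in (0 : ℝ)..1, D.φ l z ^ 2

/-- The Weyl solution: the solution vanishing at `0` whose Wronskian with `φ` is `1`. As a function
of `l` it has poles at the zeros of `charFun`, where Lean gives it the value `0`. -/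
noncomputable def weylSolution (D : BoundarySolutions q) (l : ℂ) (z : ℝ) : ℂ :=
  D.s l z / D.charFun l

section Estimates

variable {k : ℂ} {M : ℝ} (hM : ∀ z ∈ Set.Icc (0 : ℝ) 1, |q z| ≤ M) (D : BoundarySolutions q)
include hM

lemma norm_φ_le (hq : ContinuousOn q (Set.Icc 0 1)) (hk : k ≠ 0) (hkM : 2 * M ≤ ‖k‖)
    (hz : z ∈ Set.Icc (0 : ℝ) 1) : ‖D.φ (k ^ 2) z‖ ≤ 2 * Real.exp (|k.im| * |z - 1|) := by
  have hφ := D.isSolutionFamily_φ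
  have hfree : ∀ z : ℝ, ‖freeSolution k 1 (D.φ (k ^ 2) 1) (D.φ' (k ^ 2) 1) z‖ ≤
      1 * Real.exp (|k.im| * |z - 1|) := fun z => by
    rw [freeSolution, hφ.initial, hφ.initial_deriv, mul_one, mul_zero, add_zero, one_mul,
      ← abs_im_mul_sub]
    exact norm_complex_cos_le_exp _
  simpa using (hφ.isSolution _).norm_le_of_norm_freeSolution_le hM hq hk hkM (x₀ := 1) (by simp)
    (fun z _ => hfree z) hz

lemma norm_s_le (hq : ContinuousOn q (Set.Icc 0 1)) (hk : k ≠ 0) (hkM : 2 * M ≤ ‖k‖)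
    (hz : z ∈ Set.Icc (0 : ℝ) 1) : ‖D.s (k ^ 2) z‖ ≤ 2 / ‖k‖ * Real.exp (|k.im| * |z|) := by
  have hs := D.isSolutionFamily_s
  have hfree : ∀ z : ℝ, ‖freeSolution k 0 (D.s (k ^ 2) 0) (D.s' (k ^ 2) 0) z‖ ≤
      1 / ‖k‖ * Real.exp (|k.im| * |z - 0|) := fun z => by
    rw [freeSolution, hs.initial, hs.initial_deriv, mul_zero, zero_add, mul_one, norm_div,
      ← abs_im_mul_sub, one_div_mul_eq_div]
    gcongr
    exact norm_complex_sin_le_exp _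
  simpa [div_eq_mul_inv] using (hs.isSolution _).norm_le_of_norm_freeSolution_le hM hq hk hkM
    (x₀ := 0) (by simp) (fun z _ => hfree z) hz

lemma norm_charFun_sub_cos_le (hq : ContinuousOn q (Set.Icc 0 1)) (hk : k ≠ 0)
    (hkM : 2 * M ≤ ‖k‖) :
    ‖D.charFun (k ^ 2) - Complex.cos k‖ ≤ M * 2 / ‖k‖ * Real.exp |k.im| := by
  have hφ := D.isSolutionFamily_φ
  simpa [freeSolution, hφ.initial, hφ.initial_deriv, charFun] using
    (hφ.isSolution (k ^ 2)).norm_sub_freeSolution_le hM hq hk (x₀ := 1) (by simp)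
      (fun z hz => D.norm_φ_le hM hq hk hkM hz) (z := 0) (by simp)

end Estimates

end BoundarySolutions

end BoundarySolutions

section WeylSolution

open Filter Topology

variable {q q₁ q₂ : ℝ → ℝ} {c l k : ℂ} {z μ : ℝ}

namespace BoundarySolutions

lemma differentiable_charFun (D : BoundarySolutions q) : Differentiable ℂ D.charFun :=
  D.isSolutionFamily_φ.differentiable 0 (by simp)

lemma im_eq_zero_of_charFun_eq_zero (D : BoundarySolutions q) (hl : D.charFun l = 0) :
    l.im = 0 := by
  by_contra him
  have hφ := D.isSolutionFamily_φ
  exact (hφ.isSolution l).ne_zero_of_im_ne_zero him (by simp [hφ.initial l])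
    (hφ.initial_deriv l) (z := 0) (by simp) hl

lemma φ_ofReal_eq_re (hq : ContinuousOn q (Set.Icc 0 1)) (D : BoundarySolutions q) (μ : ℝ)
    (hz : z ∈ Set.Icc (0 : ℝ) 1) : D.φ μ z = ((D.φ μ z).re : ℂ) := by
  have hφ := D.isSolutionFamily_φ
  have hconj := (hφ.isSolution μ).conj
  rw [Complex.conj_ofReal] at hconj
  exact (Complex.conj_eq_iff_re.1 (hconj.eqOn_of_eq_at hq (hφ.isSolution μ) (x₀ := 1) (by simp)
    (by simp [hφ.initial]) (by simp [hφ.initial_deriv]) hz)).symm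

lemma normingConstant_ofReal (hq : ContinuousOn q (Set.Icc 0 1)) (D : BoundarySolutions q)
    (μ : ℝ) : D.normingConstant μ = ((∫ z in (0 : ℝ)..1, (D.φ μ z).re ^ 2 : ℝ) : ℂ) := by
  rw [← intervalIntegral.integral_ofReal]
  refine intervalIntegral.integral_congr fun z hz => ?_
  rw [Set.uIcc_of_le zero_le_one] at hz
  simp only [Complex.ofReal_pow, ← D.φ_ofReal_eq_re hq μ hz]

lemma integral_re_φ_sq_pos (D : BoundarySolutions q) (l : ℂ) :
    0 < ∫ z in (0 : ℝ)..1, (D.φ l z).re ^ 2 := by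
  have hφ := D.isSolutionFamily_φ
  refine intervalIntegral.integral_pos one_pos ?_ (fun _ _ => sq_nonneg _)
    ⟨1, by simp, by simp [hφ.initial]⟩
  exact (Complex.continuous_re.comp_continuousOn (hφ.isSolution l).continuousOn).pow 2

lemma normingConstant_ne_zero (hq : ContinuousOn q (Set.Icc 0 1)) (D : BoundarySolutions q)
    (hc : D.charFun c = 0) : D.normingConstant c ≠ 0 := by
  obtain ⟨μ, rfl⟩ : ∃ μ : ℝ, (μ : ℂ) = c :=
    ⟨c.re, Complex.ext rfl (D.im_eq_zero_of_charFun_eq_zero hc).symm⟩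
  rw [D.normingConstant_ofReal hq μ]
  exact_mod_cast (D.integral_re_φ_sq_pos μ).ne'

lemma φ_eq_mul_s (hq : ContinuousOn q (Set.Icc 0 1)) (D : BoundarySolutions q)
    (hc : D.charFun c = 0) (hz : z ∈ Set.Icc (0 : ℝ) 1) : D.φ c z = D.φ' c 0 * D.s c z := by
  have hs := D.isSolutionFamily_s
  refine (D.isSolutionFamily_φ.isSolution c).eqOn_of_eq_at hq
    ((hs.isSolution c).const_mul (D.φ' c 0)) (x₀ := 0) (by simp) ?_ ?_ hz
  · rw [hs.initial, mul_zero]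
    exact hc
  · rw [hs.initial_deriv, mul_one]

lemma neg_charFun_mul_deriv_φ_eq (D : BoundarySolutions q) (hc : D.charFun c = 0) (l : ℂ) :
    -(D.charFun l * D.φ' c 0) = (l - c) * ∫ z in (0 : ℝ)..1, D.φ l z * D.φ c z := by
  have hφ := D.isSolutionFamily_φ
  rw [← (hφ.isSolution l).wronskian_sub_eq (hφ.isSolution c) (by simp) (by simp),
    hφ.initial_deriv, hφ.initial_deriv, show D.φ c 0 = 0 from hc, charFun]
  ring

lemma continuous_integral_φ_mul (D : BoundarySolutions q) (c : ℂ) :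
    Continuous fun l => ∫ z in (0 : ℝ)..1, D.φ l z * D.φ c z := by
  have hφ := D.isSolutionFamily_φ.continuous
  refine intervalIntegral.continuous_parametric_intervalIntegral_of_continuous
    (f := fun l z => D.φ l z * D.φ c z) (s := fun _ => 1) ?_ continuous_const
  exact hφ.mul (hφ.comp (continuous_const.prodMk continuous_snd))

/- By Green's identity `(l - c) / charFun l` extends continuously to `l = c`, so the pole is simple
and its residue is governed by the norming constant. -/
lemma tendsto_sub_mul_weylSolution (hq : ContinuousOn q (Set.Icc 0 1)) (D : BoundarySolutions q)
    (hc : D.charFun c = 0) (hz : z ∈ Set.Icc (0 : ℝ) 1) :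
    Tendsto (fun l => (l - c) * D.weylSolution l z) (𝓝[≠] c)
      (𝓝 (-D.φ c z / D.normingConstant c)) := by
  let I : ℂ → ℂ := fun l => ∫ z in (0 : ℝ)..1, D.φ l z * D.φ c z
  have hI : Tendsto I (𝓝[≠] c) (𝓝 (I c)) :=
    (D.continuous_integral_φ_mul c).continuousAt.mono_left nhdsWithin_le_nhds
  have hIc : I c = D.normingConstant c := by simp only [I, normingConstant, sq]
  have hIc₀ : I c ≠ 0 := hIc ▸ D.normingConstant_ne_zero hq hc
  have hs : Tendsto (fun l => -(D.φ' c 0 * D.s l z)) (𝓝[≠] c) (𝓝 (-D.φ c z)) := by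
    rw [D.φ_eq_mul_s hq hc hz]
    have hs_cont := (D.isSolutionFamily_s.differentiable z hz).continuous
    exact ((continuous_const.mul hs_cont).neg.tendsto c).mono_left nhdsWithin_le_nhds
  rw [← hIc]
  refine (hs.div hI hIc₀).congr' ?_
  filter_upwards [self_mem_nhdsWithin, hI.eventually_ne hIc₀] with l hlc hIl
  have hgreen := D.neg_charFun_mul_deriv_φ_eq hc l
  have hcharFun : D.charFun l ≠ 0 := fun h =>
    mul_ne_zero (sub_ne_zero.2 hlc) hIl (by rw [← hgreen, h, zero_mul, neg_zero])
  rw [weylSolution, Pi.div_apply, mul_div_assoc', div_eq_div_iff hIl hcharFun]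
  linear_combination D.s l z * hgreen

lemma analyticAt_weylSolution (D : BoundarySolutions q) (hc : D.charFun c ≠ 0)
    (hz : z ∈ Set.Icc (0 : ℝ) 1) : AnalyticAt ℂ (fun l => D.weylSolution l z) c :=
  ((D.isSolutionFamily_s.differentiable z hz).analyticAt c).div
    (D.differentiable_charFun.analyticAt c) hc

lemma meromorphicAt_weylSolution (D : BoundarySolutions q) (c : ℂ)
    (hz : z ∈ Set.Icc (0 : ℝ) 1) : MeromorphicAt (fun l => D.weylSolution l z) c :=
  ((D.isSolutionFamily_s.differentiable z hz).analyticAt c).meromorphicAt.div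
    (D.differentiable_charFun.analyticAt c).meromorphicAt

lemma tendsto_sub_mul_weylSolution_of_charFun_ne_zero (D : BoundarySolutions q)
    (hc : D.charFun c ≠ 0) (hz : z ∈ Set.Icc (0 : ℝ) 1) :
    Tendsto (fun l => (l - c) * D.weylSolution l z) (𝓝[≠] c) (𝓝 0) := by
  have hcont : ContinuousAt (fun l => (l - c) * D.weylSolution l z) c :=
    (continuousAt_id.sub continuousAt_const).mul (D.analyticAt_weylSolution hc hz).continuousAt
  simpa using hcont.tendsto.mono_left nhdsWithin_le_nhds

section Squares

variable {n : ℕ} {M₁ M₂ : ℝ} (hn : n ≠ 0) (hk : max |k.re| |k.im| = n * π)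
include hn hk

lemma exp_div_eight_le_norm_charFun (hq : ContinuousOn q₁ (Set.Icc 0 1))
    (hM : ∀ z ∈ Set.Icc (0 : ℝ) 1, |q₁ z| ≤ M₁) (hMn : 16 * M₁ ≤ n) (D : BoundarySolutions q₁) :
    Real.exp |k.im| / 8 ≤ ‖D.charFun (k ^ 2)‖ := by
  have hnk := natCast_le_norm_of_max_eq hk
  have hk₀ : 0 < ‖k‖ := (Nat.cast_pos.2 (Nat.pos_of_ne_zero hn)).trans_le hnk
  have hdiff : ‖D.charFun (k ^ 2) - Complex.cos k‖ ≤ 1 / 8 * Real.exp |k.im| := by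
    refine (D.norm_charFun_sub_cos_le hM hq (norm_pos_iff.1 hk₀) (by linarith)).trans ?_
    refine mul_le_mul_of_nonneg_right ?_ (Real.exp_pos _).le
    rw [div_le_iff₀ hk₀]
    linarith
  have hcos := exp_div_four_le_norm_complex_cos hn hk
  linarith [norm_le_norm_add_norm_sub (D.charFun (k ^ 2)) (Complex.cos k)]

lemma norm_φ_mul_weylSolution_le (hq₁ : ContinuousOn q₁ (Set.Icc 0 1))
    (hq₂ : ContinuousOn q₂ (Set.Icc 0 1)) (hM₁ : ∀ z ∈ Set.Icc (0 : ℝ) 1, |q₁ z| ≤ M₁)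
    (hM₂ : ∀ z ∈ Set.Icc (0 : ℝ) 1, |q₂ z| ≤ M₂) (hMn₁ : 16 * M₁ ≤ n) (hMn₂ : 16 * M₂ ≤ n)
    (D₁ : BoundarySolutions q₁) (D₂ : BoundarySolutions q₂) (hz : z ∈ Set.Icc (0 : ℝ) 1) :
    ‖D₁.φ (k ^ 2) z * D₂.weylSolution (k ^ 2) z‖ ≤ 32 / n := by
  have hnk := natCast_le_norm_of_max_eq hk
  have hn₀ : (0 : ℝ) < n := Nat.cast_pos.2 (Nat.pos_of_ne_zero hn)
  have hk₀ : k ≠ 0 := norm_pos_iff.1 (hn₀.trans_le hnk)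
  have hφ := D₁.norm_φ_le hM₁ hq₁ hk₀ (by linarith) hz
  have hs := D₂.norm_s_le hM₂ hq₂ hk₀ (by linarith) hz
  have hcharFun := exp_div_eight_le_norm_charFun hn hk hq₂ hM₂ hMn₂ D₂
  have hexp : Real.exp (|k.im| * |z - 1|) * Real.exp (|k.im| * |z|) = Real.exp |k.im| := by
    rw [← Real.exp_add, abs_of_nonneg hz.1, abs_of_nonpos (sub_nonpos.2 hz.2)]
    ring_nf
  rw [weylSolution, norm_mul, norm_div]
  calc _ ≤ 2 * Real.exp (|k.im| * |z - 1|) *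
        (2 / ‖k‖ * Real.exp (|k.im| * |z|) / (Real.exp |k.im| / 8)) := by gcongr
    _ = 32 / ‖k‖ := by
        rw [← hexp]
        field_simp
        norm_num
    _ ≤ 32 / n := by gcongr

end Squares

section SameZeros

variable (D₁ : BoundarySolutions q₁) (D₂ : BoundarySolutions q₂)
  (hzero : ∀ c, D₁.charFun c = 0 ↔ D₂.charFun c = 0)
  (hnorm : ∀ c, D₁.charFun c = 0 → D₁.normingConstant c = D₂.normingConstant c)
  (hq₁ : ContinuousOn q₁ (Set.Icc 0 1)) (hq₂ : ContinuousOn q₂ (Set.Icc 0 1))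
include hzero hnorm hq₁ hq₂

lemma tendsto_sub_mul_φ_mul_weylSolution_sub (hz : z ∈ Set.Icc (0 : ℝ) 1) (c : ℂ) :
    Tendsto (fun l => (l - c) * (D₁.φ l z * D₂.weylSolution l z - D₂.φ l z * D₁.weylSolution l z))
      (𝓝[≠] c) (𝓝 0) := by
  have hφ : ∀ {q} (D : BoundarySolutions q), Tendsto (fun l => D.φ l z) (𝓝[≠] c) (𝓝 (D.φ c z)) :=
    fun D => ((D.isSolutionFamily_φ.differentiable z hz).continuous.tendsto c).mono_left
      nhdsWithin_le_nhds
  have hsplit : ∀ {r₁ r₂ : ℂ},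
      Tendsto (fun l => (l - c) * D₁.weylSolution l z) (𝓝[≠] c) (𝓝 r₁) →
      Tendsto (fun l => (l - c) * D₂.weylSolution l z) (𝓝[≠] c) (𝓝 r₂) →
      D₁.φ c z * r₂ - D₂.φ c z * r₁ = 0 →
      Tendsto (fun l => (l - c) *
        (D₁.φ l z * D₂.weylSolution l z - D₂.φ l z * D₁.weylSolution l z)) (𝓝[≠] c) (𝓝 0) := by
    intro r₁ r₂ h₁ h₂ hr
    rw [← hr]
    exact (((hφ D₁).mul h₂).sub ((hφ D₂).mul h₁)).congr fun l => by ring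
  by_cases hc : D₁.charFun c = 0
  · refine hsplit (D₁.tendsto_sub_mul_weylSolution hq₁ hc hz)
      (D₂.tendsto_sub_mul_weylSolution hq₂ ((hzero c).1 hc) hz) ?_
    rw [hnorm c hc]
    ring
  · exact hsplit (D₁.tendsto_sub_mul_weylSolution_of_charFun_ne_zero hc hz)
      (D₂.tendsto_sub_mul_weylSolution_of_charFun_ne_zero (mt (hzero c).2 hc) hz) (by simp)

lemma exists_differentiable_eq_φ_mul_weylSolution_sub (hz : z ∈ Set.Icc (0 : ℝ) 1) :
    ∃ G : ℂ → ℂ, Differentiable ℂ G ∧ ∀ l, D₁.charFun l ≠ 0 →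
      G l = D₁.φ l z * D₂.weylSolution l z - D₂.φ l z * D₁.weylSolution l z := by
  have hφ₁ := fun c => (D₁.isSolutionFamily_φ.differentiable z hz).analyticAt c
  have hφ₂ := fun c => (D₂.isSolutionFamily_φ.differentiable z hz).analyticAt c
  obtain ⟨G, hG, hGF⟩ := exists_differentiable_of_meromorphic_of_tendsto_sub_mul
    (F := fun l => D₁.φ l z * D₂.weylSolution l z - D₂.φ l z * D₁.weylSolution l z)
    (fun c => ((hφ₁ c).meromorphicAt.mul (D₂.meromorphicAt_weylSolution c hz)).sub
      ((hφ₂ c).meromorphicAt.mul (D₁.meromorphicAt_weylSolution c hz)))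
    (tendsto_sub_mul_φ_mul_weylSolution_sub D₁ D₂ hzero hnorm hq₁ hq₂ hz)
  refine ⟨G, hG, fun l hl => hGF l ?_⟩
  exact ((hφ₁ l).mul (D₂.analyticAt_weylSolution (mt (hzero l).2 hl) hz)).sub
    ((hφ₂ l).mul (D₁.analyticAt_weylSolution hl hz))

theorem φ_mul_weylSolution_comm (hz : z ∈ Set.Icc (0 : ℝ) 1) (hl : D₁.charFun l ≠ 0) :
    D₁.φ l z * D₂.weylSolution l z = D₂.φ l z * D₁.weylSolution l z := by
  obtain ⟨M₁, hM₁⟩ := isCompact_Icc.exists_bound_of_continuousOn hq₁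
  obtain ⟨M₂, hM₂⟩ := isCompact_Icc.exists_bound_of_continuousOn hq₂
  obtain ⟨G, hG, hGF⟩ :=
    exists_differentiable_eq_φ_mul_weylSolution_sub D₁ D₂ hzero hnorm hq₁ hq₂ hz
  have hR : Tendsto (fun n : ℕ => n * π) atTop atTop :=
    tendsto_natCast_atTop_atTop.atTop_mul_const Real.pi_pos
  have hε : Tendsto (fun n : ℕ => (32 / n + 32 / n : ℝ)) atTop (𝓝 0) := by
    simpa using (tendsto_const_div_atTop_nhds_zero_nat (32 : ℝ)).add
      (tendsto_const_div_atTop_nhds_zero_nat 32)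
  have hG_zero : (fun k : ℂ => G (k ^ 2)) = 0 := by
    refine eq_zero_of_norm_le_on_squares (by fun_prop) hR hε ?_
    filter_upwards [eventually_ne_atTop 0,
      tendsto_natCast_atTop_atTop.eventually_ge_atTop (16 * M₁),
      tendsto_natCast_atTop_atTop.eventually_ge_atTop (16 * M₂)] with n hn hn₁ hn₂ k hk
    have hcharFun : 0 < ‖D₁.charFun (k ^ 2)‖ := (by positivity : 0 < Real.exp |k.im| / 8).trans_le
      (exp_div_eight_le_norm_charFun hn hk hq₁ hM₁ hn₁ D₁)
    rw [hGF _ (norm_pos_iff.1 hcharFun)]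
    exact norm_sub_le_of_le (norm_φ_mul_weylSolution_le hn hk hq₁ hq₂ hM₁ hM₂ hn₁ hn₂ D₁ D₂ hz)
      (norm_φ_mul_weylSolution_le hn hk hq₂ hq₁ hM₂ hM₁ hn₂ hn₁ D₂ D₁ hz)
  obtain ⟨k, rfl⟩ := IsAlgClosed.exists_pow_nat_eq l zero_lt_two
  rw [← sub_eq_zero, ← hGF _ hl]
  exact congrFun hG_zero k

end SameZeros

end BoundarySolutions

end WeylSolution

section Recovery

variable {q q₁ q₂ : ℝ → ℝ} {l : ℂ} {z : ℝ}

lemma eqOn_deriv_of_eqOn {E : Type*} [NormedAddCommGroup E] [NormedSpace ℝ E] {s : Set ℝ}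
    (hs : UniqueDiffOn ℝ s) {f g f' g' : ℝ → E} (hf : ∀ x ∈ s, HasDerivWithinAt f (f' x) s x)
    (hg : ∀ x ∈ s, HasDerivWithinAt g (g' x) s x) (hfg : Set.EqOn f g s) : Set.EqOn f' g' s :=
  fun x hx => (hs x hx).eq_deriv s (hf x hx) ((hg x hx).congr hfg (hfg hx))

lemma IsSolution.eqOn_potential {y y' u u' : ℝ → ℂ} (hy : IsSolution q₁ l y y')
    (hu : IsSolution q₂ l u u') (hyu : Set.EqOn y u (Set.Icc 0 1))
    (hne : ∀ z ∈ Set.Icc (0 : ℝ) 1, y z ≠ 0) : Set.EqOn q₁ q₂ (Set.Icc 0 1) := by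
  have hud : UniqueDiffOn ℝ (Set.Icc (0 : ℝ) 1) := uniqueDiffOn_Icc one_pos
  have hyu' : Set.EqOn y' u' (Set.Icc 0 1) := eqOn_deriv_of_eqOn hud
    (fun z hz => (hy z hz).1.hasDerivWithinAt) (fun z hz => (hu z hz).1.hasDerivWithinAt) hyu
  intro z hz
  have hcoeff : -(l + q₁ z) * y z = -(l + q₂ z) * u z := eqOn_deriv_of_eqOn hud
    (fun z hz => (hy z hz).2.hasDerivWithinAt) (fun z hz => (hu z hz).2.hasDerivWithinAt) hyu' hz
  rw [← hyu hz] at hcoeff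
  exact_mod_cast add_left_cancel (neg_injective (mul_right_cancel₀ (hne z hz) hcoeff))

namespace BoundarySolutions

lemma hasDerivAt_weylSolution_div_φ (D : BoundarySolutions q) (hl : D.charFun l ≠ 0)
    (hz : z ∈ Set.Icc (0 : ℝ) 1) (hφz : D.φ l z ≠ 0) :
    HasDerivAt (fun z => D.weylSolution l z / D.φ l z) (1 / D.φ l z ^ 2) z := by
  have hφ := D.isSolutionFamily_φ.isSolution l
  have hs := D.isSolutionFamily_s
  have hwronskian : D.φ l z * D.s' l z - D.φ' l z * D.s l z = D.charFun l := by
    rw [hφ.wronskian_eq (hs.isSolution l) (x₀ := 0) (by simp) hz, hs.initial, hs.initial_deriv,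
      mul_one, mul_zero, sub_zero, charFun]
  refine ((((hs.isSolution l z hz).1.div_const (D.charFun l)).div (hφ z hz).1 hφz)).congr_deriv ?_
  field_simp
  linear_combination hwronskian

lemma eqOn_φ_of_φ_mul_weylSolution_comm (D₁ : BoundarySolutions q₁) (D₂ : BoundarySolutions q₂)
    (hφ₁ : ∀ z ∈ Set.Icc (0 : ℝ) 1, D₁.φ l z ≠ 0) (hφ₂ : ∀ z ∈ Set.Icc (0 : ℝ) 1, D₂.φ l z ≠ 0)
    (hcomm : ∀ z ∈ Set.Icc (0 : ℝ) 1,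
      D₁.φ l z * D₂.weylSolution l z = D₂.φ l z * D₁.weylSolution l z) :
    Set.EqOn (D₁.φ l) (D₂.φ l) (Set.Icc 0 1) := by
  have hratio : Set.EqOn (fun z => D₁.weylSolution l z / D₁.φ l z)
      (fun z => D₂.weylSolution l z / D₂.φ l z) (Set.Icc 0 1) := fun z hz =>
    (div_eq_div_iff (hφ₁ z hz) (hφ₂ z hz)).2 (by linear_combination -hcomm z hz)
  have hderiv : Set.EqOn (fun z => 1 / D₁.φ l z ^ 2) (fun z => 1 / D₂.φ l z ^ 2) (Set.Icc 0 1) :=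
    eqOn_deriv_of_eqOn (uniqueDiffOn_Icc one_pos)
      (fun z hz => (D₁.hasDerivAt_weylSolution_div_φ (hφ₁ 0 (by simp)) hz
        (hφ₁ z hz)).hasDerivWithinAt)
      (fun z hz => (D₂.hasDerivAt_weylSolution_div_φ (hφ₂ 0 (by simp)) hz
        (hφ₂ z hz)).hasDerivWithinAt) hratio
  have hsq : Set.EqOn (D₁.φ l ^ 2) (D₂.φ l ^ 2) (Set.Icc 0 1) := fun z hz => by
    simpa only [one_div, inv_inj, Pi.pow_apply] using hderiv hz
  exact isPreconnected_Icc.eq_of_sq_eq (D₁.isSolutionFamily_φ.isSolution l).continuousOn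
    (D₂.isSolutionFamily_φ.isSolution l).continuousOn hsq (hφ₂ _) (y := 1) (by simp)
    (by rw [D₁.isSolutionFamily_φ.initial, D₂.isSolutionFamily_φ.initial])

theorem eqOn_potential (D₁ : BoundarySolutions q₁) (D₂ : BoundarySolutions q₂)
    (hzero : ∀ c, D₁.charFun c = 0 ↔ D₂.charFun c = 0)
    (hnorm : ∀ c, D₁.charFun c = 0 → D₁.normingConstant c = D₂.normingConstant c)
    (hq₁ : ContinuousOn q₁ (Set.Icc 0 1)) (hq₂ : ContinuousOn q₂ (Set.Icc 0 1)) :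
    Set.EqOn q₁ q₂ (Set.Icc 0 1) := by
  have hφ_ne : ∀ {q} (D : BoundarySolutions q), ∀ z ∈ Set.Icc (0 : ℝ) 1, D.φ Complex.I z ≠ 0 :=
    fun D z hz => (D.isSolutionFamily_φ.isSolution _).ne_zero_of_im_ne_zero (by simp)
      (by simp [D.isSolutionFamily_φ.initial]) (D.isSolutionFamily_φ.initial_deriv _) hz
  refine (D₁.isSolutionFamily_φ.isSolution Complex.I).eqOn_potential
    (D₂.isSolutionFamily_φ.isSolution Complex.I) ?_ (hφ_ne D₁)
  exact eqOn_φ_of_φ_mul_weylSolution_comm D₁ D₂ (hφ_ne D₁) (hφ_ne D₂) fun z hz =>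
    φ_mul_weylSolution_comm D₁ D₂ hzero hnorm hq₁ hq₂ hz (hφ_ne D₁ 0 (by simp))

end BoundarySolutions

end Recovery

section SpectralData

variable {q : ℝ → ℝ} {μ c : ℝ} {ψ : ℝ → ℝ}

/-- The pairs `(μ, ψ(1)²)` formed by an eigenvalue `μ` of the Dirichlet–Neumann problem for `q` and
a normalized eigenfunction `ψ` for it. -/
def dnSpectralData (q : ℝ → ℝ) : Set (ℝ × ℝ) :=
  {p | ∃ ψ, IsDNEigenfun q p.1 ψ ∧ DNNormalized ψ ∧ ψ 1 ^ 2 = p.2}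

namespace BoundarySolutions

lemma eqOn_of_isDNEigenfun (hq : ContinuousOn q (Set.Icc 0 1)) (D : BoundarySolutions q)
    (hψ : IsDNEigenfun q μ ψ) :
    Set.EqOn (fun z => (ψ z : ℂ)) (fun z => ψ 1 * D.φ μ z) (Set.Icc 0 1) := by
  obtain ⟨ψ', ψ'', hψ', hψ'', -, hode, -, hneumann, -⟩ := hψ
  have hφ := D.isSolutionFamily_φ
  have hsol : IsSolution q μ (fun z => (ψ z : ℂ)) (fun z => (ψ' z : ℂ)) := fun z hz => by
    refine ⟨(hψ' z hz).ofReal_comp, (hψ'' z hz).ofReal_comp.congr_deriv ?_⟩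
    rw [eq_neg_of_add_eq_zero_left (hode z hz)]
    push_cast
    ring
  exact hsol.eqOn_of_eq_at hq ((hφ.isSolution μ).const_mul (ψ 1)) (x₀ := 1) (by simp)
    (by simp [hφ.initial]) (by simp [hφ.initial_deriv, hneumann])

lemma isDNEigenfun_mul_re_φ (hq : ContinuousOn q (Set.Icc 0 1)) (D : BoundarySolutions q)
    (hμ : D.charFun μ = 0) {r : ℝ} (hr : r ≠ 0) :
    IsDNEigenfun q μ fun z => r * (D.φ μ z).re := by
  have hφ := D.isSolutionFamily_φ
  have hφ_cont := (hφ.isSolution μ).continuousOn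
  refine ⟨fun z => r * (D.φ' μ z).re, fun z => r * (-(μ + q z) * (D.φ μ z).re), fun z hz => ?_,
    fun z hz => ?_, by fun_prop, fun z _ => by ring, ?_, ?_, 1, by simp, ?_⟩
  · exact (Complex.reCLM.hasFDerivAt.comp_hasDerivAt z (hφ.isSolution μ z hz).1).const_mul r
  · refine ((Complex.reCLM.hasFDerivAt.comp_hasDerivAt z
      (hφ.isSolution μ z hz).2).const_mul r).congr_deriv ?_
    simp
  · simp [show D.φ μ 0 = 0 from hμ]
  · simp [hφ.initial_deriv]
  · simpa [hφ.initial] using hr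

lemma mem_dnSpectralData_iff (hq : ContinuousOn q (Set.Icc 0 1)) (D : BoundarySolutions q) :
    (μ, c) ∈ dnSpectralData q ↔ D.charFun μ = 0 ∧ c * D.normingConstant μ = 1 := by
  rw [D.normingConstant_ofReal hq]
  norm_cast
  constructor
  · rintro ⟨ψ, hψ, hψ_norm, rfl⟩
    have hψφ : ∀ z ∈ Set.Icc (0 : ℝ) 1, (ψ z : ℂ) = ψ 1 * D.φ μ z := D.eqOn_of_isDNEigenfun hq hψ
    have hint : ψ 1 ^ 2 * ∫ z in (0 : ℝ)..1, (D.φ μ z).re ^ 2 = 1 := by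
      rw [← intervalIntegral.integral_const_mul]
      refine (intervalIntegral.integral_congr fun z hz => ?_).trans hψ_norm
      rw [Set.uIcc_of_le zero_le_one] at hz
      have := congrArg Complex.re (hψφ z hz)
      rw [Complex.ofReal_re, Complex.re_ofReal_mul] at this
      simp only [this, mul_pow]
    have hψ₁ : (ψ 1 : ℂ) ≠ 0 := fun h => by simp [Complex.ofReal_eq_zero.1 h] at hint
    obtain ⟨-, -, -, -, -, -, hψ₀, -, -⟩ := hψ
    have h₀ := hψφ 0 (by simp)
    rw [hψ₀, Complex.ofReal_zero] at h₀
    exact ⟨(mul_eq_zero.1 h₀.symm).resolve_left hψ₁, hint⟩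
  · rintro ⟨hμ, hc⟩
    have hc_pos : 0 < c :=
      pos_of_mul_pos_left (one_pos.trans_eq hc.symm) (D.integral_re_φ_sq_pos μ).le
    refine ⟨_, D.isDNEigenfun_mul_re_φ hq hμ (Real.sqrt_pos.2 hc_pos).ne', ?_, ?_⟩
    · rw [DNNormalized]
      simp only [mul_pow, Real.sq_sqrt hc_pos.le, intervalIntegral.integral_const_mul, hc]
    · simp [D.isSolutionFamily_φ.initial, Real.sq_sqrt hc_pos.le]

lemma exists_mem_dnSpectralData (hq : ContinuousOn q (Set.Icc 0 1)) (D : BoundarySolutions q)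
    {l : ℂ} (hl : D.charFun l = 0) : ∃ μ c : ℝ, (μ : ℂ) = l ∧ (μ, c) ∈ dnSpectralData q := by
  obtain ⟨μ, rfl⟩ : ∃ μ : ℝ, (μ : ℂ) = l :=
    ⟨l.re, Complex.ext rfl (D.im_eq_zero_of_charFun_eq_zero hl).symm⟩
  refine ⟨μ, (∫ z in (0 : ℝ)..1, (D.φ μ z).re ^ 2)⁻¹, rfl,
    (D.mem_dnSpectralData_iff hq).2 ⟨hl, ?_⟩⟩
  rw [D.normingConstant_ofReal hq]
  exact_mod_cast inv_mul_cancel₀ (D.integral_re_φ_sq_pos μ).ne'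

end BoundarySolutions

lemma dnSpectralData_eq_range (hq : ContinuousOn q (Set.Icc 0 1)) {μ : ℕ → ℝ} {ψ : ℕ → ℝ → ℝ}
    (heig : ∀ j, IsDNEigenfun q (μ j) (ψ j) ∧ DNNormalized (ψ j))
    (hall : ∀ m, IsDNEigenvalue q m → ∃ j, μ j = m) :
    dnSpectralData q = Set.range fun j => (μ j, ψ j 1 ^ 2) := by
  obtain ⟨D⟩ := nonempty_boundarySolutions hq
  have hmem : ∀ j, (μ j, ψ j 1 ^ 2) ∈ dnSpectralData q := fun j =>
    ⟨ψ j, (heig j).1, (heig j).2, rfl⟩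
  refine Set.Subset.antisymm ?_ (Set.range_subset_iff.2 hmem)
  rintro ⟨m, c⟩ hmc
  obtain ⟨j, rfl⟩ := hall m (hmc.imp fun _ h => h.1)
  obtain ⟨hchar, hc⟩ := (D.mem_dnSpectralData_iff hq).1 hmc
  have hj := ((D.mem_dnSpectralData_iff hq).1 (hmem j)).2
  have heq := mul_right_cancel₀ (D.normingConstant_ne_zero hq hchar) (hj.trans hc.symm)
  exact ⟨j, Prod.ext rfl (by exact_mod_cast heq)⟩

end SpectralData

theorem spectral_data_uniqueness_general {q₁ q₂ : ℝ → ℝ} (hq₁ : ContinuousOn q₁ (Set.Icc 0 1))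
    (hq₂ : ContinuousOn q₂ (Set.Icc 0 1)) (hdata : dnSpectralData q₁ = dnSpectralData q₂) :
    Set.EqOn q₁ q₂ (Set.Icc 0 1) := by
  obtain ⟨D₁⟩ := nonempty_boundarySolutions hq₁
  obtain ⟨D₂⟩ := nonempty_boundarySolutions hq₂
  have hmem₁ : ∀ {μ c : ℝ}, (μ, c) ∈ dnSpectralData q₁ ↔ _ := D₁.mem_dnSpectralData_iff hq₁
  have hmem₂ : ∀ {μ c : ℝ}, (μ, c) ∈ dnSpectralData q₁ ↔ _ :=
    hdata ▸ D₂.mem_dnSpectralData_iff hq₂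
  refine D₁.eqOn_potential D₂ (fun l => ⟨fun hl => ?_, fun hl => ?_⟩) (fun l hl => ?_) hq₁ hq₂
  · obtain ⟨μ, c, rfl, hμc⟩ := D₁.exists_mem_dnSpectralData hq₁ hl
    exact (hmem₂.1 hμc).1
  · obtain ⟨μ, c, rfl, hμc⟩ := D₂.exists_mem_dnSpectralData hq₂ hl
    exact (hmem₁.1 (hdata ▸ hμc)).1
  · obtain ⟨μ, c, rfl, hμc⟩ := D₁.exists_mem_dnSpectralData hq₁ hl
    have hc₁ := (hmem₁.1 hμc).2
    have hc₂ := (hmem₂.1 hμc).2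
    exact mul_left_cancel₀ (left_ne_zero_of_mul_eq_one hc₁) (hc₁.trans hc₂.symm)

/-- the spectral data `{μⱼ, ψⱼ(1)²}` (eigenvalues together with the squared
endpoint values of the normalized eigenfunctions) determine the potential uniquely. -/
theorem spectral_data_uniqueness
    (q₁ q₂ : ℝ → ℝ)
    (hq₁ : ContinuousOn q₁ (Set.Icc (0:ℝ) 1))
    (hq₂ : ContinuousOn q₂ (Set.Icc (0:ℝ) 1))
    (μ₁ μ₂ : ℕ → ℝ) (ψ₁ ψ₂ : ℕ → ℝ → ℝ)
    (hmono₁ : StrictMono μ₁) (hmono₂ : StrictMono μ₂)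
    (heig₁ : ∀ j : ℕ, IsDNEigenfun q₁ (μ₁ j) (ψ₁ j) ∧ DNNormalized (ψ₁ j))
    (heig₂ : ∀ j : ℕ, IsDNEigenfun q₂ (μ₂ j) (ψ₂ j) ∧ DNNormalized (ψ₂ j))
    (hall₁ : ∀ μ : ℝ, IsDNEigenvalue q₁ μ → ∃ j : ℕ, μ₁ j = μ)
    (hall₂ : ∀ μ : ℝ, IsDNEigenvalue q₂ μ → ∃ j : ℕ, μ₂ j = μ)
    (heq : ∀ j : ℕ, μ₁ j = μ₂ j ∧ (ψ₁ j 1) ^ 2 = (ψ₂ j 1) ^ 2) :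
    ∀ z ∈ Set.Icc (0:ℝ) 1, q₁ z = q₂ z :=
  spectral_data_uniqueness_general hq₁ hq₂ <| by
    rw [dnSpectralData_eq_range hq₁ heig₁ hall₁, dnSpectralData_eq_range hq₂ heig₂ hall₂]
    exact congrArg Set.range (funext fun j => Prod.ext (heq j).1 (heq j).2)
end

section
/- Let μ, μ' : ℕ → ℝ be strictly increasing sequences and C > 0 a constant with |μⱼ − π²(j + 1/2)²| ≤ C and |μ'ⱼ − π²(j + 1/2)²| ≤ C for all j ∈ ℕ, and let c, c' : ℕ → ℝ be bounded sequences with cⱼ > 0 and c'ⱼ > 0 for all j. If ∑_{j=0}^∞ cⱼ/(λ² + μⱼ) = ∑_{j=0}^∞ c'ⱼ/(λ² + μ'ⱼ) for every real λ > 0 such that λ² + μⱼ ≠ 0 and λ² + μ'ⱼ ≠ 0 for all j, then μⱼ = μ'ⱼ and cⱼ = c'ⱼ for all j ∈ ℕ. -/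
open Real

/-!
The series `F(z) = ∑ⱼ cⱼ / (z + μⱼ)` is holomorphic off the half-line carrying its poles `-μⱼ`, so
by the identity theorem its values at large positive reals determine it on the slit plane.
Approaching `-x` vertically, `it · F(-x + it)` tends as `t → 0` to the total coefficient carried by
the indices with `μⱼ = x`: this limit recovers both the poles and the coefficients, and its
existence needs no discreteness of the poles.
-/

open Complex Filter Set Topology

lemma norm_div_le_mul_div_of_le_mul_norm {𝕜 : Type*} [NormedDivisionRing 𝕜] {a w : 𝕜} {K r : ℝ}
    (hr : 0 < r) (h : r ≤ K * ‖w‖) :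
    ‖a / w‖ ≤ K * (‖a‖ / r) := by
  have hw : 0 < ‖w‖ := (norm_nonneg w).lt_of_ne fun h0 ↦ by rw [← h0, mul_zero] at h; linarith
  rw [norm_div, ← mul_div_assoc, div_le_div_iff₀ hw hr]
  calc ‖a‖ * r ≤ ‖a‖ * (K * ‖w‖) := by gcongr
    _ = K * ‖a‖ * ‖w‖ := by ring

lemma one_add_norm_le_mul_norm_add {E : Type*} [SeminormedAddCommGroup E] {z₀ z x : E} {δ : ℝ}
    (hδ : 0 < δ) (hx : δ ≤ ‖z₀ + x‖) (hz : z ∈ Metric.ball z₀ (δ / 2)) :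
    1 + ‖x‖ ≤ 2 * ((1 + ‖z₀‖) / δ + 1) * ‖z + x‖ := by
  have hhalf : ‖z₀ + x‖ ≤ 2 * ‖z + x‖ := by
    have htri : ‖z₀ + x‖ ≤ ‖z + x‖ + dist z z₀ := by
      simpa [dist_eq_norm, norm_sub_rev] using norm_le_norm_add_norm_sub' (z₀ + x) (z + x)
    linarith [Metric.mem_ball.1 hz]
  have hnorm : ‖x‖ ≤ ‖z₀ + x‖ + ‖z₀‖ := by
    simpa using norm_sub_le (z₀ + x) z₀
  calc 1 + ‖x‖ ≤ (1 + ‖z₀‖) / δ * δ + ‖z₀ + x‖ := by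
        rw [div_mul_cancel₀ _ hδ.ne']
        linarith
    _ ≤ (1 + ‖z₀‖) / δ * ‖z₀ + x‖ + ‖z₀ + x‖ := by gcongr
    _ = ((1 + ‖z₀‖) / δ + 1) * ‖z₀ + x‖ := by ring
    _ ≤ ((1 + ‖z₀‖) / δ + 1) * (2 * ‖z + x‖) := by gcongr
    _ = 2 * ((1 + ‖z₀‖) / δ + 1) * ‖z + x‖ := by ring

section StieltjesSeries

variable {ι ι' : Type*} {μ : ι → ℝ} {c : ι → ℂ} {μ' : ι' → ℝ} {c' : ι' → ℂ}

/-- The Stieltjes transform of the atomic measure `∑ⱼ cⱼ δ_{μⱼ}`, a series of simple poles at the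
points `-μⱼ`; the paper's `G(λ)` is its value at `z = λ²`. -/
noncomputable def stieltjesSeries (μ : ι → ℝ) (c : ι → ℂ) (z : ℂ) : ℂ :=
  ∑' j, c j / (z + μ j)

/-- The mass of `∑ⱼ cⱼ δ_{μⱼ}` at `x`, which is the residue of `stieltjesSeries μ c` at `-x`. It is
defined as a sum, so that it makes sense also where the poles accumulate. -/
noncomputable def stieltjesResidue (μ : ι → ℝ) (c : ι → ℂ) (x : ℝ) : ℂ :=
  ∑' j, if μ j = x then c j else 0

lemma analyticAt_stieltjesSeries (hc : Summable fun j ↦ ‖c j‖ / (1 + |μ j|)) {z₀ : ℂ} {δ : ℝ}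
    (hδ : 0 < δ) (hz₀ : ∀ j, δ ≤ ‖z₀ + μ j‖) : AnalyticAt ℂ (stieltjesSeries μ c) z₀ := by
  have hbound (j : ι) (z : ℂ) (hz : z ∈ Metric.ball z₀ (δ / 2)) :
      1 + |μ j| ≤ 2 * ((1 + ‖z₀‖) / δ + 1) * ‖z + μ j‖ := by
    simpa only [norm_real, Real.norm_eq_abs] using one_add_norm_le_mul_norm_add hδ (hz₀ j) hz
  have hdiff : DifferentiableOn ℂ (stieltjesSeries μ c) (Metric.ball z₀ (δ / 2)) := by
    refine differentiableOn_tsum_of_summable_norm (hc.mul_left (2 * ((1 + ‖z₀‖) / δ + 1)))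
      (fun j z hz ↦ ?_) Metric.isOpen_ball
      fun j z hz ↦ norm_div_le_mul_div_of_le_mul_norm (by positivity) (hbound j z hz)
    have hne : z + μ j ≠ 0 := fun h0 ↦ by
      have := hbound j z hz
      rw [h0, norm_zero, mul_zero] at this
      linarith [abs_nonneg (μ j)]
    exact ((differentiableAt_const (c j)).div
      (differentiableAt_id.add_const (μ j : ℂ)) hne).differentiableWithinAt
  exact hdiff.analyticAt (Metric.ball_mem_nhds z₀ (half_pos hδ))

lemma exists_pos_forall_le_norm_add_of_mem_slitPlane {b : ℝ} {z : ℂ} (hz : z + b ∈ slitPlane) :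
    ∃ δ > 0, ∀ x : ℝ, b ≤ x → δ ≤ ‖z + x‖ := by
  rcases hz with hre | him
  · refine ⟨(z + b).re, hre, fun x hx ↦ ?_⟩
    calc (z + b).re ≤ (z + x).re := by simpa using hx
      _ ≤ ‖z + x‖ := re_le_norm _
  · refine ⟨|(z + b).im|, abs_pos.2 him, fun x _ ↦ ?_⟩
    calc |(z + b).im| = |(z + x).im| := by simp
      _ ≤ ‖z + x‖ := abs_im_le_norm _

lemma analyticOnNhd_stieltjesSeries (hc : Summable fun j ↦ ‖c j‖ / (1 + |μ j|)) {b : ℝ}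
    (hb : ∀ j, b ≤ μ j) :
    AnalyticOnNhd ℂ (stieltjesSeries μ c) {z | z + b ∈ slitPlane} := fun _ hz ↦
  let ⟨_, hδ, h⟩ := exists_pos_forall_le_norm_add_of_mem_slitPlane hz
  analyticAt_stieltjesSeries hc hδ fun j ↦ h _ (hb j)

lemma isPreconnected_setOf_add_mem_slitPlane (b : ℂ) : IsPreconnected {z | z + b ∈ slitPlane} :=
  (Homeomorph.addRight b).isPreconnected_preimage.2
    (starConvex_one_slitPlane.isPathConnected one_mem_slitPlane).isConnected.isPreconnected

lemma frequently_nhdsNE_ofReal {p : ℂ → Prop} {x : ℝ} (h : ∀ᶠ y : ℝ in 𝓝 x, p y) :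
    ∃ᶠ z in 𝓝[≠] (x : ℂ), p z :=
  have hmaps : MapsTo ((↑) : ℝ → ℂ) {x}ᶜ {(x : ℂ)}ᶜ := fun _ hy ↦ ofReal_injective.ne hy
  (continuous_ofReal.continuousWithinAt.tendsto_nhdsWithin hmaps).frequently
    (h.filter_mono nhdsWithin_le_nhds).frequently

lemma stieltjesSeries_eqOn_of_eventually_eq (hc : Summable fun j ↦ ‖c j‖ / (1 + |μ j|))
    (hc' : Summable fun j ↦ ‖c' j‖ / (1 + |μ' j|)) {b : ℝ} (hb : ∀ j, b ≤ μ j)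
    (hb' : ∀ j, b ≤ μ' j)
    (h : ∀ᶠ x : ℝ in atTop, stieltjesSeries μ c x = stieltjesSeries μ' c' x) :
    EqOn (stieltjesSeries μ c) (stieltjesSeries μ' c') {z | z + b ∈ slitPlane} := by
  obtain ⟨N, hN⟩ := eventually_atTop.1 h
  obtain ⟨x, hxN, hxb⟩ := ((eventually_gt_atTop N).and (eventually_gt_atTop (-b))).exists
  have hmem : (x : ℂ) + b ∈ slitPlane := by
    exact_mod_cast ofReal_mem_slitPlane.2 (show 0 < x + b by linarith)
  exact (analyticOnNhd_stieltjesSeries hc hb).eqOn_of_preconnected_of_frequently_eq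
    (analyticOnNhd_stieltjesSeries hc' hb') (isPreconnected_setOf_add_mem_slitPlane b) hmem
    (frequently_nhdsNE_ofReal ((lt_mem_nhds hxN).mono fun y hy ↦ hN y hy.le))

lemma one_add_abs_le_mul_norm_vertical {t : ℝ} (ht₀ : t ≠ 0) (ht : |t| ≤ 1) (x y : ℝ) :
    1 + |y| ≤ (2 + |x|) / |t| * ‖(-x + I * t + y : ℂ)‖ := by
  set w : ℂ := -x + I * t + y with hw
  have hre : |y - x| ≤ ‖w‖ := by
    simpa [hw, sub_eq_neg_add] using abs_re_le_norm w
  have him : |t| ≤ ‖w‖ := by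
    simpa [hw] using abs_im_le_norm w
  have hy : |y| ≤ |x| + |y - x| := by
    simpa using abs_add_le x (y - x)
  rw [div_mul_eq_mul_div, le_div_iff₀ (abs_pos.2 ht₀)]
  calc (1 + |y|) * |t| ≤ (1 + |x| + |y - x|) * |t| := by
        gcongr ?_ * _; linarith
    _ = (1 + |x|) * |t| + |y - x| * |t| := add_mul ..
    _ ≤ (1 + |x|) * ‖w‖ + ‖w‖ * 1 := by gcongr
    _ = (2 + |x|) * ‖w‖ := by ring

lemma tendsto_vertical_mul_div (a : ℂ) {x y : ℝ} (hxy : y ≠ x) :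
    Tendsto (fun t : ℝ ↦ I * t * (a / (-x + I * t + y))) (𝓝[≠] 0) (𝓝 0) := by
  have hne : (-x + I * (0 : ℝ) + y : ℂ) ≠ 0 := by
    simpa [neg_add_eq_sub, sub_eq_zero] using hxy
  have hcont : ContinuousAt (fun t : ℝ ↦ I * t * (a / (-x + I * t + y))) 0 :=
    ContinuousAt.mul (by fun_prop) (ContinuousAt.div (by fun_prop) (by fun_prop) hne)
  simpa using hcont.tendsto.mono_left nhdsWithin_le_nhds

lemma tendsto_vertical_stieltjesSeries (hc : Summable fun j ↦ ‖c j‖ / (1 + |μ j|)) (x : ℝ) :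
    Tendsto (fun t : ℝ ↦ I * t * stieltjesSeries μ c (-x + I * t)) (𝓝[≠] 0)
      (𝓝 (stieltjesResidue μ c x)) := by
  simp_rw [stieltjesSeries, ← tsum_mul_left]
  refine tendsto_tsum_of_dominated_convergence (hc.mul_left (2 + |x|)) (fun j ↦ ?_) ?_
  · split_ifs with hj
    · refine tendsto_const_nhds.congr' ?_
      filter_upwards [self_mem_nhdsWithin] with t ht
      have ht₀ : (t : ℂ) ≠ 0 := ofReal_ne_zero.2 ht
      rw [hj, neg_add_cancel_comm, mul_div_cancel₀ _ (mul_ne_zero I_ne_zero ht₀)]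
    · exact tendsto_vertical_mul_div (c j) hj
  · have hsmall : ∀ᶠ t : ℝ in 𝓝[≠] 0, |t| ≤ 1 :=
      nhdsWithin_le_nhds (eventually_abs_sub_lt 0 one_pos |>.mono fun t ht ↦ by simpa using ht.le)
    filter_upwards [self_mem_nhdsWithin, hsmall] with t ht₀ ht j
    have hterm := norm_div_le_mul_div_of_le_mul_norm (a := c j) (by positivity)
      (one_add_abs_le_mul_norm_vertical ht₀ ht x (μ j))
    calc ‖I * t * (c j / (-x + I * t + μ j))‖ = |t| * ‖c j / (-x + I * t + μ j)‖ := by simp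
      _ ≤ |t| * ((2 + |x|) / |t| * (‖c j‖ / (1 + |μ j|))) := by gcongr
      _ = (2 + |x|) * (‖c j‖ / (1 + |μ j|)) := by
        rw [← mul_assoc, mul_div_cancel₀ _ (abs_ne_zero.2 ht₀)]

theorem stieltjesResidue_eq_of_eventually_eq (hc : Summable fun j ↦ ‖c j‖ / (1 + |μ j|))
    (hc' : Summable fun j ↦ ‖c' j‖ / (1 + |μ' j|)) (hμ : BddBelow (range μ))
    (hμ' : BddBelow (range μ'))
    (h : ∀ᶠ x : ℝ in atTop, stieltjesSeries μ c x = stieltjesSeries μ' c' x) :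
    stieltjesResidue μ c = stieltjesResidue μ' c' := by
  obtain ⟨b, hb⟩ := hμ.union hμ'
  have heq := stieltjesSeries_eqOn_of_eventually_eq hc hc' (fun j ↦ hb (.inl ⟨j, rfl⟩))
    (fun j ↦ hb (.inr ⟨j, rfl⟩)) h
  ext x
  refine tendsto_nhds_unique (tendsto_vertical_stieltjesSeries hc x)
    ((tendsto_vertical_stieltjesSeries hc' x).congr' ?_)
  filter_upwards [self_mem_nhdsWithin] with t ht
  rw [heq (show -x + I * t + b ∈ slitPlane from .inr (by simpa using ht))]

lemma stieltjesResidue_apply (hμ : Function.Injective μ) (c : ι → ℂ) (k : ι) :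
    stieltjesResidue μ c (μ k) = c k := by
  rw [stieltjesResidue, tsum_eq_single k fun j hj ↦ if_neg (hμ.ne hj), if_pos rfl]

lemma support_stieltjesResidue (hμ : Function.Injective μ) (hc : ∀ j, c j ≠ 0) :
    Function.support (stieltjesResidue μ c) = range μ := by
  refine Subset.antisymm (fun x hx ↦ ?_) ?_
  · by_contra hxμ
    exact hx (by simp [stieltjesResidue, show ∀ j, μ j ≠ x from fun j hj ↦ hxμ ⟨j, hj⟩])
  · rintro _ ⟨k, rfl⟩
    simpa [stieltjesResidue_apply hμ] using hc k

end StieltjesSeries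

lemma bddBelow_range_of_monotone {α β : Type*} [Preorder α] [OrderBot α] [Preorder β] {f : α → β}
    (hf : Monotone f) : BddBelow (range f) :=
  ⟨f ⊥, forall_mem_range.2 fun _ ↦ hf bot_le⟩

lemma summable_norm_div_one_add_abs_of_quadratic {E : Type*} [SeminormedAddCommGroup E]
    {μ : ℕ → ℝ} {c : ℕ → E} {κ s C : ℝ} (hκ : 0 < κ) (hs : 0 ≤ s)
    (hμ : ∀ j : ℕ, |μ j - κ * (j + s) ^ 2| ≤ C) (hc : ∃ M, ∀ j, ‖c j‖ ≤ M) :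
    Summable fun j ↦ ‖c j‖ / (1 + |μ j|) := by
  obtain ⟨M, hM⟩ := hc
  have hC : 0 ≤ C := (abs_nonneg _).trans (hμ 0)
  have hM₀ : 0 ≤ M := (norm_nonneg _).trans (hM 0)
  have hgrowth (j : ℕ) : κ * j ^ 2 ≤ (1 + C) * (1 + |μ j|) :=
    calc κ * j ^ 2 ≤ κ * (j + s) ^ 2 := by gcongr; linarith
      _ ≤ C + |μ j| := by linarith [neg_abs_le (μ j - κ * (j + s) ^ 2), hμ j, le_abs_self (μ j)]
      _ ≤ (1 + C) * (1 + |μ j|) := by nlinarith [abs_nonneg (μ j)]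
  have hsq : Summable fun j : ℕ ↦ M * (1 + C) / κ * (1 / (j : ℝ) ^ 2) :=
    (summable_one_div_nat_pow.2 one_lt_two).mul_left _
  refine hsq.of_norm_bounded_eventually_nat ?_
  filter_upwards [eventually_gt_atTop 0] with j hj
  rw [Real.norm_of_nonneg (by positivity), div_mul_div_comm, mul_one,
    div_le_div_iff₀ (by positivity) (by positivity)]
  calc ‖c j‖ * (κ * j ^ 2) ≤ M * ((1 + C) * (1 + |μ j|)) :=
        mul_le_mul (hM j) (hgrowth j) (by positivity) hM₀
    _ = M * (1 + C) * (1 + |μ j|) := by ring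

lemma eventually_stieltjesSeries_eq_of_forall_sq {ι : Type*} {μ μ' c c' : ι → ℝ}
    (hμ : BddBelow (range μ)) (hμ' : BddBelow (range μ'))
    (h : ∀ l : ℝ, 0 < l → (∀ j, l ^ 2 + μ j ≠ 0 ∧ l ^ 2 + μ' j ≠ 0) →
      ∑' j, c j / (l ^ 2 + μ j) = ∑' j, c' j / (l ^ 2 + μ' j)) :
    ∀ᶠ x : ℝ in atTop, stieltjesSeries μ (fun j ↦ c j) x = stieltjesSeries μ' (fun j ↦ c' j) x := by
  obtain ⟨b, hb⟩ := hμ.union hμ'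
  filter_upwards [eventually_gt_atTop 0, eventually_gt_atTop (-b)] with x hx hxb
  have hne (j : ι) : x + μ j ≠ 0 ∧ x + μ' j ≠ 0 := by
    have hj : b ≤ μ j := hb (.inl ⟨j, rfl⟩)
    have hj' : b ≤ μ' j := hb (.inr ⟨j, rfl⟩)
    constructor <;> linarith
  have hreal := h (√x) (sqrt_pos.2 hx)
  simp only [sq_sqrt hx.le] at hreal
  simp only [stieltjesSeries]
  exact_mod_cast congrArg ofReal (hreal hne)

theorem poles_and_residues_unique_general {μ μ' : ℕ → ℝ} {c c' : ℕ → ℂ} (hμ : StrictMono μ)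
    (hμ' : StrictMono μ') (hsum : Summable fun j ↦ ‖c j‖ / (1 + |μ j|))
    (hsum' : Summable fun j ↦ ‖c' j‖ / (1 + |μ' j|)) (hc : ∀ j, c j ≠ 0) (hc' : ∀ j, c' j ≠ 0)
    (h : ∀ᶠ x : ℝ in atTop, stieltjesSeries μ c x = stieltjesSeries μ' c' x) :
    ∀ j, μ j = μ' j ∧ c j = c' j := by
  have hres := stieltjesResidue_eq_of_eventually_eq hsum hsum'
    (bddBelow_range_of_monotone hμ.monotone) (bddBelow_range_of_monotone hμ'.monotone) h
  obtain rfl : μ = μ' := (hμ.range_inj hμ').1 <| by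
    rw [← support_stieltjesResidue hμ.injective hc, hres,
      support_stieltjesResidue hμ'.injective hc']
  exact fun j ↦ ⟨rfl, by
    rw [← stieltjesResidue_apply hμ.injective c, hres, stieltjesResidue_apply hμ.injective]⟩

/-- the function `G(λ) = ∑ⱼ cⱼ/(λ² + μⱼ)`, known for all `λ > 0`,
uniquely determines the (strictly increasing) poles data `μⱼ` and the positive
bounded coefficients `cⱼ`. -/
theorem poles_and_residues_unique
    (μ μ' : ℕ → ℝ) (C : ℝ) (hC : 0 < C)
    (hmono : StrictMono μ) (hmono' : StrictMono μ')
    (hasymp : ∀ j : ℕ, |μ j - π ^ 2 * ((j : ℝ) + 1 / 2) ^ 2| ≤ C)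
    (hasymp' : ∀ j : ℕ, |μ' j - π ^ 2 * ((j : ℝ) + 1 / 2) ^ 2| ≤ C)
    (c c' : ℕ → ℝ)
    (hbdd : ∃ M : ℝ, ∀ j : ℕ, |c j| ≤ M)
    (hbdd' : ∃ M : ℝ, ∀ j : ℕ, |c' j| ≤ M)
    (hpos : ∀ j : ℕ, 0 < c j) (hpos' : ∀ j : ℕ, 0 < c' j)
    (hdata : ∀ l : ℝ, 0 < l →
      (∀ j : ℕ, l ^ 2 + μ j ≠ 0 ∧ l ^ 2 + μ' j ≠ 0) →
      ∑' j : ℕ, c j / (l ^ 2 + μ j) = ∑' j : ℕ, c' j / (l ^ 2 + μ' j)) :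
    ∀ j : ℕ, μ j = μ' j ∧ c j = c' j := by
  have hsum {ν d : ℕ → ℝ} (hν : ∀ j : ℕ, |ν j - π ^ 2 * ((j : ℝ) + 1 / 2) ^ 2| ≤ C)
      (hd : ∃ M : ℝ, ∀ j : ℕ, |d j| ≤ M) : Summable fun j ↦ ‖(d j : ℂ)‖ / (1 + |ν j|) :=
    summable_norm_div_one_add_abs_of_quadratic (by positivity) (by norm_num) hν (by simpa using hd)
  exact_mod_cast poles_and_residues_unique_general hmono hmono' (hsum hasymp hbdd)
    (hsum hasymp' hbdd') (fun j ↦ ofReal_ne_zero.2 (hpos j).ne')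
    (fun j ↦ ofReal_ne_zero.2 (hpos' j).ne') <|
    eventually_stieltjesSeries_eq_of_forall_sq (bddBelow_range_of_monotone hmono.monotone)
      (bddBelow_range_of_monotone hmono'.monotone) hdata
end

section
/- Let μ : ℕ → ℝ be a sequence of pairwise distinct reals and C > 0 a constant with |μⱼ − π²(j + 1/2)²| ≤ C for all j ∈ ℕ, and let c : ℕ → ℂ be a bounded sequence. Fix k ∈ ℕ with μₖ > 0 and set λₖ := √μₖ. Then (λ − iλₖ)·∑_{j=0}^∞ cⱼ/(λ² + μⱼ) converges to cₖ/(2iλₖ) as λ → iλₖ along points λ ∈ ℂ with λ² + μⱼ ≠ 0 for all j. -/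
open Real Complex Filter

open Asymptotics Bornology Topology

/-! In the variable `z = l ^ 2` the sum is a partial-fraction series `∑ c j / (z - a j)` with poles
`a j = -μ j`. Near `a k` its terms with `j ≠ k` are dominated by a multiple of
`‖c j / (a j - a k)‖`, so after multiplication by `z - a k` only the `k`-th term survives in the
limit; the quadratic growth of `μ` isolates `a k` and makes the dominating series converge.
If `p ^ 2 = a k`, then `l ^ 2 - a k = (l - p) * (l + p)`, so returning to the variable `l` divides
the residue `c k` by `2 * p`. -/

section PartialFractions

variable {ι 𝕜 : Type*} [NormedField 𝕜] {a c : ι → 𝕜} {k : ι} {r : ℝ}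

theorem norm_sub_mul_div_sub_le {w z b x : 𝕜} (hr : 0 < r) (hb : r ≤ ‖b - w‖)
    (hz : ‖z - w‖ ≤ r / 2) : ‖(z - w) * (x / (z - b))‖ ≤ r * ‖x / (b - w)‖ := by
  have hzb : ‖b - w‖ / 2 ≤ ‖z - b‖ := by
    have := norm_sub_le_norm_sub_add_norm_sub b z w
    rw [norm_sub_rev b z] at this
    linarith
  have hbw : 0 < ‖b - w‖ := hr.trans_le hb
  calc ‖(z - w) * (x / (z - b))‖ = ‖z - w‖ * (‖x‖ / ‖z - b‖) := by rw [norm_mul, norm_div]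
    _ ≤ r / 2 * (‖x‖ / (‖b - w‖ / 2)) := by gcongr
    _ = r * ‖x / (b - w)‖ := by rw [norm_div]; ring

theorem tendsto_sub_mul_div_sub [DecidableEq ι] (ha : ∀ j ≠ k, a j ≠ a k) (j : ι) :
    Tendsto (fun z ↦ (z - a k) * (c j / (z - a j))) (𝓝[≠] a k)
      (𝓝 (Pi.single (M := fun _ ↦ 𝕜) k (c k) j)) := by
  obtain rfl | hj := eq_or_ne j k
  · rw [Pi.single_eq_same]
    refine tendsto_const_nhds.congr' ?_
    filter_upwards [self_mem_nhdsWithin] with z hz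
    exact (mul_div_cancel₀ _ (sub_ne_zero.mpr hz)).symm
  · have hcont : ContinuousAt (fun z ↦ (z - a k) * (c j / (z - a j))) (a k) := by
      have := sub_ne_zero.mpr (ha j hj).symm
      fun_prop (disch := assumption)
    simpa [hj] using hcont.tendsto.mono_left nhdsWithin_le_nhds

/-- The `k`-th term of `hsum` is `0` because `x / 0 = 0`. -/
theorem tendsto_sub_mul_tsum_div_sub [CompleteSpace 𝕜] (hr : 0 < r)
    (hsep : ∀ j ≠ k, r ≤ ‖a j - a k‖) (hsum : Summable fun j ↦ ‖c j / (a j - a k)‖) :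
    Tendsto (fun z ↦ (z - a k) * ∑' j, c j / (z - a j)) (𝓝[≠] a k) (𝓝 (c k)) := by
  classical
  have hne : ∀ j ≠ k, a j ≠ a k := fun j hj ↦
    sub_ne_zero.mp <| norm_pos_iff.mp <| hr.trans_le (hsep j hj)
  have hbound : Summable fun j ↦ Pi.single (M := fun _ ↦ ℝ) k ‖c k‖ j +
      r * ‖c j / (a j - a k)‖ :=
    (hasSum_pi_single k ‖c k‖).summable.add (hsum.mul_left r)
  have hball : ∀ᶠ z in 𝓝[≠] a k, ‖z - a k‖ ≤ r / 2 := by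
    filter_upwards [nhdsWithin_le_nhds (Metric.closedBall_mem_nhds (a k) (half_pos hr))] with z hz
    exact mem_closedBall_iff_norm.mp hz
  have hdom : ∀ᶠ z in 𝓝[≠] a k, ∀ j, ‖(z - a k) * (c j / (z - a j))‖ ≤
      Pi.single (M := fun _ ↦ ℝ) k ‖c k‖ j + r * ‖c j / (a j - a k)‖ := by
    filter_upwards [hball, self_mem_nhdsWithin] with z hz hzk j
    obtain rfl | hj := eq_or_ne j k
    · simp [mul_div_cancel₀ _ (sub_ne_zero.mpr hzk)]
    · simpa [hj] using norm_sub_mul_div_sub_le hr (hsep j hj) hz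
  simpa only [tsum_mul_left, tsum_pi_single] using
    tendsto_tsum_of_dominated_convergence hbound (tendsto_sub_mul_div_sub hne) hdom

theorem residue_at_pole_general [CompleteSpace 𝕜] {μ : ι → 𝕜} {p : 𝕜} (hp : 2 * p ≠ 0)
    (hpk : p ^ 2 = -μ k) (hr : 0 < r) (hsep : ∀ j ≠ k, r ≤ ‖μ j - μ k‖)
    (hsum : Summable fun j ↦ ‖c j / (μ j - μ k)‖) :
    Tendsto (fun l ↦ (l - p) * ∑' j, c j / (l ^ 2 + μ j)) (𝓝[≠] p) (𝓝 (c k / (2 * p))) := by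
  have hcont : Tendsto (fun l ↦ l + p) (𝓝[≠] p) (𝓝 (2 * p)) := by
    rw [two_mul]
    exact (tendsto_id.add_const p).mono_left nhdsWithin_le_nhds
  have hfactor : ∀ l, l ^ 2 - -μ k = (l - p) * (l + p) := fun l ↦ by rw [← hpk]; ring
  have hsq : Tendsto (fun l ↦ l ^ 2) (𝓝[≠] p) (𝓝[≠] (-μ k)) := by
    refine tendsto_nhdsWithin_iff.mpr ⟨?_, ?_⟩
    · exact hpk ▸ ((continuous_pow 2).tendsto p).mono_left nhdsWithin_le_nhds
    · filter_upwards [self_mem_nhdsWithin, hcont.eventually_ne hp] with l hl hlp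
      exact sub_ne_zero.mp <| hfactor l ▸ mul_ne_zero (sub_ne_zero.mpr hl) hlp
  have hres : Tendsto (fun z ↦ (z - -μ k) * ∑' j, c j / (z - -μ j)) (𝓝[≠] (-μ k)) (𝓝 (c k)) := by
    refine tendsto_sub_mul_tsum_div_sub (a := fun j ↦ -μ j) hr ?_ ?_
    · simpa only [neg_sub_neg, norm_sub_rev (μ k)] using hsep
    · simpa only [neg_sub_neg, norm_div, norm_sub_rev (μ k)] using hsum
  refine ((hres.comp hsq).div hcont hp).congr' ?_
  filter_upwards [hcont.eventually_ne hp] with l hlp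
  calc (l ^ 2 - -μ k) * (∑' j, c j / (l ^ 2 - -μ j)) / (l + p)
      = (l - p) * ∑' j, c j / (l ^ 2 - -μ j) := by
        rw [hfactor, mul_right_comm, mul_div_cancel_right₀ _ hlp]
    _ = (l - p) * ∑' j, c j / (l ^ 2 + μ j) := by simp only [sub_neg_eq_add]

end PartialFractions

section Growth

theorem exists_pos_forall_le_norm {ι E : Type*} [NormedAddCommGroup E] {f : ι → E} {s : Set ι}
    (hf : Tendsto f cofinite (cobounded E)) (hs : ∀ j ∈ s, f j ≠ 0) :
    ∃ r > 0, ∀ j ∈ s, r ≤ ‖f j‖ := by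
  obtain rfl | hne := s.eq_empty_or_nonempty
  · exact ⟨1, one_pos, by simp⟩
  · obtain ⟨i, hi, hmin⟩ :=
      Tendsto.exists_within_forall_le hne (tendsto_norm_cobounded_atTop.comp hf)
    exact ⟨‖f i‖, norm_pos_iff.mpr (hs i hi), hmin⟩

theorem one_isLittleO_natCast_pow {n : ℕ} (hn : n ≠ 0) :
    (fun _ ↦ 1 : ℕ → ℝ) =o[atTop] fun j : ℕ ↦ (j : ℝ) ^ n :=
  (isLittleO_one_left_iff ℝ).mpr <| tendsto_norm_atTop_atTop.comp <|
    (tendsto_pow_atTop hn).comp tendsto_natCast_atTop_atTop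

theorem natCast_pow_isBigO_of_sub_isBigO_one {𝕜 : Type*} [RCLike 𝕜] {u : ℕ → 𝕜} {b s : 𝕜} {n : ℕ}
    (hn : n ≠ 0) (hb : b ≠ 0)
    (hu : (fun j : ℕ ↦ u j - b * ((j : 𝕜) + s) ^ n) =O[atTop] (fun _ ↦ 1 : ℕ → ℝ)) :
    (fun j : ℕ ↦ (j : ℝ) ^ n) =O[atTop] u := by
  have hnorm : ∀ m : ℕ, (fun j : ℕ ↦ (j : ℝ) ^ m) =O[atTop] fun j : ℕ ↦ (j : 𝕜) ^ m :=
    fun m ↦ .of_bound' <| .of_forall fun j ↦ by simp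
  have hshift : (fun j : ℕ ↦ (j : 𝕜) + s) ~[atTop] fun j : ℕ ↦ (j : 𝕜) := by
    refine IsEquivalent.refl.add_isLittleO ?_
    simpa using (isBigO_const_one ℝ s atTop).trans_isLittleO
      ((one_isLittleO_natCast_pow one_ne_zero).trans_isBigO (hnorm 1))
  have hlead : (fun j : ℕ ↦ b * ((j : 𝕜) + s) ^ n) ~[atTop] fun j : ℕ ↦ b * (j : 𝕜) ^ n :=
    IsEquivalent.refl.mul (hshift.pow n)
  have hpow : (fun j : ℕ ↦ (j : ℝ) ^ n) =O[atTop] fun j : ℕ ↦ b * (j : 𝕜) ^ n :=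
    (isBigO_const_mul_right_iff hb).mpr (hnorm n)
  have hequiv : u ~[atTop] fun j : ℕ ↦ b * (j : 𝕜) ^ n := by
    have hrest := hu.trans_isLittleO ((one_isLittleO_natCast_pow hn).trans_isBigO hpow)
    exact (hlead.add_isLittleO hrest).congr_left <| .of_forall fun j ↦ add_sub_cancel _ _
  exact hpow.trans hequiv.isBigO_symm

theorem tendsto_cobounded_of_natCast_pow_isBigO {E : Type*} [SeminormedAddCommGroup E] {d : ℕ → E}
    {n : ℕ} (hn : n ≠ 0) (hd : (fun j : ℕ ↦ (j : ℝ) ^ n) =O[atTop] d) :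
    Tendsto d atTop (cobounded E) :=
  tendsto_norm_atTop_iff_cobounded.mp <| (isLittleO_one_left_iff ℝ).mp <|
    (one_isLittleO_natCast_pow hn).trans_isBigO hd

theorem summable_norm_div_of_natCast_pow_isBigO {𝕜 : Type*} [NormedDivisionRing 𝕜]
    {c d : ℕ → 𝕜} {n : ℕ} (hn : 1 < n) (hc : c =O[atTop] (fun _ ↦ 1 : ℕ → ℝ))
    (hd : (fun j : ℕ ↦ (j : ℝ) ^ n) =O[atTop] d) :
    Summable fun j ↦ ‖c j / d j‖ := by
  have hinv : (fun j ↦ (d j)⁻¹) =O[atTop] fun j : ℕ ↦ ((j : ℝ) ^ n)⁻¹ := by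
    refine hd.inv_rev ?_
    filter_upwards [eventually_ne_atTop 0] with j hj hj0
    exact absurd hj0 (by positivity)
  refine summable_of_isBigO_nat (Real.summable_nat_pow_inv.mpr hn) ?_
  simpa [div_eq_mul_inv] using (hc.mul hinv).norm_left

theorem natCast_pow_isBigO_ofReal_sub {u : ℕ → ℝ} {b s C : ℝ} {n : ℕ} (hn : n ≠ 0) (hb : b ≠ 0)
    (hu : ∀ j : ℕ, |u j - b * ((j : ℝ) + s) ^ n| ≤ C) (x : ℂ) :
    (fun j : ℕ ↦ (j : ℝ) ^ n) =O[atTop] fun j ↦ (u j : ℂ) - x := by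
  have hbounded : (fun j : ℕ ↦ ((u j - b * ((j : ℝ) + s) ^ n : ℝ) : ℂ))
      =O[atTop] (fun _ ↦ 1 : ℕ → ℝ) :=
    .of_bound C <| .of_forall fun j ↦ by
      simpa only [norm_real, Real.norm_eq_abs, norm_one, mul_one] using hu j
  refine natCast_pow_isBigO_of_sub_isBigO_one (b := (b : ℂ)) (s := (s : ℂ)) hn
    (ofReal_ne_zero.mpr hb) ?_
  refine (hbounded.sub (isBigO_const_one ℝ x atTop)).congr_left fun j ↦ ?_
  push_cast
  ring

end Growth

/-- residue computation: with `λₖ = √μₖ`, the function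
`(λ − iλₖ)·G(λ)` tends to `cₖ/(2iλₖ)` as `λ → iλₖ` through points away from
the poles of `G`. -/
theorem residue_at_pole
    (μ : ℕ → ℝ) (hinj : Function.Injective μ)
    (C : ℝ) (hC : 0 < C)
    (hasymp : ∀ j : ℕ, |μ j - π ^ 2 * ((j : ℝ) + 1 / 2) ^ 2| ≤ C)
    (c : ℕ → ℂ) (hbdd : ∃ M : ℝ, ∀ j : ℕ, ‖c j‖ ≤ M)
    (k : ℕ) (hk : 0 < μ k) :
    Tendsto
      (fun l : ℂ => (l - Complex.I * (Real.sqrt (μ k) : ℂ)) *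
        ∑' j : ℕ, c j / (l ^ 2 + (μ j : ℂ)))
      (nhdsWithin (Complex.I * (Real.sqrt (μ k) : ℂ))
        {l : ℂ | ∀ j : ℕ, l ^ 2 + (μ j : ℂ) ≠ 0})
      (nhds (c k / (2 * Complex.I * (Real.sqrt (μ k) : ℂ)))) := by
  obtain ⟨M, hM⟩ := hbdd
  have hc : c =O[atTop] (fun _ ↦ 1 : ℕ → ℝ) := .of_bound M <| .of_forall <| by simpa using hM
  have hgrowth := natCast_pow_isBigO_ofReal_sub two_ne_zero (pow_ne_zero 2 pi_ne_zero) hasymp (μ k)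
  have htend := tendsto_cobounded_of_natCast_pow_isBigO two_ne_zero hgrowth
  obtain ⟨r, hr, hsep⟩ := exists_pos_forall_le_norm (s := {k}ᶜ) (Nat.cofinite_eq_atTop ▸ htend)
    fun j hj ↦ sub_ne_zero.mpr <| ofReal_injective.ne <| hinj.ne hj
  have hpole : 2 * (I * (√(μ k) : ℂ)) ≠ 0 := by simp [(Real.sqrt_pos.mpr hk).ne']
  have hpole_sq : (I * (√(μ k) : ℂ)) ^ 2 = -μ k := by
    rw [mul_pow, I_sq, ← ofReal_pow, Real.sq_sqrt hk.le, neg_one_mul]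
  rw [mul_assoc]
  refine (residue_at_pole_general (μ := fun j ↦ (μ j : ℂ)) hpole hpole_sq hr hsep
    (summable_norm_div_of_natCast_pow_isBigO one_lt_two hc hgrowth)).mono_left
    (nhdsWithin_mono _ ?_)
  rintro l hl rfl
  exact hl k (by rw [hpole_sq, neg_add_cancel])
end
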